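/- arXiv:2306.05825 — 2 statements merged into one kernel-verified Lean document; each statement's English description precedes it below -/
import Mathlib

section
/- (Interior regularity) Let V ∈ L^p(Ω) with 2 ≤ p < ∞ and V ≥ 0 a.e., let f ∈ L²(Ω), and let u ∈ H₀(Ω) be the weak solution of −(y^{2α₁}∂ₓ²u + x^{2α₂}∂_y²u) + V u = f. Then u belongs to H²_loc(Ω) (i.e. u ∈ H²(Ω') for every open Ω' with closure contained in Ω), and moreover for every such Ω' there exists α ∈ (0,1) such that u is Hölder continuous with exponent α on the closure of Ω'. -/
open MeasureTheory Set Filter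

noncomputable section

/-- The open unit square `Ω = (0,1) × (0,1)` in `ℝ²`. -/
def Omega : Set (ℝ × ℝ) := Ioo (0:ℝ) 1 ×ˢ Ioo (0:ℝ) 1

/-- Test functions on a set `s`: smooth with compact support contained in `s`. -/
def IsTestOn (s : Set (ℝ × ℝ)) (φ : ℝ × ℝ → ℝ) : Prop :=
  ContDiff ℝ (⊤ : ℕ∞) φ ∧ HasCompactSupport φ ∧ tsupport φ ⊆ s

/-- Classical partial derivative in the `x`-direction. -/
def pdx (φ : ℝ × ℝ → ℝ) (p : ℝ × ℝ) : ℝ := fderiv ℝ φ p (1, 0)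

/-- Classical partial derivative in the `y`-direction. -/
def pdy (φ : ℝ × ℝ → ℝ) (p : ℝ × ℝ) : ℝ := fderiv ℝ φ p (0, 1)

/-- `g` is a weak `x`-partial derivative of `u` on `s`. -/
def HasWeakDerivXOn (s : Set (ℝ × ℝ)) (u g : ℝ × ℝ → ℝ) : Prop :=
  LocallyIntegrableOn u s volume ∧ LocallyIntegrableOn g s volume ∧
  ∀ φ : ℝ × ℝ → ℝ, IsTestOn s φ →
    ∫ p in s, u p * pdx φ p = - ∫ p in s, g p * φ p

/-- `g` is a weak `y`-partial derivative of `u` on `s`. -/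
def HasWeakDerivYOn (s : Set (ℝ × ℝ)) (u g : ℝ × ℝ → ℝ) : Prop :=
  LocallyIntegrableOn u s volume ∧ LocallyIntegrableOn g s volume ∧
  ∀ φ : ℝ × ℝ → ℝ, IsTestOn s φ →
    ∫ p in s, u p * pdy φ p = - ∫ p in s, g p * φ p

/-- Test functions on `Ω`. -/
def IsTest (φ : ℝ × ℝ → ℝ) : Prop := IsTestOn Omega φ

/-- Membership in the weighted Sobolev space `𝓗¹(Ω)`, with weak derivatives `gx, gy`:
`u ∈ L²(Ω)`, `gx = ∂ₓu`, `gy = ∂_y u` weakly, and `y^α₁ gx, x^α₂ gy ∈ L²(Ω)`. -/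
structure MemH1 (α₁ α₂ : ℝ) (u gx gy : ℝ × ℝ → ℝ) : Prop where
  memL2 : MemLp u 2 (volume.restrict Omega)
  weakX : HasWeakDerivXOn Omega u gx
  weakY : HasWeakDerivYOn Omega u gy
  wgx : MemLp (fun p => p.2 ^ α₁ * gx p) 2 (volume.restrict Omega)
  wgy : MemLp (fun p => p.1 ^ α₂ * gy p) 2 (volume.restrict Omega)

/-- The `𝓗¹(Ω)` norm of `u` (with weak derivatives `gx, gy`). -/
def H1Norm (α₁ α₂ : ℝ) (u gx gy : ℝ × ℝ → ℝ) : ℝ :=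
  Real.sqrt ((∫ p in Omega, (u p) ^ 2) +
    (∫ p in Omega, (p.2 ^ α₁ * gx p) ^ 2) +
    (∫ p in Omega, (p.1 ^ α₂ * gy p) ^ 2))

/-- Membership in `𝓗₀¹(Ω)`: member of `𝓗¹(Ω)` approximable in the `𝓗¹` norm by
test functions. -/
def MemH10 (α₁ α₂ : ℝ) (u gx gy : ℝ × ℝ → ℝ) : Prop :=
  MemH1 α₁ α₂ u gx gy ∧
  ∀ ε : ℝ, 0 < ε → ∃ φ : ℝ × ℝ → ℝ, IsTest φ ∧
    H1Norm α₁ α₂ (fun p => u p - φ p) (fun p => gx p - pdx φ p)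
      (fun p => gy p - pdy φ p) < ε

/-- Membership in `H₀(Ω) = {u ∈ 𝓗₀¹(Ω) : ∫_Ω V u² < ∞}`. -/
def MemH0 (α₁ α₂ : ℝ) (V u gx gy : ℝ × ℝ → ℝ) : Prop :=
  MemH10 α₁ α₂ u gx gy ∧
  IntegrableOn (fun p => V p * (u p) ^ 2) Omega volume

/-- The bilinear form `a(u,v)` associated with the sub-elliptic operator with potential `V`. -/
def aForm (α₁ α₂ : ℝ) (V u gx gy v hx hy : ℝ × ℝ → ℝ) : ℝ :=
  ∫ p in Omega, ((p.2 ^ α₁ * gx p) * (p.2 ^ α₁ * hx p) +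
    (p.1 ^ α₂ * gy p) * (p.1 ^ α₂ * hy p) + V p * u p * v p)

/-- The bilinear form `a₁(u,v)` (no potential). -/
def a1Form (α₁ α₂ : ℝ) (u gx gy v hx hy : ℝ × ℝ → ℝ) : ℝ :=
  ∫ p in Omega, ((p.2 ^ α₁ * gx p) * (p.2 ^ α₁ * hx p) +
    (p.1 ^ α₂ * gy p) * (p.1 ^ α₂ * hy p))

/-- Membership in `S_p = {V ∈ L^p(Ω) : V ≥ 0 a.e., ‖V‖_{L^p(Ω)} ≤ M}`. -/
def MemSp (ppow M : ℝ) (V : ℝ × ℝ → ℝ) : Prop :=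
  MemLp V (ENNReal.ofReal ppow) (volume.restrict Omega) ∧
  (∀ᵐ p ∂(volume.restrict Omega), 0 ≤ V p) ∧
  eLpNorm V (ENNReal.ofReal ppow) (volume.restrict Omega) ≤ ENNReal.ofReal M

/-- `u` (with weak derivatives `gx, gy`) is an eigenfunction of the sub-elliptic operator
with potential `V` for the eigenvalue `lam`. -/
def IsEigenfun (α₁ α₂ : ℝ) (V : ℝ × ℝ → ℝ) (lam : ℝ) (u gx gy : ℝ × ℝ → ℝ) : Prop :=
  MemH0 α₁ α₂ V u gx gy ∧
  ∀ v hx hy : ℝ × ℝ → ℝ, MemH0 α₁ α₂ V v hx hy →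
    aForm α₁ α₂ V u gx gy v hx hy = lam * ∫ p in Omega, u p * v p

/-- The first eigenvalue `λ₁(V) = inf { a(u,u) : u ∈ H₀(Ω), ‖u‖_{L²} = 1 }`. -/
def lam1 (α₁ α₂ : ℝ) (V : ℝ × ℝ → ℝ) : ℝ :=
  sInf { r | ∃ u gx gy : ℝ × ℝ → ℝ, MemH0 α₁ α₂ V u gx gy ∧
    (∫ p in Omega, (u p) ^ 2) = 1 ∧ r = aForm α₁ α₂ V u gx gy u gx gy }

/-- `sup { a(u,u) : u ∈ span(φ), ‖u‖_{L²(Ω)} = 1 }` for a finite family `φ` with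
weak derivatives `φx, φy`. -/
def rayleighSup (α₁ α₂ : ℝ) (V : ℝ × ℝ → ℝ) {k : ℕ} (φ φx φy : Fin k → ℝ × ℝ → ℝ) : ℝ :=
  sSup { s | ∃ c : Fin k → ℝ,
    (∫ p in Omega, (∑ i, c i * φ i p) ^ 2) = 1 ∧
    s = aForm α₁ α₂ V (fun p => ∑ i, c i * φ i p) (fun p => ∑ i, c i * φx i p)
      (fun p => ∑ i, c i * φy i p) (fun p => ∑ i, c i * φ i p)
      (fun p => ∑ i, c i * φx i p) (fun p => ∑ i, c i * φy i p) }

/-- The set of values `sup { a(u,u) : u ∈ E, ‖u‖ = 1 }` over `k`-dimensional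
subspaces `E` of `H₀(Ω)` (represented by `L²(Ω)`-linearly independent families of
`k` elements of `H₀(Ω)`). -/
def minmaxSet (α₁ α₂ : ℝ) (V : ℝ × ℝ → ℝ) (k : ℕ) : Set ℝ :=
  { r | ∃ φ φx φy : Fin k → ℝ × ℝ → ℝ,
      (∀ i, MemH0 α₁ α₂ V (φ i) (φx i) (φy i)) ∧
      (∀ c : Fin k → ℝ, (∀ᵐ p ∂(volume.restrict Omega), ∑ i, c i * φ i p = 0) → c = 0) ∧
      r = rayleighSup α₁ α₂ V φ φx φy }

/-- The `k`-th eigenvalue via the min-max principle. -/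
def lamk (α₁ α₂ : ℝ) (V : ℝ × ℝ → ℝ) (k : ℕ) : ℝ := sInf (minmaxSet α₁ α₂ V k)

/-- Membership in `U = (𝓗₀¹(Ω) ∩ L^{2q}(Ω)) \ {0}`. -/
def MemU (α₁ α₂ qe : ℝ) (u gx gy : ℝ × ℝ → ℝ) : Prop :=
  MemH10 α₁ α₂ u gx gy ∧
  MemLp u (ENNReal.ofReal (2 * qe)) (volume.restrict Omega) ∧
  ¬ (∀ᵐ p ∂(volume.restrict Omega), u p = 0)

/-- The functional `J(u) = (a₁(u,u) + M ‖u‖_{L^{2q}(Ω)}²) / ‖u‖_{L²(Ω)}²`. -/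
def Jfun (α₁ α₂ M qe : ℝ) (u gx gy : ℝ × ℝ → ℝ) : ℝ :=
  (a1Form α₁ α₂ u gx gy u gx gy +
    M * (∫ p in Omega, |u p| ^ (2 * qe)) ^ (1 / qe)) / (∫ p in Omega, (u p) ^ 2)

/-!
Multiplying `u` by a cut-off supported in `Ω` moves it away from the degenerate boundary, so that
the truncated function solves a uniformly elliptic equation with smooth coefficients on the whole
plane.  The only term on the right-hand side which is not obviously square integrable is `V u`, and
here the sign of `V` enters: testing with odd bounded truncations of `u` yields a local bound for
`u` in `L^∞` (Stampacchia), whence `V u ∈ L²_loc`.  Difference quotients then put the second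
derivatives in `L²_loc`.  Finally the mixed derivative `∂ₓ∂_y u ∈ L²`, integrated over coordinate
rectangles, gives Hölder continuity with exponent `1/2`.
-/

open scoped Topology ENNReal NNReal InnerProductSpace

section SquareIntegrable

variable {α : Type*} {m : MeasurableSpace α} {μ : Measure α} {f g : α → ℝ}

lemma inner_toLp_toLp (hf : MemLp f 2 μ) (hg : MemLp g 2 μ) :
    ⟪hf.toLp f, hg.toLp g⟫_ℝ = ∫ x, f x * g x ∂μ := by
  rw [L2.inner_def]
  refine integral_congr_ae ?_
  filter_upwards [hf.coeFn_toLp, hg.coeFn_toLp] with x hfx hgx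
  rw [hfx, hgx, real_inner_comm]
  rfl

lemma norm_toLp_eq_lpNorm (hf : MemLp f 2 μ) : ‖hf.toLp f‖ = lpNorm f 2 μ := by
  rw [Lp.norm_toLp, toReal_eLpNorm hf.1]

lemma sq_lpNorm_two (hf : MemLp f 2 μ) : lpNorm f 2 μ ^ 2 = ∫ x, f x ^ 2 ∂μ := by
  rw [← norm_toLp_eq_lpNorm hf, ← real_inner_self_eq_norm_sq, inner_toLp_toLp]
  simp only [sq]

lemma abs_integral_mul_le_lpNorm (hf : MemLp f 2 μ) (hg : MemLp g 2 μ) :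
    |∫ x, f x * g x ∂μ| ≤ lpNorm f 2 μ * lpNorm g 2 μ := by
  rw [← inner_toLp_toLp hf hg, ← norm_toLp_eq_lpNorm hf, ← norm_toLp_eq_lpNorm hg]
  exact abs_real_inner_le_norm _ _

lemma integral_sub_mul {a b : α → ℝ} (ha : MemLp a 2 μ) (hb : MemLp b 2 μ) (hf : MemLp f 2 μ) :
    ∫ x, (a x - b x) * f x ∂μ = ∫ x, a x * f x ∂μ - ∫ x, b x * f x ∂μ := by
  simp only [sub_mul]
  exact integral_sub (ha.integrable_mul hf) (hb.integrable_mul hf)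

lemma integral_add_mul {a b : α → ℝ} (ha : MemLp a 2 μ) (hb : MemLp b 2 μ) (hf : MemLp f 2 μ) :
    ∫ x, (a x + b x) * f x ∂μ = ∫ x, a x * f x ∂μ + ∫ x, b x * f x ∂μ := by
  simp only [add_mul]
  exact integral_add (ha.integrable_mul hf) (hb.integrable_mul hf)

lemma sq_integral_mul_le_integral_mul_sq {b : α → ℝ} (hb : Integrable b μ) (hb0 : ∀ x, 0 ≤ b x)
    (hf : AEStronglyMeasurable f μ) (hbf : Integrable (fun x => b x * f x ^ 2) μ) :
    (∫ x, b x * f x ∂μ) ^ 2 ≤ (∫ x, b x ∂μ) * ∫ x, b x * f x ^ 2 ∂μ := by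
  have hsqrt : AEStronglyMeasurable (fun x => √(b x)) μ :=
    Real.continuous_sqrt.comp_aestronglyMeasurable hb.1
  have hs_sq : ∀ x, √(b x) ^ 2 = b x := fun x => Real.sq_sqrt (hb0 x)
  have hs : MemLp (fun x => √(b x)) 2 μ :=
    (memLp_two_iff_integrable_sq hsqrt).2 (by simpa only [hs_sq] using hb)
  have hsf : MemLp (fun x => √(b x) * f x) 2 μ :=
    (memLp_two_iff_integrable_sq (hsqrt.mul hf)).2
      (by simpa only [Pi.mul_apply, mul_pow, hs_sq] using hbf)
  have hprod : ∀ x, √(b x) * (√(b x) * f x) = b x * f x := fun x => by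
    rw [← mul_assoc, ← sq, hs_sq]
  calc (∫ x, b x * f x ∂μ) ^ 2 = |∫ x, √(b x) * (√(b x) * f x) ∂μ| ^ 2 := by
        simp only [hprod, sq_abs]
    _ ≤ (lpNorm (fun x => √(b x)) 2 μ * lpNorm (fun x => √(b x) * f x) 2 μ) ^ 2 := by
        gcongr
        exact abs_integral_mul_le_lpNorm hs hsf
    _ = _ := by
        rw [mul_pow, sq_lpNorm_two hs, sq_lpNorm_two hsf]
        simp only [mul_pow, hs_sq]

/-- Convergence `s n → f` in `L²(μ)`, all functions involved being square integrable. -/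
structure TendstoL2 (μ : Measure α) (s : ℕ → α → ℝ) (f : α → ℝ) : Prop where
  memLp : ∀ n, MemLp (s n) 2 μ
  memLp_limit : MemLp f 2 μ
  tendsto_eLpNorm : Tendsto (fun n => eLpNorm (s n - f) 2 μ) atTop (𝓝 0)

lemma tendstoL2_const (hf : MemLp f 2 μ) : TendstoL2 μ (fun _ => f) f :=
  ⟨fun _ => hf, hf, by simp⟩

lemma TendstoL2.tendsto_toLp {s : ℕ → α → ℝ} (h : TendstoL2 μ s f) :
    Tendsto (fun n => (h.memLp n).toLp (s n)) atTop (𝓝 (h.memLp_limit.toLp f)) :=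
  (Lp.tendsto_Lp_iff_tendsto_eLpNorm'' s h.memLp f h.memLp_limit).2 h.tendsto_eLpNorm

lemma TendstoL2.integral_mul {s t : ℕ → α → ℝ} (hs : TendstoL2 μ s f) (ht : TendstoL2 μ t g) :
    Tendsto (fun n => ∫ x, s n x * t n x ∂μ) atTop (𝓝 (∫ x, f x * g x ∂μ)) := by
  have := Filter.Tendsto.inner (𝕜 := ℝ) hs.tendsto_toLp ht.tendsto_toLp
  simpa only [inner_toLp_toLp] using this

lemma TendstoL2.integral_mul_const {s : ℕ → α → ℝ} (hs : TendstoL2 μ s f) (hg : MemLp g 2 μ) :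
    Tendsto (fun n => ∫ x, s n x * g x ∂μ) atTop (𝓝 (∫ x, f x * g x ∂μ)) :=
  hs.integral_mul (tendstoL2_const hg)

lemma TendstoL2.comp_lipschitz {s : ℕ → α → ℝ} {θ : ℝ → ℝ} {K : ℝ≥0} (h : TendstoL2 μ s f)
    (hθ : LipschitzWith K θ) (hθ0 : θ 0 = 0) :
    TendstoL2 μ (fun n x => θ (s n x)) (fun x => θ (f x)) := by
  refine ⟨fun n => hθ.comp_memLp hθ0 (h.memLp n), hθ.comp_memLp hθ0 h.memLp_limit, ?_⟩
  have hlim : Tendsto (fun n => K • eLpNorm (s n - f) 2 μ) atTop (𝓝 0) := by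
    simpa only [ENNReal.smul_def, smul_eq_mul, mul_zero] using
      ENNReal.Tendsto.const_mul h.tendsto_eLpNorm (.inr ENNReal.coe_ne_top)
  refine tendsto_of_tendsto_of_tendsto_of_le_of_le tendsto_const_nhds hlim
    (fun _ => zero_le) fun n => ?_
  refine eLpNorm_le_nnreal_smul_eLpNorm_of_ae_le_mul (ae_of_all _ fun x => ?_) 2
  simpa only [nndist_eq_nnnorm, Pi.sub_apply] using hθ.nndist_le (s n x) (f x)

lemma tendstoL2_of_integral_sq {s : ℕ → α → ℝ} (hs : ∀ n, MemLp (s n) 2 μ) (hf : MemLp f 2 μ)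
    (h : Tendsto (fun n => ∫ x, (s n x - f x) ^ 2 ∂μ) atTop (𝓝 0)) : TendstoL2 μ s f := by
  have hnorm : ∀ n, eLpNorm (s n - f) 2 μ = ENNReal.ofReal √(∫ x, (s n x - f x) ^ 2 ∂μ) := by
    intro n
    have hsq : lpNorm (s n - f) 2 μ ^ 2 = ∫ x, (s n x - f x) ^ 2 ∂μ :=
      sq_lpNorm_two ((hs n).sub hf)
    rw [← hsq, Real.sqrt_sq lpNorm_nonneg, ofReal_lpNorm ((hs n).sub hf)]
  refine ⟨hs, hf, ?_⟩
  simpa only [hnorm, Real.sqrt_zero, ENNReal.ofReal_zero] using ENNReal.tendsto_ofReal h.sqrt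

lemma tendstoL2_of_dominated {s : ℕ → α → ℝ} {b : α → ℝ} (hb : MemLp b 2 μ)
    (hs : ∀ n, AEStronglyMeasurable (s n) μ) (hsb : ∀ n x, |s n x| ≤ b x)
    (hlim : ∀ᵐ x ∂μ, Tendsto (fun n => s n x) atTop (𝓝 (f x))) : TendstoL2 μ s f := by
  have hs2 : ∀ n, MemLp (s n) 2 μ := fun n => MemLp.mono' hb (hs n) (ae_of_all _ (hsb n))
  have hfb : ∀ᵐ x ∂μ, |f x| ≤ b x := by
    filter_upwards [hlim] with x hx
    exact le_of_tendsto' hx.abs fun n => hsb n x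
  have hf : MemLp f 2 μ := MemLp.mono' hb (aestronglyMeasurable_of_tendsto_ae _ hs hlim) hfb
  refine tendstoL2_of_integral_sq hs2 hf ?_
  rw [← integral_zero α ℝ (μ := μ)]
  refine tendsto_integral_of_dominated_convergence (fun x => (2 * b x) ^ 2)
    (fun n => ((hs n).sub hf.1).pow 2) (hb.const_mul 2).integrable_sq (fun n => ?_) ?_
  · filter_upwards [hfb] with x hx
    rw [Real.norm_eq_abs, abs_of_nonneg (sq_nonneg _), ← sq_abs]
    gcongr
    linarith [abs_sub (s n x) (f x), hsb n x]
  · filter_upwards [hlim] with x hx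
    simpa using (hx.sub_const (f x)).pow 2

-- By Fatou `‖f + f‖ ≤ liminf ‖s n + f‖`, so the parallelogram identity forces `‖s n - f‖ → 0`.
lemma tendstoL2_of_tendsto_ae_of_eLpNorm_le {s : ℕ → α → ℝ}
    (hs : ∀ n, AEStronglyMeasurable (s n) μ) (hf : MemLp f 2 μ)
    (hle : ∀ n, eLpNorm (s n) 2 μ ≤ eLpNorm f 2 μ)
    (hlim : ∀ᵐ x ∂μ, Tendsto (fun n => s n x) atTop (𝓝 (f x))) : TendstoL2 μ s f := by
  have hs2 : ∀ n, MemLp (s n) 2 μ := fun n => ⟨hs n, (hle n).trans_lt hf.2⟩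
  set x : Lp ℝ 2 μ := hf.toLp f with hx
  set y : ℕ → Lp ℝ 2 μ := fun n => (hs2 n).toLp (s n) with hy
  have hnorm_le : ∀ n, ‖y n‖ ≤ ‖x‖ := fun n => by
    simpa only [hx, hy, Lp.norm_toLp] using ENNReal.toReal_mono hf.2.ne (hle n)
  have hsum : Tendsto (fun n => eLpNorm (s n + f) 2 μ) atTop (𝓝 (eLpNorm (f + f) 2 μ)) := by
    refine tendsto_of_le_liminf_of_limsup_le
      (Lp.eLpNorm_lim_le_liminf_eLpNorm (fun n => (hs n).add hf.1) _ ?_)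
      (limsup_le_of_le (h := Eventually.of_forall fun n => ?_))
    · filter_upwards [hlim] with x hx using hx.add_const _
    · calc eLpNorm (s n + f) 2 μ ≤ eLpNorm (s n) 2 μ + eLpNorm f 2 μ :=
            eLpNorm_add_le (hs n) hf.1 (by norm_num)
        _ ≤ 2 * eLpNorm f 2 μ := by rw [two_mul]; gcongr; exact hle n
        _ = eLpNorm (f + f) 2 μ := by
            rw [← two_smul ℝ f, eLpNorm_const_smul, Real.enorm_eq_ofReal two_pos.le,
              ENNReal.ofReal_ofNat]
  have hsum' : Tendsto (fun n => ‖y n + x‖) atTop (𝓝 ‖x + x‖) := by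
    have := (ENNReal.tendsto_toReal (hf.add hf).2.ne).comp hsum
    simpa only [hx, hy, ← MemLp.toLp_add, Lp.norm_toLp, Function.comp_def] using this
  have hsq : Tendsto (fun n => ‖y n - x‖ ^ 2) atTop (𝓝 0) := by
    have hup : Tendsto (fun n => ‖x + x‖ ^ 2 - ‖y n + x‖ ^ 2) atTop (𝓝 0) := by
      rw [← sub_self (‖x + x‖ ^ 2)]
      exact (hsum'.pow 2).const_sub _
    refine squeeze_zero (fun n => sq_nonneg _) (fun n => ?_) hup
    have hpar := parallelogram_law_with_norm ℝ (y n) x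
    have hxx : ‖x + x‖ = 2 * ‖x‖ := by rw [← two_smul ℝ x, norm_smul]; simp
    nlinarith [hnorm_le n, norm_nonneg (y n)]
  refine ⟨hs2, hf, (Lp.tendsto_Lp_iff_tendsto_eLpNorm'' s hs2 f hf).1 ?_⟩
  rw [tendsto_iff_norm_sub_tendsto_zero]
  simpa using hsq.sqrt

end SquareIntegrable

section WeakLimit

variable {H : Type*} [NormedAddCommGroup H] [InnerProductSpace ℝ H] [CompleteSpace H]

lemma exists_weak_limit_hyperfilter {y : ℕ → H} {M : ℝ} (hy : ∀ n, ‖y n‖ ≤ M) :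
    ∃ y₀ : H, ∀ z, Tendsto (fun n => ⟪y n, z⟫_ℝ) (hyperfilter ℕ) (𝓝 ⟪y₀, z⟫_ℝ) := by
  let T : ℕ → WeakDual ℝ H := fun n => StrongDual.toWeakDual (InnerProductSpace.toDual ℝ H (y n))
  have hT : ∀ n, T n ∈ WeakDual.toStrongDual ⁻¹' Metric.closedBall (0 : StrongDual ℝ H) M := by
    intro n
    rw [mem_preimage, mem_closedBall_zero_iff]
    exact ((InnerProductSpace.toDual ℝ H).norm_map (y n)).le.trans (hy n)
  obtain ⟨τ, -, hτ⟩ := (WeakDual.isCompact_closedBall (0 : StrongDual ℝ H) M).ultrafilter_le_nhds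
    ((hyperfilter ℕ).map T) (le_principal_iff.2 (mem_map.2 (univ_mem' hT)))
  refine ⟨(InnerProductSpace.toDual ℝ H).symm (WeakDual.toStrongDual τ), fun z => ?_⟩
  rw [InnerProductSpace.toDual_symm_apply]
  exact ((WeakDual.eval_continuous z).tendsto τ).comp hτ

lemma exists_memLp_forall_integral_mul_eq {α : Type*} {m : MeasurableSpace α} {μ : Measure α}
    {s : ℕ → α → ℝ} {M : ℝ} (hs : ∀ n, MemLp (s n) 2 μ) (hM : ∀ n, lpNorm (s n) 2 μ ≤ M) :
    ∃ f, MemLp f 2 μ ∧ ∀ g, MemLp g 2 μ → ∀ l,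
      Tendsto (fun n => ∫ x, s n x * g x ∂μ) atTop (𝓝 l) → ∫ x, f x * g x ∂μ = l := by
  obtain ⟨y₀, hy₀⟩ := exists_weak_limit_hyperfilter (y := fun n => (hs n).toLp (s n))
    (fun n => (norm_toLp_eq_lpNorm (hs n)).trans_le (hM n))
  refine ⟨y₀, Lp.memLp y₀, fun g hg l hl => ?_⟩
  have hlim := hy₀ (hg.toLp g)
  rw [← Lp.toLp_coeFn y₀ (Lp.memLp y₀)] at hlim
  simp only [inner_toLp_toLp] at hlim
  exact tendsto_nhds_unique hlim (hl.mono_left (Nat.hyperfilter_le_atTop))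

end WeakLimit

lemma exists_holderWith_of_ae_tendsto {X : Type*} [MetricSpace X] {m : MeasurableSpace X}
    {μ : Measure X} {C r : ℝ≥0} {s : ℕ → X → ℝ} {w : X → ℝ} (hs : ∀ n, HolderWith C r (s n))
    (hlim : ∀ᵐ x ∂μ, Tendsto (fun n => s n x) atTop (𝓝 (w x))) :
    ∃ W, HolderWith C r W ∧ W =ᵐ[μ] w := by
  by_cases hex : ∃ x₀, Tendsto (fun n => s n x₀) atTop (𝓝 (w x₀))
  swap
  · refine ⟨fun _ => 0, HolderWith.const, ?_⟩
    filter_upwards [hlim] with x hx using absurd ⟨x, hx⟩ hex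
  obtain ⟨x₀, hx₀⟩ := hex
  obtain ⟨M, hM⟩ := (Metric.isBounded_range_of_tendsto _ hx₀).subset_closedBall 0
  have hbound : ∀ x n, s n x ∈ Metric.closedBall 0 (M + C * dist x x₀ ^ (r : ℝ)) := fun x n =>
    calc dist (s n x) 0 ≤ dist (s n x) (s n x₀) + dist (s n x₀) 0 := dist_triangle _ _ _
      _ ≤ C * dist x x₀ ^ (r : ℝ) + M := add_le_add ((hs n).dist_le x x₀) (hM ⟨n, rfl⟩)
      _ = _ := add_comm _ _
  have hcluster : ∀ x, ∃ l, Tendsto (fun n => s n x) (hyperfilter ℕ) (𝓝 l) := fun x => by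
    obtain ⟨l, -, hl⟩ := (isCompact_closedBall _ _).ultrafilter_le_nhds
      ((hyperfilter ℕ).map fun n => s n x) (le_principal_iff.2 (mem_map.2 (univ_mem' (hbound x))))
    exact ⟨l, hl⟩
  choose W hW using hcluster
  refine ⟨W, fun x y => le_of_tendsto' ((hW x).edist (hW y)) fun n => hs n x y, ?_⟩
  filter_upwards [hlim] with x hx
  exact tendsto_nhds_unique (hW x) (hx.mono_left Nat.hyperfilter_le_atTop)

lemma le_geometric_of_superlinear_recursion {y : ℕ → ℝ} {D d : ℝ} (hy : ∀ n, 0 ≤ y n) (hD : 0 ≤ D)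
    (hd : 0 < d) (hDd : 8 * D * √(y 0) ≤ d)
    (h : ∀ n, d * (1 / 2) ^ (n + 1) * y (n + 1) ≤ D * (y n * √(y n))) (n : ℕ) :
    y n ≤ y 0 * ((1 / 2) ^ n) ^ 2 := by
  induction n with
  | zero => simp
  | succ n ih =>
    set q : ℝ := (1 / 2) ^ n with hq
    have : 0 < q := by positivity
    have hy0 := hy 0
    have hsqrt : √(y n) ≤ √(y 0) * q := by
      rw [Real.sqrt_le_left (by positivity), mul_pow, Real.sq_sqrt (hy 0)]
      exact ih
    have hstep : d * (q / 2) * y (n + 1) ≤ d * (q / 2) * (y 0 * (q / 2) ^ 2) :=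
      calc d * (q / 2) * y (n + 1) = d * (1 / 2) ^ (n + 1) * y (n + 1) := by rw [hq]; ring
        _ ≤ D * (y n * √(y n)) := h n
        _ ≤ D * (y 0 * q ^ 2 * (√(y 0) * q)) := by gcongr
        _ = (8 * D * √(y 0)) * (q / 2) * (y 0 * (q / 2) ^ 2) := by ring
        _ ≤ d * (q / 2) * (y 0 * (q / 2) ^ 2) := by gcongr
    calc y (n + 1) ≤ y 0 * (q / 2) ^ 2 := le_of_mul_le_mul_left hstep (by positivity)
      _ = y 0 * ((1 / 2) ^ (n + 1)) ^ 2 := by rw [hq]; ring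

lemma exists_eq_zero_of_stampacchia {m : ℝ → ℝ} {k₀ D : ℝ} (hm : ∀ k, 0 ≤ m k)
    (hmono : AntitoneOn m (Ici k₀)) (hD : 0 ≤ D)
    (h : ∀ k l, k₀ ≤ k → k < l → (l - k) * m l ≤ D * (m k * √(m k))) :
    ∃ k ≥ k₀, m k = 0 := by
  set d : ℝ := 8 * D * √(m k₀) + 1 with hd
  have hdpos : 0 < d := by positivity
  let k : ℕ → ℝ := fun n => k₀ + d * (1 - (1 / 2) ^ n)
  have hk_zero : k 0 = k₀ := by simp [k]
  have hk_ge : ∀ n, k₀ ≤ k n := fun n => le_add_of_nonneg_right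
    (mul_nonneg hdpos.le (sub_nonneg.2 (pow_le_one₀ (by norm_num) (by norm_num))))
  have hk_le : ∀ n, k n ≤ k₀ + d := fun n =>
    add_le_add_right (mul_le_of_le_one_right hdpos.le (sub_le_self _ (by positivity))) _
  have hgap : ∀ n, k (n + 1) - k n = d * (1 / 2) ^ (n + 1) := fun n => by simp only [k]; ring
  have hdecay : ∀ n, m (k n) ≤ m k₀ * ((1 / 2) ^ n) ^ 2 := by
    rw [← hk_zero]
    refine le_geometric_of_superlinear_recursion (fun n => hm (k n)) hD hdpos ?_ fun n => ?_
    · rw [hk_zero, hd]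
      exact (lt_add_one _).le
    · rw [← hgap]
      refine h _ _ (hk_ge n) (sub_pos.1 ?_)
      rw [hgap]
      positivity
  have hlim : Tendsto (fun n : ℕ => m k₀ * (((1 : ℝ) / 2) ^ n) ^ 2) atTop (𝓝 0) := by
    have : Tendsto (fun n : ℕ => ((1 : ℝ) / 2) ^ n) atTop (𝓝 0) :=
      tendsto_pow_atTop_nhds_zero_of_lt_one (by norm_num) (by norm_num)
    simpa using (this.pow 2).const_mul (m k₀)
  have hk₀d : k₀ ≤ k₀ + d := le_add_of_nonneg_right hdpos.le
  exact ⟨k₀ + d, hk₀d, le_antisymm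
    (ge_of_tendsto' hlim fun n => (hmono (hk_ge n) hk₀d (hk_le n)).trans (hdecay n)) (hm _)⟩

lemma eLpNorm_integral_comp_sub_le {E F : Type*} [NormedAddCommGroup F] [NormedSpace ℝ F]
    [AddGroup E] [MeasurableSpace E] [MeasurableAdd₂ E] [MeasurableNeg E] {μ : Measure E}
    [SFinite μ] [μ.IsAddRightInvariant] (ν : Measure E) [IsProbabilityMeasure ν] {p : ℝ≥0∞}
    (hp : 1 ≤ p) (hp' : p ≠ ∞) {g : E → F} (hg : AEStronglyMeasurable g μ) :
    eLpNorm (fun x => ∫ t, g (x - t) ∂ν) p μ ≤ eLpNorm g p μ := by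
  have hp0 : p ≠ 0 := (zero_lt_one.trans_le hp).ne'
  have hr : 1 ≤ p.toReal := by simpa using ENNReal.toReal_mono hp' hp
  have hjoint : AEStronglyMeasurable (fun z : E × E => g (z.1 - z.2)) (μ.prod ν) :=
    hg.comp_quasiMeasurePreserving (quasiMeasurePreserving_sub_of_right_invariant μ ν)
  have hjensen : ∀ᵐ x ∂μ, ‖∫ t, g (x - t) ∂ν‖ₑ ^ p.toReal ≤ ∫⁻ t, ‖g (x - t)‖ₑ ^ p.toReal ∂ν := by
    filter_upwards [hjoint.prodMk_left] with x hx
    calc ‖∫ t, g (x - t) ∂ν‖ₑ ^ p.toReal ≤ eLpNorm (fun t => g (x - t)) p ν ^ p.toReal := by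
          gcongr
          refine (enorm_integral_le_lintegral_enorm _).trans ?_
          rw [← eLpNorm_one_eq_lintegral_enorm]
          exact eLpNorm_le_eLpNorm_of_exponent_le hp hx
      _ = ∫⁻ t, ‖g (x - t)‖ₑ ^ p.toReal ∂ν := by
          rw [eLpNorm_eq_lintegral_rpow_enorm_toReal hp0 hp', ← ENNReal.rpow_mul,
            one_div_mul_cancel (by positivity), ENNReal.rpow_one]
  rw [eLpNorm_eq_lintegral_rpow_enorm_toReal hp0 hp',
    eLpNorm_eq_lintegral_rpow_enorm_toReal hp0 hp']
  refine ENNReal.rpow_le_rpow ?_ (by positivity)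
  calc ∫⁻ x, ‖∫ t, g (x - t) ∂ν‖ₑ ^ p.toReal ∂μ
      ≤ ∫⁻ x, ∫⁻ t, ‖g (x - t)‖ₑ ^ p.toReal ∂ν ∂μ := lintegral_mono_ae hjensen
    _ = ∫⁻ t, ∫⁻ x, ‖g (x - t)‖ₑ ^ p.toReal ∂μ ∂ν :=
        lintegral_lintegral_swap (hjoint.enorm.pow_const _)
    _ = ∫⁻ x, ‖g x‖ₑ ^ p.toReal ∂μ := by
        simp only [lintegral_sub_right_eq_self fun x => ‖g x‖ₑ ^ p.toReal, lintegral_const,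
          measure_univ, mul_one]

section TestFunctions

variable {E : Type*} [NormedAddCommGroup E] [NormedSpace ℝ E] {φ ψ : E → ℝ} {θ : ℝ → ℝ}

/-- The classical derivative `∂_e φ` in the direction `e`. -/
def dirDeriv (e : E) (φ : E → ℝ) (x : E) : ℝ := fderiv ℝ φ x e

/-- Membership in `C_c^∞(E)`. -/
structure IsTestFun (φ : E → ℝ) : Prop where
  contDiff : ContDiff ℝ (⊤ : ℕ∞) φ
  hasCompactSupport : HasCompactSupport φ

lemma dirDeriv_mul (hφ : ContDiff ℝ (⊤ : ℕ∞) φ) (hψ : ContDiff ℝ (⊤ : ℕ∞) ψ) (e x : E) :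
    dirDeriv e (fun y => φ y * ψ y) x = φ x * dirDeriv e ψ x + ψ x * dirDeriv e φ x := by
  simp only [dirDeriv]
  rw [fderiv_fun_mul (hφ.differentiable (by simp) x) (hψ.differentiable (by simp) x)]
  rfl

lemma dirDeriv_comp (hθ : ContDiff ℝ (⊤ : ℕ∞) θ) (hφ : ContDiff ℝ (⊤ : ℕ∞) φ) (e x : E) :
    dirDeriv e (fun y => θ (φ y)) x = deriv θ (φ x) * dirDeriv e φ x := by
  have h := ((hθ.differentiable (by simp) (φ x)).hasDerivAt).comp_hasFDerivAt x
    (hφ.differentiable (by simp) x).hasFDerivAt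
  simp only [dirDeriv]
  rw [show (fun y => θ (φ y)) = θ ∘ φ from rfl, h.fderiv]
  rfl

lemma dirDeriv_comp_add_right (e a x : E) :
    dirDeriv e (fun y => φ (y + a)) x = dirDeriv e φ (x + a) := by
  simp only [dirDeriv, fderiv_comp_add_right]

lemma contDiff_dirDeriv (hφ : ContDiff ℝ (⊤ : ℕ∞) φ) (e : E) :
    ContDiff ℝ (⊤ : ℕ∞) (dirDeriv e φ) :=
  (hφ.fderiv_right (m := (⊤ : ℕ∞)) (by simp)).clm_apply contDiff_const

lemma tsupport_dirDeriv_subset (e : E) : tsupport (dirDeriv e φ) ⊆ tsupport φ := by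
  refine (closure_mono fun x hx => ?_).trans (tsupport_fderiv_subset ℝ (f := φ))
  contrapose! hx
  simp only [Function.notMem_support, dirDeriv] at hx ⊢
  rw [hx, zero_apply]

namespace IsTestFun

lemma dirDeriv (h : IsTestFun φ) (e : E) : IsTestFun (dirDeriv e φ) :=
  ⟨contDiff_dirDeriv h.contDiff e,
    h.hasCompactSupport.of_isClosed_subset (isClosed_tsupport _) (tsupport_dirDeriv_subset e)⟩

lemma mul_left (h : IsTestFun φ) (hψ : ContDiff ℝ (⊤ : ℕ∞) ψ) :
    IsTestFun (fun x => ψ x * φ x) :=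
  ⟨hψ.mul h.contDiff, h.hasCompactSupport.mul_left⟩

lemma mul_right (h : IsTestFun φ) (hψ : ContDiff ℝ (⊤ : ℕ∞) ψ) :
    IsTestFun (fun x => φ x * ψ x) :=
  ⟨h.contDiff.mul hψ, h.hasCompactSupport.mul_right⟩

lemma comp_add_right (h : IsTestFun φ) (a : E) : IsTestFun (fun x => φ (x + a)) :=
  ⟨h.contDiff.comp (contDiff_id.add contDiff_const),
    h.hasCompactSupport.comp_homeomorph (Homeomorph.addRight a)⟩

lemma exists_bound (h : IsTestFun φ) : ∃ C, ∀ x, |φ x| ≤ C :=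
  h.hasCompactSupport.exists_bound_of_continuous h.contDiff.continuous

lemma exists_lipschitzWith (h : IsTestFun φ) : ∃ L, LipschitzWith L φ :=
  h.contDiff.lipschitzWith_of_hasCompactSupport h.hasCompactSupport (by simp)

variable [MeasurableSpace E] [BorelSpace E] {μ : Measure E}

lemma integrable [IsFiniteMeasureOnCompacts μ] [SecondCountableTopologyEither E ℝ]
    (h : IsTestFun φ) : Integrable φ μ :=
  h.contDiff.continuous.integrable_of_hasCompactSupport h.hasCompactSupport

lemma memLp [IsFiniteMeasureOnCompacts μ] [SecondCountableTopologyEither E ℝ] (h : IsTestFun φ)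
    (p : ℝ≥0∞) : MemLp φ p μ :=
  h.contDiff.continuous.memLp_of_hasCompactSupport h.hasCompactSupport

end IsTestFun

lemma integral_mul_dirDeriv [FiniteDimensional ℝ E] [MeasurableSpace E] [BorelSpace E]
    {μ : Measure E} [μ.IsAddHaarMeasure] (hφ : ContDiff ℝ (⊤ : ℕ∞) φ) (hψ : IsTestFun ψ) (e : E) :
    ∫ x, φ x * dirDeriv e ψ x ∂μ = -∫ x, dirDeriv e φ x * ψ x ∂μ :=
  integral_mul_fderiv_eq_neg_fderiv_mul_of_integrable
    (hψ.mul_left (contDiff_dirDeriv hφ e)).integrable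
    ((hψ.dirDeriv e).mul_left hφ).integrable (hψ.mul_left hφ).integrable
    (fun x _ => hφ.differentiable (by simp) x)
    fun x _ => hψ.contDiff.differentiable (by simp) x

end TestFunctions

section SobolevInequality

variable {E ι : Type*} [NormedAddCommGroup E] [NormedSpace ℝ E] [FiniteDimensional ℝ E]
  [MeasurableSpace E] [BorelSpace E] [Fintype ι] (μ : Measure E) [μ.IsAddHaarMeasure]

lemma exists_eLpNorm_le_sum_eLpNorm_dirDeriv (b : Module.Basis ι ℝ E) {p : ℝ≥0}
    (hp : NNReal.HolderConjugate (Module.finrank ℝ E) p) :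
    ∃ C : ℝ≥0, ∀ φ : E → ℝ, IsTestFun φ →
      eLpNorm φ p μ ≤ C * ∑ i, eLpNorm (dirDeriv (b i) φ) 1 μ := by
  obtain ⟨C, -, hC⟩ := b.exists_opNNNorm_le (F := ℝ)
  refine ⟨eLpNormLESNormFDerivOneConst μ p * C, fun φ hφ => ?_⟩
  have hfderiv : ∀ x, ‖fderiv ℝ φ x‖ₑ ≤ C * ∑ i, ‖dirDeriv (b i) φ x‖ₑ := fun x => by
    simp only [enorm_eq_nnnorm, ← ENNReal.ofNNReal_finsetSum, ← ENNReal.coe_mul]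
    exact ENNReal.coe_le_coe.2
      (hC _ fun i => Finset.single_le_sum_of_canonicallyOrdered
        (f := fun j => ‖dirDeriv (b j) φ x‖₊) (Finset.mem_univ i))
  have hmeas : ∀ i, AEStronglyMeasurable (dirDeriv (b i) φ) μ := fun i =>
    (contDiff_dirDeriv hφ.contDiff (b i)).continuous.aestronglyMeasurable
  calc eLpNorm φ p μ
      ≤ eLpNormLESNormFDerivOneConst μ p * eLpNorm (fderiv ℝ φ) 1 μ :=
        eLpNorm_le_eLpNorm_fderiv_one μ (hφ.contDiff.of_le (by simp)) hφ.hasCompactSupport hp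
    _ ≤ eLpNormLESNormFDerivOneConst μ p * ∫⁻ x, C * ∑ i, ‖dirDeriv (b i) φ x‖ₑ ∂μ := by
        rw [eLpNorm_one_eq_lintegral_enorm]
        gcongr with x
        exact hfderiv x
    _ = _ := by
        rw [lintegral_const_mul' _ _ ENNReal.coe_ne_top,
          lintegral_finsetSum' _ fun i _ => (hmeas i).enorm, ENNReal.coe_mul, mul_assoc]
        simp only [eLpNorm_one_eq_lintegral_enorm]

end SobolevInequality

section Mollification

open ContinuousLinearMap
open scoped Convolution

/-- The bump function at the origin with radii `1 / (2 (n + 1))` and `1 / (n + 1)`. -/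
def shrinkingBump (E : Type*) [NormedAddCommGroup E] [NormedSpace ℝ E] (n : ℕ) :
    ContDiffBump (0 : E) where
  rIn := 1 / (n + 1) / 2
  rOut := 1 / (n + 1)
  rIn_pos := by positivity
  rIn_lt_rOut := half_lt_self (by positivity)

lemma tendsto_rOut_shrinkingBump (E : Type*) [NormedAddCommGroup E] [NormedSpace ℝ E] :
    Tendsto (fun n => (shrinkingBump E n).rOut) atTop (𝓝 0) :=
  tendsto_one_div_add_atTop_nhds_zero_nat

variable {E : Type*} [NormedAddCommGroup E] [NormedSpace ℝ E] [FiniteDimensional ℝ E]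
  [MeasurableSpace E] [BorelSpace E] {μ : Measure E} [μ.IsAddHaarMeasure] {g : E → ℝ}

/-- The mollification of `g` by the normalised bump of radius `1 / (n + 1)`. -/
def mollify (μ : Measure E) (n : ℕ) (g : E → ℝ) : E → ℝ :=
  (shrinkingBump E n).normed μ ⋆[lsmul ℝ ℝ, μ] g

lemma mollify_apply (n : ℕ) (x : E) :
    mollify μ n g x = ∫ t, (shrinkingBump E n).normed μ (x - t) * g t ∂μ := by
  simp only [mollify, convolution_eq_swap, lsmul_apply, smul_eq_mul]

lemma contDiff_mollify (hg : LocallyIntegrable g μ) (n : ℕ) :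
    ContDiff ℝ (⊤ : ℕ∞) (mollify μ n g) :=
  (shrinkingBump E n).hasCompactSupport_normed.contDiff_convolution_left _
    (shrinkingBump E n).contDiff_normed hg

lemma isTestFun_mollify (hg : LocallyIntegrable g μ) (hgc : HasCompactSupport g) (n : ℕ) :
    IsTestFun (mollify μ n g) :=
  ⟨contDiff_mollify hg n, (shrinkingBump E n).hasCompactSupport_normed.convolution _ hgc⟩

lemma eventually_tsupport_mollify_subset (hgc : HasCompactSupport g) {s : Set E} (hs : IsOpen s)
    (hgs : tsupport g ⊆ s) : ∀ᶠ n in atTop, tsupport (mollify μ n g) ⊆ s := by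
  obtain ⟨δ, hδ, hδs⟩ := hgc.isCompact.exists_cthickening_subset_open hs hgs
  filter_upwards [(tendsto_rOut_shrinkingBump E).eventually_lt_const hδ] with n hn
  refine (closure_minimal (fun x hx => ?_) Metric.isClosed_cthickening).trans hδs
  obtain ⟨y, hy, z, hz, rfl⟩ := mem_add.1 (support_convolution_subset_swap _ hx)
  rw [(shrinkingBump E n).support_normed_eq, mem_ball_zero_iff] at hz
  refine Metric.mem_cthickening_of_dist_le _ y _ _ (subset_tsupport g hy) ?_
  rw [dist_eq_norm, add_sub_cancel_left]
  exact (hz.trans hn).le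

lemma ae_tendsto_mollify (hg : LocallyIntegrable g μ) :
    ∀ᵐ x ∂μ, Tendsto (fun n => mollify μ n g x) atTop (𝓝 (g x)) :=
  ContDiffBump.ae_convolution_tendsto_right_of_locallyIntegrable (K := 2)
    (tendsto_rOut_shrinkingBump E)
    (Eventually.of_forall fun n => (mul_div_cancel₀ (1 / ((n : ℝ) + 1)) two_ne_zero).ge) hg

lemma exists_isProbabilityMeasure_mollify_eq (n : ℕ) : ∃ ν : Measure E, IsProbabilityMeasure ν ∧
    ∀ g, mollify μ n g = fun x => ∫ t, g (x - t) ∂ν := by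
  have hβ : Measurable fun t => ENNReal.ofReal ((shrinkingBump E n).normed μ t) :=
    (shrinkingBump E n).continuous_normed.measurable.ennreal_ofReal
  refine ⟨μ.withDensity fun t => ENNReal.ofReal ((shrinkingBump E n).normed μ t), ⟨?_⟩,
    fun g => funext fun x => ?_⟩
  · rw [withDensity_apply _ MeasurableSet.univ, Measure.restrict_univ,
      ← ofReal_integral_eq_lintegral_ofReal (shrinkingBump E n).integrable_normed
        (ae_of_all _ (shrinkingBump E n).nonneg_normed), (shrinkingBump E n).integral_normed,
      ENNReal.ofReal_one]
  · rw [integral_withDensity_eq_integral_toReal_smul hβ (by simp)]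
    simp only [ENNReal.toReal_ofReal ((shrinkingBump E n).nonneg_normed _)]
    rfl

lemma eLpNorm_mollify_le (hg : AEStronglyMeasurable g μ) {p : ℝ≥0∞} (hp : 1 ≤ p) (hp' : p ≠ ∞)
    (n : ℕ) : eLpNorm (mollify μ n g) p μ ≤ eLpNorm g p μ := by
  obtain ⟨ν, hν, hmollify⟩ := exists_isProbabilityMeasure_mollify_eq (μ := μ) n
  rw [hmollify]
  exact eLpNorm_integral_comp_sub_le ν hp hp' hg

lemma abs_mollify_le {C : ℝ} (hgC : ∀ x, |g x| ≤ C) (n : ℕ) (x : E) : |mollify μ n g x| ≤ C := by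
  obtain ⟨ν, hν, hmollify⟩ := exists_isProbabilityMeasure_mollify_eq (μ := μ) n
  rw [hmollify]
  simpa using norm_integral_le_of_norm_le_const (μ := ν) (f := fun t => g (x - t))
    (ae_of_all _ fun t => hgC (x - t))

lemma tendstoL2_mollify (hg : MemLp g 2 μ) : TendstoL2 μ (fun n => mollify μ n g) g := by
  have hloc : LocallyIntegrable g μ := hg.locallyIntegrable one_le_two
  exact tendstoL2_of_tendsto_ae_of_eLpNorm_le
    (fun n => (contDiff_mollify hloc n).continuous.aestronglyMeasurable) hg
    (fun n => eLpNorm_mollify_le hg.1 one_le_two ENNReal.ofNat_ne_top n) (ae_tendsto_mollify hloc)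

end Mollification

section WeakDerivative

open scoped Convolution

variable {E : Type*} [NormedAddCommGroup E] [NormedSpace ℝ E] [MeasurableSpace E] {μ : Measure E}
  {e : E} {w w' g g' : E → ℝ}

/-- `w ∈ L²(μ)` has the distributional derivative `∂_e w = g ∈ L²(μ)` on the whole space. -/
structure HasL2DirDeriv (μ : Measure E) (e : E) (w g : E → ℝ) : Prop where
  memLp : MemLp w 2 μ
  memLp_deriv : MemLp g 2 μ
  integral_mul_dirDeriv : ∀ φ, IsTestFun φ → ∫ x, w x * dirDeriv e φ x ∂μ = -∫ x, g x * φ x ∂μ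

lemma hasL2DirDeriv_of_tendsto {e : E} {s t : ℕ → E → ℝ} (hw : MemLp w 2 μ) (hg : MemLp g 2 μ)
    (h : ∀ n, ∀ φ, IsTestFun φ → ∫ x, s n x * dirDeriv e φ x ∂μ = -∫ x, t n x * φ x ∂μ)
    (hs : ∀ φ, IsTestFun φ → Tendsto (fun n => ∫ x, s n x * φ x ∂μ) atTop (𝓝 (∫ x, w x * φ x ∂μ)))
    (ht : ∀ φ, IsTestFun φ → Tendsto (fun n => ∫ x, t n x * φ x ∂μ) atTop (𝓝 (∫ x, g x * φ x ∂μ))) :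
    HasL2DirDeriv μ e w g :=
  ⟨hw, hg, fun φ hφ => tendsto_nhds_unique
    ((hs _ (hφ.dirDeriv e)).congr fun n => h n φ hφ) (ht φ hφ).neg⟩

lemma HasL2DirDeriv.const_mul (h : HasL2DirDeriv μ e w g) (c : ℝ) :
    HasL2DirDeriv μ e (fun x => c * w x) fun x => c * g x where
  memLp := h.memLp.const_mul c
  memLp_deriv := h.memLp_deriv.const_mul c
  integral_mul_dirDeriv φ hφ := by
    simp only [mul_assoc, integral_const_mul, h.integral_mul_dirDeriv φ hφ, mul_neg]

variable [BorelSpace E]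

lemma HasL2DirDeriv.sub [FiniteDimensional ℝ E] [IsFiniteMeasureOnCompacts μ]
    (h : HasL2DirDeriv μ e w g) (h' : HasL2DirDeriv μ e w' g') :
    HasL2DirDeriv μ e (fun x => w x - w' x) fun x => g x - g' x where
  memLp := h.memLp.sub h'.memLp
  memLp_deriv := h.memLp_deriv.sub h'.memLp_deriv
  integral_mul_dirDeriv φ hφ := by
    have hdφ : MemLp (dirDeriv e φ) 2 μ := (hφ.dirDeriv e).memLp 2
    have hφ2 : MemLp φ 2 μ := hφ.memLp 2
    rw [integral_sub_mul h.memLp h'.memLp hdφ, integral_sub_mul h.memLp_deriv h'.memLp_deriv hφ2,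
      h.integral_mul_dirDeriv φ hφ, h'.integral_mul_dirDeriv φ hφ, neg_sub_neg, neg_sub]

lemma HasL2DirDeriv.comp_add_right [μ.IsAddRightInvariant] (h : HasL2DirDeriv μ e w g) (a : E) :
    HasL2DirDeriv μ e (fun x => w (x + a)) fun x => g (x + a) where
  memLp := h.memLp.comp_measurePreserving (measurePreserving_add_right μ a)
  memLp_deriv := h.memLp_deriv.comp_measurePreserving (measurePreserving_add_right μ a)
  integral_mul_dirDeriv φ hφ := by
    have hshift := h.integral_mul_dirDeriv _ (hφ.comp_add_right (-a))
    simp only [dirDeriv_comp_add_right] at hshift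
    rw [← integral_add_right_eq_self (fun x => w x * _) a,
      ← integral_add_right_eq_self (fun x => g x * _) a] at hshift
    simpa only [add_neg_cancel_right] using hshift

variable [FiniteDimensional ℝ E] [μ.IsAddHaarMeasure]

lemma IsTestFun.hasL2DirDeriv {φ : E → ℝ} (hφ : IsTestFun φ) :
    HasL2DirDeriv μ e φ (_root_.dirDeriv e φ) :=
  ⟨hφ.memLp 2, (hφ.dirDeriv e).memLp 2, fun _ hψ => _root_.integral_mul_dirDeriv hφ.contDiff hψ e⟩

lemma HasL2DirDeriv.dirDeriv_mollify (h : HasL2DirDeriv μ e w g) (n : ℕ) :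
    dirDeriv e (mollify μ n w) = mollify μ n g := by
  set β := (shrinkingBump E n).normed μ with hβdef
  have hβ : IsTestFun β :=
    ⟨(shrinkingBump E n).contDiff_normed, (shrinkingBump E n).hasCompactSupport_normed⟩
  funext x
  have hβx : IsTestFun fun t => β (x - t) :=
    ⟨hβ.contDiff.comp (contDiff_const.sub contDiff_id),
      hβ.hasCompactSupport.comp_homeomorph (Homeomorph.subLeft x)⟩
  have hdβx : ∀ t, dirDeriv e (fun t => β (x - t)) t = -dirDeriv e β (x - t) := fun t => by
    have hβt := (hβ.contDiff.differentiable (by simp) (x - t)).hasFDerivAt.comp t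
      ((hasFDerivAt_id t).const_sub x)
    simp only [dirDeriv]
    rw [show (fun t => β (x - t)) = β ∘ fun t => x - t from rfl, hβt.fderiv]
    simp
  calc dirDeriv e (mollify μ n w) x
      = ∫ t, w t * dirDeriv e β (x - t) ∂μ := by
        have hw : LocallyIntegrable w μ := h.memLp.locallyIntegrable one_le_two
        rw [dirDeriv, mollify, ← convolution_flip,
          (hβ.hasCompactSupport.hasFDerivAt_convolution_right _ hw
            (hβ.contDiff.of_le (by simp)) x).fderiv,
          convolution_precompR_apply _ hw (hβ.hasCompactSupport.fderiv ℝ)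
            (hβ.contDiff.continuous_fderiv (by simp))]
        exact integral_congr_ae (ae_of_all _ fun t => mul_comm _ _)
    _ = -∫ t, w t * dirDeriv e (fun t => β (x - t)) t ∂μ := by
        simp only [hdβx, mul_neg, integral_neg, neg_neg]
    _ = mollify μ n g x := by
        rw [h.integral_mul_dirDeriv _ hβx, neg_neg, mollify_apply]
        simp only [mul_comm, hβdef]

lemma HasL2DirDeriv.tendstoL2_dirDeriv_mollify (h : HasL2DirDeriv μ e w g) :
    TendstoL2 μ (fun n => dirDeriv e (mollify μ n w)) g := by
  simpa only [h.dirDeriv_mollify] using tendstoL2_mollify h.memLp_deriv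

lemma HasL2DirDeriv.comp {θ : ℝ → ℝ} {K : ℝ≥0} (h : HasL2DirDeriv μ e w g)
    (hθ : ContDiff ℝ (⊤ : ℕ∞) θ) (hθK : LipschitzWith K θ) (hθ0 : θ 0 = 0) :
    HasL2DirDeriv μ e (fun x => θ (w x)) fun x => deriv θ (w x) * g x := by
  have hw : LocallyIntegrable w μ := h.memLp.locallyIntegrable one_le_two
  have hmul_le : ∀ t y, ‖deriv θ t * y‖ ≤ K * ‖y‖ := fun t y => by
    rw [norm_mul]
    exact mul_le_mul_of_nonneg_right (norm_deriv_le_of_lipschitz hθK) (norm_nonneg y)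
  have hderiv_cont : Continuous (deriv θ) := hθ.continuous_deriv (by simp)
  have hsmooth := contDiff_mollify hw
  refine hasL2DirDeriv_of_tendsto (s := fun n x => θ (mollify μ n w x))
    (t := fun n => dirDeriv e fun x => θ (mollify μ n w x)) (hθK.comp_memLp hθ0 h.memLp)
    (h.memLp_deriv.of_le_mul (c := K)
      ((hderiv_cont.comp_aestronglyMeasurable h.memLp.1).mul h.memLp_deriv.1)
      (ae_of_all _ fun x => hmul_le (w x) (g x)))
    (fun n φ hφ => _root_.integral_mul_dirDeriv (hθ.comp (hsmooth n)) hφ e)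
    (fun φ hφ => ((tendstoL2_mollify h.memLp).comp_lipschitz hθK hθ0).integral_mul_const
      (hφ.memLp 2)) fun φ hφ => ?_
  have hcoef : TendstoL2 μ (fun n x => deriv θ (mollify μ n w x) * φ x)
      fun x => deriv θ (w x) * φ x := by
    refine tendstoL2_of_dominated ((hφ.memLp 2).norm.const_mul K) (fun n => ?_)
      (fun n x => hmul_le _ _) ?_
    · exact (hderiv_cont.comp (hsmooth n).continuous).aestronglyMeasurable.mul (hφ.memLp 2).1
    · filter_upwards [ae_tendsto_mollify hw] with x hx
      exact ((hderiv_cont.tendsto _).comp hx).mul_const _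
  simpa only [dirDeriv_comp hθ (hsmooth _), mul_right_comm] using
    hcoef.integral_mul h.tendstoL2_dirDeriv_mollify

lemma exists_eLpNorm_le_sum_eLpNorm_of_hasL2DirDeriv {ι : Type*} [Fintype ι] (μ : Measure E)
    [μ.IsAddHaarMeasure] (b : Module.Basis ι ℝ E) {p : ℝ≥0}
    (hp : NNReal.HolderConjugate (Module.finrank ℝ E) p) :
    ∃ C : ℝ≥0, ∀ (v : E → ℝ) (dv : ι → E → ℝ), HasCompactSupport v → LocallyIntegrable v μ →
      (∀ i, HasL2DirDeriv μ (b i) v (dv i)) → eLpNorm v p μ ≤ C * ∑ i, eLpNorm (dv i) 1 μ := by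
  obtain ⟨C, hC⟩ := exists_eLpNorm_le_sum_eLpNorm_dirDeriv μ b hp
  refine ⟨C, fun v dv hv hloc hdv => ?_⟩
  have hmollify : ∀ n, eLpNorm (mollify μ n v) p μ ≤ C * ∑ i, eLpNorm (dv i) 1 μ := fun n =>
    calc eLpNorm (mollify μ n v) p μ
        ≤ C * ∑ i, eLpNorm (mollify μ n (dv i)) 1 μ := by
          simpa only [(hdv _).dirDeriv_mollify] using hC _ (isTestFun_mollify hloc hv n)
      _ ≤ _ := by
          gcongr with i
          exact eLpNorm_mollify_le (hdv i).memLp_deriv.1 le_rfl ENNReal.one_ne_top n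
  refine (Lp.eLpNorm_lim_le_liminf_eLpNorm
    (fun n => (contDiff_mollify hloc n).continuous.aestronglyMeasurable) v
    (ae_tendsto_mollify hloc)).trans ?_
  exact liminf_le_of_le (h := fun a ha => (ha.exists.elim fun n hn => hn.trans (hmollify n)))

end WeakDerivative

section DifferenceQuotients

variable {E : Type*} [NormedAddCommGroup E] [NormedSpace ℝ E] {e e' : E} {f g w : E → ℝ}

/-- The difference quotient of `g` in the direction `e` with step `h`; it is `0` for `h = 0`. -/
def diffQuot (h : ℝ) (e : E) (g : E → ℝ) (x : E) : ℝ := h⁻¹ * (g (x + h • e) - g x)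

lemma diffQuot_mul (h : ℝ) (e : E) (f g : E → ℝ) (x : E) :
    diffQuot h e (fun y => f y * g y) x
      = f (x + h • e) * diffQuot h e g x + diffQuot h e f x * g x := by
  unfold diffQuot
  ring

lemma abs_diffQuot_le {K : ℝ≥0} (hf : LipschitzWith K f) (h : ℝ) (e x : E) :
    |diffQuot h e f x| ≤ K * ‖e‖ := by
  rcases eq_or_ne h 0 with rfl | hh
  · simpa [diffQuot] using by positivity
  · have hdist := hf.dist_le_mul (x + h • e) x
    rw [Real.dist_eq, dist_self_add_left, norm_smul, Real.norm_eq_abs] at hdist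
    rw [diffQuot, abs_mul, abs_inv, inv_mul_le_iff₀ (abs_pos.2 hh)]
    linarith

lemma hasCompactSupport_diffQuot (hf : HasCompactSupport f) (h : ℝ) (e : E) :
    HasCompactSupport (diffQuot h e f) :=
  ((hf.comp_homeomorph (Homeomorph.addRight (h • e))).sub hf).mul_left

lemma tendsto_diffQuot {x : E} (hf : DifferentiableAt ℝ f x) (e : E) :
    Tendsto (fun h => diffQuot h e f x) (𝓝[≠] 0) (𝓝 (dirDeriv e f x)) := by
  have hline : HasDerivAt (fun t : ℝ => f (x + t • e)) (dirDeriv e f x) 0 := by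
    have := hf.hasFDerivAt.hasLineDerivAt e
    exact this
  simpa [slope_fun_def, diffQuot] using hline.tendsto_slope

lemma diffQuot_eq_intervalIntegral (hf : ContDiff ℝ (⊤ : ℕ∞) f) {h : ℝ} (hh : h ≠ 0) (e x : E) :
    diffQuot h e f x = ∫ t in (0 : ℝ)..1, dirDeriv e f (x + (t * h) • e) := by
  have hderiv : ∀ t : ℝ, HasDerivAt (fun t : ℝ => h⁻¹ * f (x + (t * h) • e))
      (dirDeriv e f (x + (t * h) • e)) t := fun t => by
    have hline : HasDerivAt (fun t : ℝ => x + (t * h) • e) (h • e) t := by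
      simpa using (((hasDerivAt_id t).mul_const h).smul_const e).const_add x
    have := (((hf.differentiable (by simp) _).hasFDerivAt).comp_hasDerivAt t hline).const_mul h⁻¹
    simpa [dirDeriv, hh] using this
  have hcont : Continuous fun t : ℝ => dirDeriv e f (x + (t * h) • e) :=
    (contDiff_dirDeriv hf e).continuous.comp (by fun_prop)
  rw [intervalIntegral.integral_eq_sub_of_hasDerivAt (fun t _ => hderiv t)
    (hcont.intervalIntegrable 0 1), diffQuot]
  simp [mul_sub]

variable [MeasurableSpace E] [BorelSpace E] {μ : Measure E}

lemma memLp_diffQuot [μ.IsAddRightInvariant] (hf : MemLp f 2 μ) (h : ℝ) (e : E) :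
    MemLp (diffQuot h e f) 2 μ :=
  ((hf.comp_measurePreserving (measurePreserving_add_right μ (h • e))).sub hf).const_mul h⁻¹

lemma integral_diffQuot_mul [μ.IsAddRightInvariant] (hf : MemLp f 2 μ) (hg : MemLp g 2 μ)
    (h : ℝ) (e : E) :
    ∫ x, diffQuot h e f x * g x ∂μ = -∫ x, f x * diffQuot (-h) e g x ∂μ := by
  have hf' := hf.comp_measurePreserving (measurePreserving_add_right μ (h • e))
  have hg' := hg.comp_measurePreserving (measurePreserving_add_right μ (-h • e))
  have hshift : ∫ x, f (x + h • e) * g x ∂μ = ∫ x, f x * g (x + -h • e) ∂μ := by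
    rw [← integral_add_right_eq_self (fun x => f x * _) (h • e)]
    simp only [neg_smul, add_neg_cancel_right]
  calc ∫ x, diffQuot h e f x * g x ∂μ
      = h⁻¹ * (∫ x, f (x + h • e) * g x ∂μ - ∫ x, f x * g x ∂μ) := by
        simp only [diffQuot, mul_assoc, integral_const_mul]
        exact congrArg _ (integral_sub_mul hf' hf hg)
    _ = h⁻¹ * ∫ x, (g (x + -h • e) - g x) * f x ∂μ := by
        rw [hshift]
        simp only [mul_comm (f _)]
        exact congrArg _ (integral_sub_mul hg' hg hf).symm
    _ = -∫ x, f x * diffQuot (-h) e g x ∂μ := by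
        rw [← integral_const_mul, ← integral_neg]
        refine integral_congr_ae (ae_of_all _ fun x => ?_)
        simp only [diffQuot, inv_neg]
        ring

variable [FiniteDimensional ℝ E] [μ.IsAddHaarMeasure]

lemma HasL2DirDeriv.diffQuot (hw : HasL2DirDeriv μ e w g) (h : ℝ) (e' : E) :
    HasL2DirDeriv μ e (diffQuot h e' w) (diffQuot h e' g) :=
  ((hw.comp_add_right (h • e')).sub hw).const_mul h⁻¹

lemma eLpNorm_diffQuot_le_of_contDiff (hf : ContDiff ℝ (⊤ : ℕ∞) f) (h : ℝ) (e : E) :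
    eLpNorm (diffQuot h e f) 2 μ ≤ eLpNorm (dirDeriv e f) 2 μ := by
  rcases eq_or_ne h 0 with rfl | hh
  · have : diffQuot 0 e f = 0 := funext fun x => by simp [diffQuot]
    simp [this]
  let ν : Measure E := (volume.restrict (Ioc (0 : ℝ) 1)).map fun t => -((t * h) • e)
  have hmeas : Measurable fun t : ℝ => -((t * h) • e) := by fun_prop
  have hν : IsProbabilityMeasure ν :=
    ⟨by rw [Measure.map_apply hmeas MeasurableSet.univ]; simp⟩
  have hderiv : Continuous (dirDeriv e f) := (contDiff_dirDeriv hf e).continuous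
  have hcomp : ∀ x, Continuous fun y => dirDeriv e f (x - y) := fun x =>
    hderiv.comp (continuous_const.sub continuous_id)
  have haverage : diffQuot h e f = fun x => ∫ y, dirDeriv e f (x - y) ∂ν := funext fun x => by
    rw [diffQuot_eq_intervalIntegral hf hh, intervalIntegral.integral_of_le zero_le_one,
      integral_map hmeas.aemeasurable (hcomp x).aestronglyMeasurable]
    simp only [sub_neg_eq_add]
  rw [haverage]
  exact eLpNorm_integral_comp_sub_le ν one_le_two ENNReal.ofNat_ne_top hderiv.aestronglyMeasurable

lemma HasL2DirDeriv.eLpNorm_diffQuot_le (hw : HasL2DirDeriv μ e w g) (h : ℝ) :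
    eLpNorm (_root_.diffQuot h e w) 2 μ ≤ eLpNorm g 2 μ := by
  have hloc : LocallyIntegrable w μ := hw.memLp.locallyIntegrable one_le_two
  have hsmooth := contDiff_mollify hloc
  have hshift : ∀ᵐ x ∂μ, Tendsto (fun n => mollify μ n w (x + h • e)) atTop
      (𝓝 (w (x + h • e))) :=
    (measurePreserving_add_right μ (h • e)).quasiMeasurePreserving.ae (ae_tendsto_mollify hloc)
  refine (Lp.eLpNorm_lim_le_liminf_eLpNorm (f := fun n => _root_.diffQuot h e (mollify μ n w))
    (fun n => ?_) _ ?_).trans ?_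
  · have hcont := (hsmooth n).continuous
    exact (((hcont.comp (continuous_add_const (h • e))).sub hcont).const_mul
      h⁻¹).aestronglyMeasurable
  · filter_upwards [ae_tendsto_mollify hloc, hshift] with x hx hx'
    exact (hx'.sub hx).const_mul h⁻¹
  · refine liminf_le_of_le (h := fun a ha => ha.exists.elim fun n hn => hn.trans ?_)
    calc eLpNorm (_root_.diffQuot h e (mollify μ n w)) 2 μ
        ≤ eLpNorm (mollify μ n g) 2 μ := by
          simpa only [hw.dirDeriv_mollify] using eLpNorm_diffQuot_le_of_contDiff (hsmooth n) h e
      _ ≤ eLpNorm g 2 μ := eLpNorm_mollify_le hw.memLp_deriv.1 one_le_two ENNReal.ofNat_ne_top n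

lemma IsTestFun.tendstoL2_diffQuot {φ : E → ℝ} (hφ : IsTestFun φ) (e : E) {h : ℕ → ℝ}
    (hh : Tendsto h atTop (𝓝[≠] 0)) :
    TendstoL2 μ (fun n => diffQuot (h n) e φ) (_root_.dirDeriv e φ) :=
  tendstoL2_of_tendsto_ae_of_eLpNorm_le
    (fun n => (memLp_diffQuot (hφ.memLp 2) (h n) e).1) ((hφ.dirDeriv e).memLp 2)
    (fun n => eLpNorm_diffQuot_le_of_contDiff hφ.contDiff (h n) e)
    (ae_of_all _ fun x =>
      (tendsto_diffQuot (hφ.contDiff.differentiable (by simp) x) e).comp hh)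

lemma exists_hasL2DirDeriv_of_lpNorm_diffQuot_le {M : ℝ} (hf : MemLp f 2 μ)
    (hM : ∀ h, lpNorm (diffQuot h e f) 2 μ ≤ M) : ∃ g, HasL2DirDeriv μ e f g := by
  let h : ℕ → ℝ := fun n => 1 / ((n : ℝ) + 1)
  have hh : Tendsto (fun n => -h n) atTop (𝓝[≠] 0) := by
    refine tendsto_nhdsWithin_iff.2 ⟨?_, Eventually.of_forall fun n => ?_⟩
    · simpa [h] using (tendsto_one_div_add_atTop_nhds_zero_nat (𝕜 := ℝ)).neg
    · exact neg_ne_zero.2 (by positivity)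
  obtain ⟨g, hg, hlim⟩ := exists_memLp_forall_integral_mul_eq
    (fun n => memLp_diffQuot hf (h n) e) fun n => hM (h n)
  refine ⟨g, hf, hg, fun φ hφ => ?_⟩
  have hφ2 : MemLp φ 2 μ := hφ.memLp 2
  rw [hlim φ hφ2 (-∫ x, f x * dirDeriv e φ x ∂μ) ?_, neg_neg]
  simp only [integral_diffQuot_mul hf hφ2, mul_comm (f _)]
  exact ((hφ.tendstoL2_diffQuot e hh).integral_mul_const hf).neg

end DifferenceQuotients

section DivergenceForm

variable {E ι : Type*} [NormedAddCommGroup E] [NormedSpace ℝ E] [MeasurableSpace E] [Fintype ι]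
  {μ : Measure E} {e : ι → E} {q : ι → E → ℝ} {F : E → ℝ}

/-- The equation `-div q = F` in the sense of distributions, the vector field `q` having the
component `q i` along `e i`. -/
def SolvesDivEq (μ : Measure E) (e : ι → E) (q : ι → E → ℝ) (F : E → ℝ) : Prop :=
  ∀ φ, IsTestFun φ → ∑ i, ∫ x, q i x * dirDeriv (e i) φ x ∂μ = ∫ x, F x * φ x ∂μ

variable [BorelSpace E] [FiniteDimensional ℝ E] [μ.IsAddHaarMeasure] {v : E → ℝ} {dv : ι → E → ℝ}

lemma SolvesDivEq.sum_integral_mul_of_tendsto (h : SolvesDivEq μ e q F) (hq : ∀ i, MemLp (q i) 2 μ)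
    (hvc : HasCompactSupport v) (hv : LocallyIntegrable v μ)
    (hdv : ∀ i, HasL2DirDeriv μ (e i) v (dv i))
    (hF : Tendsto (fun n => ∫ x, F x * mollify μ n v x ∂μ) atTop (𝓝 (∫ x, F x * v x ∂μ))) :
    ∑ i, ∫ x, q i x * dv i x ∂μ = ∫ x, F x * v x ∂μ := by
  refine tendsto_nhds_unique (tendsto_finsetSum _ fun i _ => ?_)
    (hF.congr fun n => (h _ (isTestFun_mollify hv hvc n)).symm)
  exact (tendstoL2_const (hq i)).integral_mul (hdv i).tendstoL2_dirDeriv_mollify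

lemma SolvesDivEq.sum_integral_mul_of_memLp (h : SolvesDivEq μ e q F) (hq : ∀ i, MemLp (q i) 2 μ)
    (hF : MemLp F 2 μ) (hvc : HasCompactSupport v) (hv : MemLp v 2 μ)
    (hdv : ∀ i, HasL2DirDeriv μ (e i) v (dv i)) :
    ∑ i, ∫ x, q i x * dv i x ∂μ = ∫ x, F x * v x ∂μ :=
  h.sum_integral_mul_of_tendsto hq hvc (hv.locallyIntegrable one_le_two) hdv
    ((tendstoL2_const hF).integral_mul (tendstoL2_mollify hv))

lemma SolvesDivEq.sum_integral_mul_of_bounded {C : ℝ} (h : SolvesDivEq μ e q F)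
    (hq : ∀ i, MemLp (q i) 2 μ) (hF : Integrable F μ) (hvc : HasCompactSupport v)
    (hv : LocallyIntegrable v μ) (hvC : ∀ x, |v x| ≤ C)
    (hdv : ∀ i, HasL2DirDeriv μ (e i) v (dv i)) :
    ∑ i, ∫ x, q i x * dv i x ∂μ = ∫ x, F x * v x ∂μ := by
  refine h.sum_integral_mul_of_tendsto hq hvc hv hdv
    (tendsto_integral_of_dominated_convergence (fun x => ‖F x‖ * C)
      (fun n => hF.1.mul (contDiff_mollify hv n).continuous.aestronglyMeasurable)
      (hF.norm.mul_const C) (fun n => ae_of_all _ fun x => ?_) ?_)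
  · rw [norm_mul]
    exact mul_le_mul_of_nonneg_left (abs_mollify_le hvC n x) (norm_nonneg _)
  · filter_upwards [ae_tendsto_mollify hv] with x hx
    exact hx.const_mul _

end DivergenceForm

section EllipticCoefficients

variable {E ι : Type*} [TopologicalSpace E] {a : ι → E → ℝ} {c M : ℝ}

/-- The diagonal coefficients `a i` of a uniformly elliptic operator `-∑ i, ∂ᵢ (a i ∂ᵢ ·)`, with
ellipticity constants `c` and `M`. -/
structure IsUniformlyElliptic (c M : ℝ) (a : ι → E → ℝ) : Prop where
  pos : 0 < c
  le : ∀ i x, c ≤ a i x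
  abs_le : ∀ i x, |a i x| ≤ M
  continuous : ∀ i, Continuous (a i)

lemma IsUniformlyElliptic.memLp_mul [MeasurableSpace E] [OpensMeasurableSpace E] {μ : Measure E}
    {g : E → ℝ} (ha : IsUniformlyElliptic c M a) (hg : MemLp g 2 μ) (i : ι) :
    MemLp (fun x => a i x * g x) 2 μ :=
  hg.of_le_mul ((ha.continuous i).aestronglyMeasurable.mul hg.1) (ae_of_all _ fun x => by
    rw [norm_mul]
    exact mul_le_mul_of_nonneg_right (ha.abs_le i x) (norm_nonneg _))

end EllipticCoefficients

section OddStep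

variable {k l t : ℝ}

/-- A smooth odd nondecreasing function vanishing on `[-k, k]` and equal to `±1` outside `(-l, l)`,
a smooth substitute for the truncations of Stampacchia's method. -/
def oddStep (k l t : ℝ) : ℝ :=
  Real.smoothTransition ((t - k) / (l - k)) - Real.smoothTransition ((-t - k) / (l - k))

lemma contDiff_oddStep : ContDiff ℝ (⊤ : ℕ∞) (oddStep k l) :=
  (Real.smoothTransition.contDiff.comp ((contDiff_id.sub contDiff_const).div_const _)).sub
    (Real.smoothTransition.contDiff.comp ((contDiff_neg.sub contDiff_const).div_const _))

lemma oddStep_neg : oddStep k l (-t) = -oddStep k l t := by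
  simp [oddStep]

lemma oddStep_of_nonneg (hk : 0 ≤ k) (hkl : k < l) (ht : 0 ≤ t) :
    oddStep k l t = Real.smoothTransition ((t - k) / (l - k)) := by
  rw [oddStep, Real.smoothTransition.zero_of_nonpos (x := (-t - k) / (l - k)), sub_zero]
  exact div_nonpos_of_nonpos_of_nonneg (by linarith) (by linarith)

lemma abs_oddStep (hk : 0 ≤ k) (hkl : k < l) :
    |oddStep k l t| = Real.smoothTransition ((|t| - k) / (l - k)) := by
  rw [← oddStep_of_nonneg hk hkl (abs_nonneg t)]
  rcases abs_cases t with ⟨h, ht⟩ | ⟨h, ht⟩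
  · rw [h, oddStep_of_nonneg hk hkl ht, abs_of_nonneg (Real.smoothTransition.nonneg _)]
  · rw [h, ← abs_neg, ← oddStep_neg, oddStep_of_nonneg hk hkl (neg_nonneg.2 ht.le),
      abs_of_nonneg (Real.smoothTransition.nonneg _)]

lemma abs_oddStep_le_one (hk : 0 ≤ k) (hkl : k < l) : |oddStep k l t| ≤ 1 :=
  (abs_oddStep hk hkl).trans_le (Real.smoothTransition.le_one _)

lemma oddStep_of_abs_le (hk : 0 ≤ k) (hkl : k < l) (ht : |t| ≤ k) : oddStep k l t = 0 := by
  rw [← abs_eq_zero, abs_oddStep hk hkl]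
  exact Real.smoothTransition.zero_of_nonpos
    (div_nonpos_of_nonpos_of_nonneg (sub_nonpos.2 ht) (sub_nonneg.2 hkl.le))

lemma abs_oddStep_of_le (hk : 0 ≤ k) (hkl : k < l) (ht : l ≤ |t|) : |oddStep k l t| = 1 := by
  rw [abs_oddStep hk hkl]
  exact Real.smoothTransition.one_of_one_le ((one_le_div₀ (sub_pos.2 hkl)).2 (by linarith))

lemma monotone_oddStep (hkl : k < l) : Monotone (oddStep k l) := fun s t hst => by
  have : 0 ≤ l - k := sub_nonneg.2 hkl.le
  exact sub_le_sub (Real.smoothTransition.monotone (by gcongr))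
    (Real.smoothTransition.monotone (by gcongr))

lemma mul_oddStep_nonneg (hk : 0 ≤ k) (hkl : k < l) : 0 ≤ t * oddStep k l t := by
  have hzero : oddStep k l 0 = 0 := oddStep_of_abs_le hk hkl (by simpa using hk)
  rcases le_total 0 t with ht | ht
  · exact mul_nonneg ht (hzero.symm.trans_le (monotone_oddStep hkl ht))
  · exact mul_nonneg_of_nonpos_of_nonpos ht ((monotone_oddStep hkl ht).trans_eq hzero)

lemma deriv_oddStep_of_abs_lt (hk : 0 ≤ k) (hkl : k < l) (ht : |t| < k) :
    deriv (oddStep k l) t = 0 := by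
  have hzero : oddStep k l =ᶠ[𝓝 t] fun _ => 0 := by
    filter_upwards [continuous_abs.continuousAt.eventually_lt continuousAt_const ht] with s hs
    exact oddStep_of_abs_le hk hkl hs.le
  rw [hzero.deriv_eq, deriv_const]

lemma exists_lipschitzWith_smoothTransition : ∃ K, LipschitzWith K Real.smoothTransition := by
  have hsmooth : ContDiff ℝ 1 Real.smoothTransition := Real.smoothTransition.contDiff
  obtain ⟨K, hK⟩ := (hsmooth.locallyLipschitz.locallyLipschitzOn
    (s := Icc 0 1)).exists_lipschitzOnWith_of_compact isCompact_Icc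
  have hproj : (Icc 0 1).domRestrict Real.smoothTransition ∘ projIcc 0 1 zero_le_one
      = Real.smoothTransition := funext fun _ => Real.smoothTransition.projIcc
  refine ⟨K * 1, ?_⟩
  rw [← hproj]
  exact hK.to_restrict.comp (LipschitzWith.projIcc zero_le_one)

lemma exists_lipschitzWith_oddStep :
    ∃ K : ℝ≥0, ∀ k l, k < l → LipschitzWith (K / (l - k).toNNReal) (oddStep k l) := by
  obtain ⟨K, hK⟩ := exists_lipschitzWith_smoothTransition
  refine ⟨2 * K, fun k l hkl => LipschitzWith.of_dist_le_mul fun s t => ?_⟩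
  have hpos : 0 < l - k := sub_pos.2 hkl
  have hstep : ∀ s t, |Real.smoothTransition ((s - k) / (l - k))
      - Real.smoothTransition ((t - k) / (l - k))| ≤ K * (|s - t| / (l - k)) := fun s t => by
    have h := hK.dist_le_mul ((s - k) / (l - k)) ((t - k) / (l - k))
    rwa [Real.dist_eq, Real.dist_eq, ← sub_div, sub_sub_sub_cancel_right, abs_div,
      abs_of_pos hpos] at h
  rw [Real.dist_eq, Real.dist_eq, NNReal.coe_div, Real.coe_toNNReal _ hpos.le, NNReal.coe_mul]
  calc |oddStep k l s - oddStep k l t|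
      ≤ |Real.smoothTransition ((s - k) / (l - k)) - Real.smoothTransition ((t - k) / (l - k))|
        + |Real.smoothTransition ((-s - k) / (l - k))
          - Real.smoothTransition ((-t - k) / (l - k))| := by
        rw [oddStep, oddStep, sub_sub_sub_comm]
        exact abs_sub _ _
    _ ≤ K * (|s - t| / (l - k)) + K * (|-s - -t| / (l - k)) := add_le_add (hstep _ _) (hstep _ _)
    _ = 2 * K / (l - k) * |s - t| := by
        rw [neg_sub_neg, abs_sub_comm t s]
        ring

end OddStep

section Superlevel

variable {α : Type*} {m : MeasurableSpace α} {μ : Measure α} {w : α → ℝ} {β : ℝ → ℝ} {k B : ℝ}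

lemma measure_superlevel_lt_top (hw : MemLp w 2 μ) (hk : 0 < k) : μ {x | k ≤ |w x|} < ∞ := by
  have h := hw.meas_ge_lt_top' two_ne_zero ENNReal.ofNat_ne_top
    (ENNReal.coe_ne_zero.2 (Real.toNNReal_pos.2 hk).ne')
  simpa only [ENNReal.coe_le_coe, Real.toNNReal_le_iff_le_coe, coe_nnnorm,
    Real.norm_eq_abs] using h

lemma integral_comp_le_measureReal (hw : MemLp w 2 μ) (hk : 0 < k) (hβ : Measurable β)
    (hβ0 : ∀ t, 0 ≤ β t) (hβB : ∀ t, β t ≤ B) (hβk : ∀ t, |t| < k → β t = 0) :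
    Integrable (fun x => β (w x)) μ ∧ ∫ x, β (w x) ∂μ ≤ B * μ.real {x | k ≤ |w x|} := by
  set S := {x | k ≤ |w x|}
  have hS : NullMeasurableSet S μ :=
    nullMeasurableSet_le aemeasurable_const hw.1.norm.aemeasurable
  have hint : Integrable (S.indicator fun _ => B) μ :=
    (integrableOn_const (measure_superlevel_lt_top hw hk).ne).integrable_indicator₀ hS
  have hle : ∀ x, β (w x) ≤ S.indicator (fun _ => B) x := fun x => by
    by_cases hx : x ∈ S
    · exact (hβB _).trans_eq (indicator_of_mem hx fun _ => B).symm
    · rw [indicator_of_notMem hx, hβk _ (not_le.1 hx)]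
  have hβw : Integrable (fun x => β (w x)) μ := hint.mono'
    (hβ.comp_aemeasurable hw.1.aemeasurable).aestronglyMeasurable (ae_of_all _ fun x => by
      rw [Real.norm_of_nonneg (hβ0 _)]
      exact hle x)
  refine ⟨hβw, (integral_mono hβw hint hle).trans_eq ?_⟩
  rw [integral_indicator₀ hS, setIntegral_const, smul_eq_mul, mul_comm]

end Superlevel

section EnergyEstimate

variable {E ι : Type*} [NormedAddCommGroup E] [NormedSpace ℝ E] [MeasurableSpace E] [Fintype ι]
  [BorelSpace E] [FiniteDimensional ℝ E] {μ : Measure E} [μ.IsAddHaarMeasure]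
  {a : ι → E → ℝ} {w G V : E → ℝ} {dw : ι → E → ℝ} {c M : ℝ}

lemma sum_integral_deriv_mul_sq_le {e : ι → E} {θ : ℝ → ℝ} {K : ℝ≥0} {C : ℝ}
    (ha : IsUniformlyElliptic c M a) (hwc : HasCompactSupport w)
    (hdw : ∀ i, HasL2DirDeriv μ (e i) w (dw i)) (hw : MemLp w 2 μ) (hG : Integrable G μ)
    (hV : ∀ᵐ x ∂μ, 0 ≤ V x) (hVw : Integrable (fun x => V x * w x) μ)
    (hsol : SolvesDivEq μ e (fun i x => a i x * dw i x) fun x => G x - V x * w x)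
    (hθ : ContDiff ℝ (⊤ : ℕ∞) θ) (hθK : LipschitzWith K θ) (hθC : ∀ t, |θ t| ≤ C)
    (hθ0 : ∀ t, 0 ≤ t * θ t) (hmono : Monotone θ) (hzero : θ 0 = 0) :
    c * ∑ i, ∫ x, deriv θ (w x) * dw i x ^ 2 ∂μ ≤ ∫ x, G x * θ (w x) ∂μ := by
  have hθw : AEStronglyMeasurable (fun x => θ (w x)) μ :=
    hθ.continuous.comp_aestronglyMeasurable hw.1
  have hbdd : ∀ᵐ x ∂μ, ‖θ (w x)‖ ≤ C := ae_of_all _ fun x => hθC _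
  have hdθ : ∀ i, HasL2DirDeriv μ (e i) (fun x => θ (w x)) fun x => deriv θ (w x) * dw i x :=
    fun i => (hdw i).comp hθ hθK hzero
  have hterm : ∀ i, c * ∫ x, deriv θ (w x) * dw i x ^ 2 ∂μ ≤
      ∫ x, a i x * dw i x * (deriv θ (w x) * dw i x) ∂μ := fun i => by
    rw [← integral_const_mul]
    refine integral_mono_of_nonneg (ae_of_all _ fun x => ?_)
      ((ha.memLp_mul (hdw i).memLp_deriv i).integrable_mul (hdθ i).memLp_deriv)
      (ae_of_all _ fun x => ?_)
    · exact mul_nonneg ha.pos.le (mul_nonneg hmono.deriv_nonneg (sq_nonneg _))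
    · calc c * (deriv θ (w x) * dw i x ^ 2) ≤ a i x * (deriv θ (w x) * dw i x ^ 2) :=
            mul_le_mul_of_nonneg_right (ha.le i x)
              (mul_nonneg hmono.deriv_nonneg (sq_nonneg _))
        _ = a i x * dw i x * (deriv θ (w x) * dw i x) := by ring
  have hθvc : HasCompactSupport fun x => θ (w x) := hwc.comp_left hzero
  calc c * ∑ i, ∫ x, deriv θ (w x) * dw i x ^ 2 ∂μ
      ≤ ∑ i, ∫ x, a i x * dw i x * (deriv θ (w x) * dw i x) ∂μ := by
        rw [Finset.mul_sum]
        exact Finset.sum_le_sum fun i _ => hterm i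
    _ = ∫ x, (G x - V x * w x) * θ (w x) ∂μ :=
        hsol.sum_integral_mul_of_bounded (fun i => ha.memLp_mul (hdw i).memLp_deriv i)
          (hG.sub hVw) hθvc ((hθK.comp_memLp hzero hw).locallyIntegrable one_le_two)
          (fun x => hθC _) hdθ
    _ ≤ ∫ x, G x * θ (w x) ∂μ := by
        refine integral_mono_ae ((hG.sub hVw).mul_bdd hθw hbdd) (hG.mul_bdd hθw hbdd) ?_
        filter_upwards [hV] with x hx
        nlinarith [mul_nonneg hx (hθ0 (w x))]

lemma exists_integral_sq_le_sq_sum_integral_abs (μ : Measure E) [μ.IsAddHaarMeasure]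
    (b : Module.Basis ι ℝ E) (hE : Module.finrank ℝ E = 2) :
    ∃ C : ℝ≥0, ∀ (v : E → ℝ) (dv : ι → E → ℝ), HasCompactSupport v → MemLp v 2 μ →
      (∀ i, HasL2DirDeriv μ (b i) v (dv i)) → (∀ i, Integrable (dv i) μ) →
      ∫ x, v x ^ 2 ∂μ ≤ C * (∑ i, ∫ x, |dv i x| ∂μ) ^ 2 := by
  have hp : NNReal.HolderConjugate (Module.finrank ℝ E) 2 := by
    rw [hE]
    exact ⟨by norm_num, by norm_num, by norm_num⟩
  obtain ⟨C, hC⟩ := exists_eLpNorm_le_sum_eLpNorm_of_hasL2DirDeriv μ b hp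
  refine ⟨C ^ 2, fun v dv hvc hv hdv hint => ?_⟩
  have hnorm : lpNorm v 2 μ ≤ C * ∑ i, ∫ x, |dv i x| ∂μ := by
    have h := hC v dv hvc (hv.locallyIntegrable one_le_two) hdv
    have hdv1 : ∀ i, eLpNorm (dv i) 1 μ = ENNReal.ofReal (∫ x, |dv i x| ∂μ) := fun i => by
      rw [← ofReal_lpNorm (memLp_one_iff_integrable.2 (hint i)),
        lpNorm_one_eq_integral_norm (hint i).1]
      rfl
    have hnn : ∀ i, 0 ≤ ∫ x, |dv i x| ∂μ := fun i => integral_nonneg fun x => abs_nonneg _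
    rw [← ENNReal.ofReal_le_ofReal_iff (by positivity), ENNReal.ofReal_mul C.coe_nonneg,
      ENNReal.ofReal_sum_of_nonneg fun i _ => hnn i, ofReal_lpNorm hv]
    simpa only [hdv1, ENNReal.ofReal_coe_nnreal, ENNReal.coe_ofNat] using h
  rw [← sq_lpNorm_two hv, NNReal.coe_pow, ← mul_pow]
  exact pow_le_pow_left₀ lpNorm_nonneg hnorm 2

end EnergyEstimate

section Truncation

variable {α : Type*} {m : MeasurableSpace α} {μ : Measure α} {w : α → ℝ} {k l : ℝ}

lemma memLp_oddStep_comp (hw : MemLp w 2 μ) (hk : 0 ≤ k) (hkl : k < l) :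
    MemLp (fun x => oddStep k l (w x)) 2 μ := by
  obtain ⟨K, hK⟩ := exists_lipschitzWith_oddStep
  exact (hK k l hkl).comp_memLp (oddStep_of_abs_le hk hkl (by simpa using hk)) hw

lemma measureReal_superlevel_le_integral_sq_oddStep (hw : MemLp w 2 μ) (hk : 0 < k) (hkl : k < l) :
    μ.real {x | l ≤ |w x|} ≤ ∫ x, oddStep k l (w x) ^ 2 ∂μ := by
  have hint : Integrable (fun x => oddStep k l (w x) ^ 2) μ :=
    (memLp_oddStep_comp hw hk.le hkl).integrable_sq
  have hsub : {x | l ≤ |w x|} ⊆ {x | 1 ≤ oddStep k l (w x) ^ 2} := fun x hx => by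
    rw [mem_ofPred_eq, ← sq_abs, abs_oddStep_of_le hk.le hkl hx, one_pow]
  calc μ.real {x | l ≤ |w x|} ≤ 1 * μ.real {x | 1 ≤ oddStep k l (w x) ^ 2} := by
        rw [one_mul]
        refine measureReal_mono hsub (((measure_mono fun x hx => ?_).trans_lt
          (hint.measure_norm_ge_lt_top one_pos)).ne)
        exact (mem_ofPred_eq ▸ hx).trans (le_abs_self _)
    _ ≤ _ := mul_meas_ge_le_integral_of_nonneg (ae_of_all _ fun x => sq_nonneg _) hint 1

lemma lpNorm_oddStep_comp_le (hw : MemLp w 2 μ) (hk : 0 < k) (hkl : k < l) :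
    lpNorm (fun x => oddStep k l (w x)) 2 μ ≤ √(μ.real {x | k ≤ |w x|}) := by
  refine Real.le_sqrt_of_sq_le ?_
  rw [sq_lpNorm_two (memLp_oddStep_comp hw hk.le hkl)]
  simpa only [one_mul] using (integral_comp_le_measureReal (β := fun t => oddStep k l t ^ 2) hw hk
    (contDiff_oddStep.continuous.pow 2).measurable (fun t => sq_nonneg _)
    (fun t => (sq_le_one_iff_abs_le_one _).2 (abs_oddStep_le_one hk.le hkl))
    (fun t ht => by simp only [oddStep_of_abs_le hk.le hkl ht.le, ne_eq, OfNat.ofNat_ne_zero,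
      not_false_eq_true, zero_pow])).2

end Truncation

section Boundedness

variable {E ι : Type*} [NormedAddCommGroup E] [NormedSpace ℝ E] [MeasurableSpace E] [Fintype ι]
  [BorelSpace E] [FiniteDimensional ℝ E] {μ : Measure E} [μ.IsAddHaarMeasure]
  {a : ι → E → ℝ} {w G V : E → ℝ} {dw : ι → E → ℝ} {c M : ℝ}

lemma exists_integral_sq_comp_le (μ : Measure E) [μ.IsAddHaarMeasure]
    (b : Module.Basis ι ℝ E) (hE : Module.finrank ℝ E = 2) :
    ∃ C : ℝ≥0, ∀ (w : E → ℝ) (dw : ι → E → ℝ) (θ : ℝ → ℝ) (K : ℝ≥0), HasCompactSupport w →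
      MemLp w 2 μ → (∀ i, HasL2DirDeriv μ (b i) w (dw i)) → ContDiff ℝ (⊤ : ℕ∞) θ →
      LipschitzWith K θ → Monotone θ → θ 0 = 0 → Integrable (fun x => deriv θ (w x)) μ →
      ∫ x, θ (w x) ^ 2 ∂μ ≤
        C * ((∫ x, deriv θ (w x) ∂μ) * ∑ i, ∫ x, deriv θ (w x) * dw i x ^ 2 ∂μ) := by
  obtain ⟨C, hC⟩ := exists_integral_sq_le_sq_sum_integral_abs μ b hE
  refine ⟨C * Fintype.card ι, fun w dw θ K hwc hw hdw hθ hθK hmono hzero hint => ?_⟩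
  have hdθ : ∀ i, HasL2DirDeriv μ (b i) (fun x => θ (w x)) fun x => deriv θ (w x) * dw i x :=
    fun i => (hdw i).comp hθ hθK hzero
  have hsq : ∀ i, Integrable (fun x => deriv θ (w x) * dw i x ^ 2) μ := fun i =>
    ((hdθ i).memLp_deriv.integrable_mul (hdw i).memLp_deriv).congr
      (ae_of_all _ fun x => by simp only [Pi.mul_apply]; ring)
  have habs : ∀ i x, |deriv θ (w x) * dw i x| = deriv θ (w x) * |dw i x| := fun i x => by
    rw [abs_mul, abs_of_nonneg hmono.deriv_nonneg]
  have hone : ∀ i, Integrable (fun x => deriv θ (w x) * dw i x) μ := fun i =>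
    (hint.add (hsq i)).mono' (hdθ i).memLp_deriv.1 (ae_of_all _ fun x => by
      have h0 : 0 ≤ deriv θ (w x) := hmono.deriv_nonneg
      rw [Real.norm_eq_abs, habs, Pi.add_apply, ← sq_abs (dw i x)]
      nlinarith [sq_nonneg (|dw i x| - 1)])
  have hcauchy : ∀ i, (∫ x, |deriv θ (w x) * dw i x| ∂μ) ^ 2 ≤
      (∫ x, deriv θ (w x) ∂μ) * ∫ x, deriv θ (w x) * dw i x ^ 2 ∂μ := fun i => by
    simpa only [habs, Real.norm_eq_abs, sq_abs] using sq_integral_mul_le_integral_mul_sq hint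
      (fun x => hmono.deriv_nonneg) (hdw i).memLp_deriv.1.norm
      (by simpa only [Real.norm_eq_abs, sq_abs] using hsq i)
  calc ∫ x, θ (w x) ^ 2 ∂μ ≤ C * (∑ i, ∫ x, |deriv θ (w x) * dw i x| ∂μ) ^ 2 :=
        hC _ _ (hwc.comp_left hzero) (hθK.comp_memLp hzero hw) hdθ hone
    _ ≤ C * (Fintype.card ι * ∑ i, (∫ x, |deriv θ (w x) * dw i x| ∂μ) ^ 2) := by
        gcongr
        exact sq_sum_le_card_mul_sum_sq
    _ ≤ _ := by
        rw [NNReal.coe_mul, NNReal.coe_natCast, mul_assoc]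
        gcongr
        rw [Finset.mul_sum]
        exact Finset.sum_le_sum fun i _ => hcauchy i

lemma sum_integral_deriv_oddStep_mul_sq_le {e : ι → E} {k l : ℝ} (ha : IsUniformlyElliptic c M a)
    (hwc : HasCompactSupport w) (hw : MemLp w 2 μ) (hdw : ∀ i, HasL2DirDeriv μ (e i) w (dw i))
    (hG : MemLp G 2 μ) (hG1 : Integrable G μ) (hV : ∀ᵐ x ∂μ, 0 ≤ V x)
    (hVw : Integrable (fun x => V x * w x) μ)
    (hsol : SolvesDivEq μ e (fun i x => a i x * dw i x) fun x => G x - V x * w x)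
    (hk : 0 < k) (hkl : k < l) :
    c * ∑ i, ∫ x, deriv (oddStep k l) (w x) * dw i x ^ 2 ∂μ ≤
      lpNorm G 2 μ * √(μ.real {x | k ≤ |w x|}) := by
  obtain ⟨K, hK⟩ := exists_lipschitzWith_oddStep
  calc c * ∑ i, ∫ x, deriv (oddStep k l) (w x) * dw i x ^ 2 ∂μ
      ≤ ∫ x, G x * oddStep k l (w x) ∂μ :=
        sum_integral_deriv_mul_sq_le ha hwc hdw hw hG1 hV hVw hsol contDiff_oddStep (hK k l hkl)
          (fun t => abs_oddStep_le_one hk.le hkl) (fun t => mul_oddStep_nonneg hk.le hkl)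
          (monotone_oddStep hkl) (oddStep_of_abs_le hk.le hkl (by simpa using hk.le))
    _ ≤ lpNorm G 2 μ * lpNorm (fun x => oddStep k l (w x)) 2 μ :=
        (le_abs_self _).trans
          (abs_integral_mul_le_lpNorm hG (memLp_oddStep_comp hw hk.le hkl))
    _ ≤ lpNorm G 2 μ * √(μ.real {x | k ≤ |w x|}) :=
        mul_le_mul_of_nonneg_left (lpNorm_oddStep_comp_le hw hk hkl) lpNorm_nonneg

lemma exists_superlevel_recursion {b : Module.Basis ι ℝ E} (hE : Module.finrank ℝ E = 2)
    (ha : IsUniformlyElliptic c M a) (hwc : HasCompactSupport w) (hw : MemLp w 2 μ)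
    (hdw : ∀ i, HasL2DirDeriv μ (b i) w (dw i)) (hG : MemLp G 2 μ) (hG1 : Integrable G μ)
    (hV : ∀ᵐ x ∂μ, 0 ≤ V x) (hVw : Integrable (fun x => V x * w x) μ)
    (hsol : SolvesDivEq μ b (fun i x => a i x * dw i x) fun x => G x - V x * w x) :
    ∃ D, 0 ≤ D ∧ ∀ k l, 0 < k → k < l → (l - k) * μ.real {x | l ≤ |w x|} ≤
      D * (μ.real {x | k ≤ |w x|} * √(μ.real {x | k ≤ |w x|})) := by
  obtain ⟨K, hK⟩ := exists_lipschitzWith_oddStep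
  obtain ⟨C, hC⟩ := exists_integral_sq_comp_le μ b hE
  have hc := ha.pos
  have hGnn : 0 ≤ lpNorm G 2 μ := lpNorm_nonneg
  refine ⟨C * K * lpNorm G 2 μ / c, by positivity, fun k l hk hkl => ?_⟩
  have hlk : 0 < l - k := sub_pos.2 hkl
  have hzero : oddStep k l 0 = 0 := oddStep_of_abs_le hk.le hkl (by simpa using hk.le)
  have hmono : Monotone (oddStep k l) := monotone_oddStep hkl
  set m := μ.real {x | k ≤ |w x|}
  obtain ⟨hint, hderiv⟩ :=
    integral_comp_le_measureReal (β := deriv (oddStep k l)) (B := K / (l - k))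
    hw hk (measurable_deriv _) (fun t => hmono.deriv_nonneg)
    (fun t => by simpa only [NNReal.coe_div, Real.coe_toNNReal _ hlk.le] using
      (le_abs_self _).trans (norm_deriv_le_of_lipschitz (x₀ := t) (hK k l hkl)))
    (fun t ht => deriv_oddStep_of_abs_lt hk.le hkl ht)
  have henergy : ∑ i, ∫ x, deriv (oddStep k l) (w x) * dw i x ^ 2 ∂μ ≤ lpNorm G 2 μ * √m / c :=
    (le_div_iff₀' hc).2
      (sum_integral_deriv_oddStep_mul_sq_le ha hwc hw hdw hG hG1 hV hVw hsol hk hkl)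
  calc (l - k) * μ.real {x | l ≤ |w x|} ≤ (l - k) * ∫ x, oddStep k l (w x) ^ 2 ∂μ := by
        gcongr
        exact measureReal_superlevel_le_integral_sq_oddStep hw hk hkl
    _ ≤ (l - k) * (C * (K / (l - k) * m * (lpNorm G 2 μ * √m / c))) := by
        refine mul_le_mul_of_nonneg_left ((hC w dw _ _ hwc hw hdw contDiff_oddStep (hK k l hkl)
          hmono hzero hint).trans ?_) hlk.le
        gcongr
        exact Finset.sum_nonneg fun i _ => integral_nonneg fun x =>
          mul_nonneg hmono.deriv_nonneg (sq_nonneg _)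
    _ = _ := by
        field_simp

theorem exists_ae_abs_le_of_solvesDivEq {b : Module.Basis ι ℝ E} (hE : Module.finrank ℝ E = 2)
    (ha : IsUniformlyElliptic c M a) (hwc : HasCompactSupport w) (hw : MemLp w 2 μ)
    (hdw : ∀ i, HasL2DirDeriv μ (b i) w (dw i)) (hG : MemLp G 2 μ) (hG1 : Integrable G μ)
    (hV : ∀ᵐ x ∂μ, 0 ≤ V x) (hVw : Integrable (fun x => V x * w x) μ)
    (hsol : SolvesDivEq μ b (fun i x => a i x * dw i x) fun x => G x - V x * w x) :
    ∃ C, ∀ᵐ x ∂μ, |w x| ≤ C := by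
  obtain ⟨D, hD, hrec⟩ := exists_superlevel_recursion hE ha hwc hw hdw hG hG1 hV hVw hsol
  obtain ⟨k, hk, hzero⟩ := exists_eq_zero_of_stampacchia (k₀ := 1)
    (m := fun k => μ.real {x | k ≤ |w x|}) (fun k => measureReal_nonneg)
    (fun k hk l hl hkl => measureReal_mono (fun x hx => hkl.trans hx)
      (measure_superlevel_lt_top hw (one_pos.trans_le hk)).ne) hD
    (fun k l hk hkl => hrec k l (one_pos.trans_le hk) hkl)
  refine ⟨k, ?_⟩
  have hnull : μ {x | k ≤ |w x|} = 0 :=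
    (measureReal_eq_zero_iff (measure_superlevel_lt_top hw (one_pos.trans_le hk)).ne).1 hzero
  filter_upwards [measure_eq_zero_iff_ae_notMem.1 hnull] with x hx
  exact (not_le.1 hx).le

end Boundedness

section SecondDerivatives

variable {E ι : Type*} [NormedAddCommGroup E] [NormedSpace ℝ E] [MeasurableSpace E]
  [BorelSpace E] {μ : Measure E} [μ.IsAddHaarMeasure]
  {e : ι → E} {a dw : ι → E → ℝ} {w F : E → ℝ} {c M : ℝ} {L : ℝ≥0}

lemma mul_sq_lpNorm_diffQuot_le {α g : E → ℝ} (hα : ∀ x, c ≤ α x) (hαL : LipschitzWith L α)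
    (hg : MemLp g 2 μ) (hαg : MemLp (fun x => α x * g x) 2 μ) (h : ℝ) (e : E) :
    c * lpNorm (diffQuot h e g) 2 μ ^ 2 ≤
      ∫ x, diffQuot h e (fun y => α y * g y) x * diffQuot h e g x ∂μ
        + L * ‖e‖ * (lpNorm g 2 μ * lpNorm (diffQuot h e g) 2 μ) := by
  set d := diffQuot h e g
  have hd : MemLp d 2 μ := memLp_diffQuot hg h e
  have hpt : ∀ x, c * d x ^ 2 ≤
      diffQuot h e (fun y => α y * g y) x * d x + L * ‖e‖ * (|g x| * |d x|) := fun x => by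
    have hcross : -(diffQuot h e α x * (g x * d x)) ≤ L * ‖e‖ * (|g x| * |d x|) := by
      rw [← abs_mul]
      refine (neg_le_abs _).trans ?_
      rw [abs_mul]
      exact mul_le_mul_of_nonneg_right (abs_diffQuot_le hαL h e x) (abs_nonneg _)
    rw [diffQuot_mul]
    linarith [mul_le_mul_of_nonneg_right (hα (x + h • e)) (sq_nonneg (d x))]
  have hgd : Integrable (fun x => |g x| * |d x|) μ := hg.norm.integrable_mul hd.norm
  have hαgd : Integrable (fun x => diffQuot h e (fun y => α y * g y) x * d x) μ :=
    (memLp_diffQuot hαg h e).integrable_mul hd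
  calc c * lpNorm d 2 μ ^ 2 = ∫ x, c * d x ^ 2 ∂μ := by rw [sq_lpNorm_two hd, integral_const_mul]
    _ ≤ ∫ x, (diffQuot h e (fun y => α y * g y) x * d x + L * ‖e‖ * (|g x| * |d x|)) ∂μ :=
      integral_mono (hd.integrable_sq.const_mul c) (hαgd.add (hgd.const_mul _)) hpt
    _ = ∫ x, diffQuot h e (fun y => α y * g y) x * d x ∂μ + L * ‖e‖ * ∫ x, |g x| * |d x| ∂μ := by
      rw [integral_add hαgd (hgd.const_mul _), integral_const_mul]
    _ ≤ _ := by
      gcongr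
      rw [← lpNorm_fun_abs hg.1, ← lpNorm_fun_abs hd.1]
      exact (le_abs_self _).trans (abs_integral_mul_le_lpNorm hg.norm hd.norm)

variable [FiniteDimensional ℝ E]

lemma HasL2DirDeriv.lpNorm_diffQuot_le {e : E} {g : E → ℝ} (hw : HasL2DirDeriv μ e w g) (h : ℝ) :
    lpNorm (_root_.diffQuot h e w) 2 μ ≤ lpNorm g 2 μ := by
  rw [← ENNReal.ofReal_le_ofReal_iff lpNorm_nonneg, ofReal_lpNorm (memLp_diffQuot hw.memLp h e),
    ofReal_lpNorm hw.memLp_deriv]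
  exact hw.eLpNorm_diffQuot_le h

variable [Fintype ι]

-- The equation is tested with the second difference quotient `D₋ₕ Dₕ w`.
lemma SolvesDivEq.mul_sum_sq_lpNorm_diffQuot_le (ha : IsUniformlyElliptic c M a)
    (haL : ∀ i, LipschitzWith L (a i)) (hwc : HasCompactSupport w) (hw : MemLp w 2 μ)
    (hdw : ∀ i, HasL2DirDeriv μ (e i) w (dw i)) (hF : MemLp F 2 μ)
    (hsol : SolvesDivEq μ e (fun i x => a i x * dw i x) F) (h : ℝ) (e' : E) :
    c * ∑ i, lpNorm (diffQuot h e' (dw i)) 2 μ ^ 2 ≤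
      lpNorm F 2 μ * lpNorm (diffQuot (-h) e' (diffQuot h e' w)) 2 μ
        + ∑ i, L * ‖e'‖ * (lpNorm (dw i) 2 μ * lpNorm (diffQuot h e' (dw i)) 2 μ) := by
  have hq : ∀ i, MemLp (fun x => a i x * dw i x) 2 μ :=
    fun i => ha.memLp_mul (hdw i).memLp_deriv i
  have hDD : MemLp (diffQuot (-h) e' (diffQuot h e' w)) 2 μ :=
    memLp_diffQuot (memLp_diffQuot hw h e') (-h) e'
  have htest := hsol.sum_integral_mul_of_memLp hq hF
    (hasCompactSupport_diffQuot (hasCompactSupport_diffQuot hwc h e') (-h) e') hDD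
    fun i => ((hdw i).diffQuot h e').diffQuot (-h) e'
  calc c * ∑ i, lpNorm (diffQuot h e' (dw i)) 2 μ ^ 2
      ≤ ∑ i, (∫ x, diffQuot h e' (fun y => a i y * dw i y) x * diffQuot h e' (dw i) x ∂μ
          + L * ‖e'‖ * (lpNorm (dw i) 2 μ * lpNorm (diffQuot h e' (dw i)) 2 μ)) := by
        rw [Finset.mul_sum]
        exact Finset.sum_le_sum fun i _ =>
          mul_sq_lpNorm_diffQuot_le (ha.le i) (haL i) (hdw i).memLp_deriv (hq i) h e'
    _ = -∫ x, F x * diffQuot (-h) e' (diffQuot h e' w) x ∂μ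
          + ∑ i, L * ‖e'‖ * (lpNorm (dw i) 2 μ * lpNorm (diffQuot h e' (dw i)) 2 μ) := by
        rw [Finset.sum_add_distrib, ← htest, ← Finset.sum_neg_distrib]
        simp only [integral_diffQuot_mul (hq _) (memLp_diffQuot (hdw _).memLp_deriv h e')]
    _ ≤ _ := by
        gcongr
        exact (neg_le_abs _).trans (abs_integral_mul_le_lpNorm hF hDD)

theorem SolvesDivEq.exists_hasL2DirDeriv_deriv (ha : IsUniformlyElliptic c M a)
    (haL : ∀ i, LipschitzWith L (a i)) (hwc : HasCompactSupport w)
    (hdw : ∀ i, HasL2DirDeriv μ (e i) w (dw i)) (hF : MemLp F 2 μ)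
    (hsol : SolvesDivEq μ e (fun i x => a i x * dw i x) F) (i j : ι) :
    ∃ g, HasL2DirDeriv μ (e j) (dw i) g := by
  set B := lpNorm F 2 μ + ∑ i, L * ‖e j‖ * lpNorm (dw i) 2 μ
  refine exists_hasL2DirDeriv_of_lpNorm_diffQuot_le (M := B / c) (hdw i).memLp_deriv fun h => ?_
  let N : ι → ℝ := fun i => lpNorm (diffQuot h (e j) (dw i)) 2 μ
  set S := √(∑ i, N i ^ 2)
  have hN : ∀ i, N i ≤ S := fun i => Real.le_sqrt_of_sq_le
    (Finset.single_le_sum (fun i _ => sq_nonneg (N i)) (Finset.mem_univ i))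
  have hsecond : lpNorm (diffQuot (-h) (e j) (diffQuot h (e j) w)) 2 μ ≤ S :=
    (((hdw j).diffQuot h (e j)).lpNorm_diffQuot_le (-h)).trans (hN j)
  have hest : c * S ^ 2 ≤ B * S := by
    rw [Real.sq_sqrt (Finset.sum_nonneg fun i _ => sq_nonneg _)]
    calc c * ∑ i, N i ^ 2 ≤ _ :=
          hsol.mul_sum_sq_lpNorm_diffQuot_le ha haL hwc (hdw j).memLp hdw hF h (e j)
      _ ≤ lpNorm F 2 μ * S + ∑ i, L * ‖e j‖ * (lpNorm (dw i) 2 μ * S) := by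
          gcongr with i
          · exact lpNorm_nonneg
          · exact lpNorm_nonneg
          · exact hN i
      _ = B * S := by
          rw [add_mul, Finset.sum_mul]
          simp only [mul_assoc]
  refine (hN i).trans ((le_div_iff₀' ha.pos).2 ?_)
  have hB : 0 ≤ B := add_nonneg lpNorm_nonneg
    (Finset.sum_nonneg fun i _ => mul_nonneg (by positivity) lpNorm_nonneg)
  have hS0 : 0 ≤ S := Real.sqrt_nonneg _
  rcases hS0.eq_or_lt with hS | hS
  · rwa [← hS, mul_zero]
  · exact le_of_mul_le_mul_right (by linarith) hS

end SecondDerivatives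

section MixedDerivative

variable {z : ℝ × ℝ → ℝ} {x x' y y' : ℝ}

lemma hasDerivAt_fst_dirDeriv (hz : ContDiff ℝ (⊤ : ℕ∞) z) (x y : ℝ) :
    HasDerivAt (fun s => z (s, y)) (dirDeriv (1, 0) z (x, y)) x :=
  (hz.differentiable (by simp) (x, y)).hasFDerivAt.comp_hasDerivAt x
    ((hasDerivAt_id x).prodMk (hasDerivAt_const x y))

lemma hasDerivAt_snd_dirDeriv (hz : ContDiff ℝ (⊤ : ℕ∞) z) (x y : ℝ) :
    HasDerivAt (fun t => z (x, t)) (dirDeriv (0, 1) z (x, y)) y :=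
  (hz.differentiable (by simp) (x, y)).hasFDerivAt.comp_hasDerivAt y
    ((hasDerivAt_const y x).prodMk (hasDerivAt_id y))

lemma setIntegral_dirDeriv_dirDeriv_eq (hz : ContDiff ℝ (⊤ : ℕ∞) z) (hx : x ≤ x') (hy : y ≤ y') :
    ∫ p in Ioc x x' ×ˢ Ioc y y', dirDeriv (1, 0) (dirDeriv (0, 1) z) p =
      z (x', y') - z (x, y') - (z (x', y) - z (x, y)) := by
  have hz₁ : ContDiff ℝ (⊤ : ℕ∞) (dirDeriv (0, 1) z) := contDiff_dirDeriv hz _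
  have hz₂ : Continuous (dirDeriv (1, 0) (dirDeriv (0, 1) z)) :=
    (contDiff_dirDeriv hz₁ _).continuous
  have hinner : ∀ t, ∫ s in x..x', dirDeriv (1, 0) (dirDeriv (0, 1) z) (s, t) =
      dirDeriv (0, 1) z (x', t) - dirDeriv (0, 1) z (x, t) := fun t =>
    intervalIntegral.integral_eq_sub_of_hasDerivAt (fun s _ => hasDerivAt_fst_dirDeriv hz₁ s t)
      ((hz₂.comp (by fun_prop)).intervalIntegrable _ _)
  have houter : ∫ t in y..y', (dirDeriv (0, 1) z (x', t) - dirDeriv (0, 1) z (x, t)) =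
      z (x', y') - z (x, y') - (z (x', y) - z (x, y)) :=
    intervalIntegral.integral_eq_sub_of_hasDerivAt
      (fun t _ => (hasDerivAt_snd_dirDeriv hz x' t).sub (hasDerivAt_snd_dirDeriv hz x t))
      (((hz₁.continuous.comp (by fun_prop)).sub
        (hz₁.continuous.comp (by fun_prop))).intervalIntegrable _ _)
  have hint : IntegrableOn (dirDeriv (1, 0) (dirDeriv (0, 1) z)) (Ioc x x' ×ˢ Ioc y y')
      (volume.prod volume) :=
    (hz₂.continuousOn.integrableOn_compact (isCompact_Icc.prod isCompact_Icc)).mono_set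
      (prod_mono Ioc_subset_Icc_self Ioc_subset_Icc_self)
  rw [← houter, Measure.volume_eq_prod, ← Measure.prod_restrict, integral_prod_symm _
    (by rwa [Measure.prod_restrict]), intervalIntegral.integral_of_le hy]
  simp only [← hinner, intervalIntegral.integral_of_le hx]

lemma sq_rectangle_increment_le {N : ℝ} (hz : IsTestFun z)
    (hN : lpNorm (dirDeriv (1, 0) (dirDeriv (0, 1) z)) 2 volume ≤ N) (hx : x ≤ x') (hy : y ≤ y') :
    (z (x', y') - z (x, y') - (z (x', y) - z (x, y))) ^ 2 ≤ (x' - x) * (y' - y) * N ^ 2 := by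
  set S : Set (ℝ × ℝ) := Ioc x x' ×ˢ Ioc y y'
  set k := dirDeriv (1, 0) (dirDeriv (0, 1) z)
  have hk : MemLp k 2 volume := ((hz.dirDeriv _).dirDeriv _).memLp 2
  have hS : volume S = ENNReal.ofReal ((x' - x) * (y' - y)) := by
    rw [Measure.volume_eq_prod, Measure.prod_prod, Real.volume_Ioc, Real.volume_Ioc,
      ENNReal.ofReal_mul (sub_nonneg.2 hx)]
  have harea : 0 ≤ (x' - x) * (y' - y) := mul_nonneg (sub_nonneg.2 hx) (sub_nonneg.2 hy)
  have hcauchy := sq_integral_mul_le_integral_mul_sq (μ := volume.restrict S) (b := fun _ => 1)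
    (integrableOn_const (by rw [hS]; exact ENNReal.ofReal_ne_top)) (fun _ => zero_le_one)
    hk.1.restrict (by simpa only [one_mul] using hk.integrable_sq.restrict)
  simp only [one_mul] at hcauchy
  calc (z (x', y') - z (x, y') - (z (x', y) - z (x, y))) ^ 2 = (∫ p in S, k p) ^ 2 := by
        rw [setIntegral_dirDeriv_dirDeriv_eq hz.contDiff hx hy]
    _ ≤ (∫ _ in S, 1) * ∫ p in S, k p ^ 2 := hcauchy
    _ ≤ (x' - x) * (y' - y) * N ^ 2 := by
        rw [setIntegral_const, measureReal_def, hS, ENNReal.toReal_ofReal harea, smul_eq_mul,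
          mul_one]
        gcongr
        calc ∫ p in S, k p ^ 2 ≤ ∫ p, k p ^ 2 :=
              setIntegral_le_integral hk.integrable_sq (ae_of_all _ fun _ => sq_nonneg _)
          _ = lpNorm k 2 volume ^ 2 := (sq_lpNorm_two hk).symm
          _ ≤ N ^ 2 := pow_le_pow_left₀ lpNorm_nonneg hN 2

end MixedDerivative

section HolderContinuity

lemma isOpen_Omega : IsOpen Omega := isOpen_Ioo.prod isOpen_Ioo

lemma holderWith_half_of_abs_sub_le {X : Type*} [PseudoMetricSpace X] {f : X → ℝ} {C : ℝ≥0}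
    (h : ∀ p q, |f p - f q| ≤ C * √(dist p q)) : HolderWith C (1 / 2) f := fun p q => by
  have hr : ((1 / 2 : ℝ≥0) : ℝ) = 1 / 2 := by norm_num
  rw [edist_dist, edist_dist, ENNReal.ofReal_rpow_of_nonneg dist_nonneg (NNReal.coe_nonneg _),
    ← ENNReal.ofReal_coe_nnreal, ← ENNReal.ofReal_mul C.coe_nonneg, hr, ← Real.sqrt_eq_rpow,
    Real.dist_eq]
  exact ENNReal.ofReal_le_ofReal (h p q)

variable {z : ℝ × ℝ → ℝ} {N : ℝ≥0} {x x' y y' : ℝ}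

lemma abs_sub_fst_le (hz : IsTestFun z) (hzΩ : ∀ p ∉ Omega, z p = 0)
    (hN : lpNorm (dirDeriv (1, 0) (dirDeriv (0, 1) z)) 2 volume ≤ N) (x x' y : ℝ) :
    |z (x, y) - z (x', y)| ≤ N * √|x - x'| := by
  wlog hx : x' ≤ x generalizing x x'
  · rw [abs_sub_comm, abs_sub_comm x]
    exact this x' x (le_of_not_ge hx)
  by_cases hy : y ∈ Ioo (0 : ℝ) 1
  · have hrect := sq_rectangle_increment_le hz hN hx hy.1.le
    have hbottom : ∀ s, z (s, 0) = 0 := fun s => hzΩ _ fun hs => lt_irrefl _ hs.2.1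
    rw [hbottom, hbottom, sub_zero, sub_zero, sub_zero] at hrect
    rw [abs_of_nonneg (sub_nonneg.2 hx), mul_comm]
    refine abs_le_of_sq_le_sq (hrect.trans ?_) (by positivity)
    rw [mul_pow, Real.sq_sqrt (sub_nonneg.2 hx)]
    gcongr
    exact mul_le_of_le_one_right (sub_nonneg.2 hx) hy.2.le
  · rw [hzΩ _ fun h => hy h.2, hzΩ _ fun h => hy h.2, sub_zero, abs_zero]
    positivity

lemma abs_sub_snd_le (hz : IsTestFun z) (hzΩ : ∀ p ∉ Omega, z p = 0)
    (hN : lpNorm (dirDeriv (1, 0) (dirDeriv (0, 1) z)) 2 volume ≤ N) (x y y' : ℝ) :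
    |z (x, y) - z (x, y')| ≤ N * √|y - y'| := by
  wlog hy : y' ≤ y generalizing y y'
  · rw [abs_sub_comm, abs_sub_comm y]
    exact this y' y (le_of_not_ge hy)
  by_cases hx : x ∈ Ioo (0 : ℝ) 1
  · have hrect := sq_rectangle_increment_le hz hN hx.1.le hy
    have hleft : ∀ t, z (0, t) = 0 := fun t => hzΩ _ fun ht => lt_irrefl _ ht.1.1
    rw [hleft, hleft, sub_zero, sub_zero, sub_zero] at hrect
    rw [abs_of_nonneg (sub_nonneg.2 hy), mul_comm]
    refine abs_le_of_sq_le_sq (hrect.trans ?_) (by positivity)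
    rw [mul_pow, Real.sq_sqrt (sub_nonneg.2 hy)]
    gcongr
    exact mul_le_of_le_one_left (sub_nonneg.2 hy) hx.2.le
  · rw [hzΩ _ fun h => hx h.1, hzΩ _ fun h => hx h.1, sub_zero, abs_zero]
    positivity

lemma IsTestFun.holderWith_half (hz : IsTestFun z) (hzΩ : ∀ p ∉ Omega, z p = 0)
    (hN : lpNorm (_root_.dirDeriv (1, 0) (_root_.dirDeriv (0, 1) z)) 2 volume ≤ N) :
    HolderWith (2 * N) (1 / 2) z :=
  holderWith_half_of_abs_sub_le fun p q =>
    calc |z p - z q| ≤ |z (p.1, p.2) - z (q.1, p.2)| + |z (q.1, p.2) - z (q.1, q.2)| :=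
          abs_sub_le _ _ _
      _ ≤ N * √(dist p.1 q.1) + N * √(dist p.2 q.2) :=
          add_le_add (abs_sub_fst_le hz hzΩ hN _ _ _) (abs_sub_snd_le hz hzΩ hN _ _ _)
      _ ≤ N * √(dist p q) + N * √(dist p q) := by
          gcongr
          · exact le_max_left _ _
          · exact le_max_right _ _
      _ = (2 * N : ℝ≥0) * √(dist p q) := by
          push_cast
          ring

theorem exists_holderWith_half_of_hasL2DirDeriv {w g k : ℝ × ℝ → ℝ} (hwc : HasCompactSupport w)
    (hwΩ : tsupport w ⊆ Omega) (hg : HasL2DirDeriv volume (0, 1) w g)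
    (hk : HasL2DirDeriv volume (1, 0) g k) :
    ∃ (C : ℝ≥0) (W : ℝ × ℝ → ℝ), HolderWith C (1 / 2) W ∧ W =ᵐ[volume] w := by
  have hloc : LocallyIntegrable w volume := hg.memLp.locallyIntegrable one_le_two
  obtain ⟨n₀, hn₀⟩ :=
    eventually_atTop.1 (eventually_tsupport_mollify_subset (μ := volume) hwc isOpen_Omega hwΩ)
  have hnorm : ∀ n, lpNorm (dirDeriv (1, 0) (dirDeriv (0, 1) (mollify volume n w))) 2 volume ≤
      (lpNorm k 2 volume).toNNReal := fun n => by
    have hkn : MemLp (mollify volume n k) 2 volume := (tendstoL2_mollify hk.memLp_deriv).memLp n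
    rw [hg.dirDeriv_mollify, hk.dirDeriv_mollify, Real.coe_toNNReal _ lpNorm_nonneg,
      ← ENNReal.ofReal_le_ofReal_iff lpNorm_nonneg, ofReal_lpNorm hkn,
      ofReal_lpNorm hk.memLp_deriv]
    exact eLpNorm_mollify_le hk.memLp_deriv.1 one_le_two ENNReal.ofNat_ne_top n
  refine ⟨_, exists_holderWith_of_ae_tendsto (μ := volume)
    (fun n => (isTestFun_mollify hloc hwc (n + n₀)).holderWith_half
      (fun p hp => image_eq_zero_of_notMem_tsupport fun h => hp (hn₀ _ (Nat.le_add_left _ _) h))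
      (hnorm _)) ?_⟩
  filter_upwards [ae_tendsto_mollify hloc] with p hp
  exact hp.comp (tendsto_add_atTop_nat n₀)

end HolderContinuity

section CutOff

variable {E ι : Type*} [NormedAddCommGroup E] [NormedSpace ℝ E] {s : Set E} {ψ a : E → ℝ}

lemma exists_isTestFun_eqOn_one [FiniteDimensional ℝ E] {K : Set E} (hK : IsCompact K)
    (hs : IsOpen s) (hKs : K ⊆ s) :
    ∃ χ : E → ℝ, IsTestFun χ ∧ tsupport χ ⊆ s ∧ EqOn χ 1 K ∧ ∀ x, χ x ∈ Icc 0 1 := by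
  obtain ⟨L, hL, hKL, hLs⟩ := exists_compact_between hK hs hKs
  obtain ⟨χ, hχ1, hχ0, hχ⟩ := exists_contMDiffMap_one_nhds_of_subset_interior
    (n := (⊤ : ℕ∞)) (modelWithCornersSelf ℝ E) hK.isClosed hKL
  have hχL : tsupport χ ⊆ L :=
    closure_minimal (fun x hx => by_contra fun hxL => hx (hχ0 x hxL)) hL.isClosed
  exact ⟨χ, ⟨χ.contMDiff.contDiff, hL.of_isClosed_subset (isClosed_tsupport _) hχL⟩,
    hχL.trans hLs, fun x hx => hχ1.self_of_nhdsSet x hx, hχ⟩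

lemma IsTestFun.mul_of_contDiffOn (hψ : IsTestFun ψ) (hψs : tsupport ψ ⊆ s) (hs : IsOpen s)
    (ha : ContDiffOn ℝ (⊤ : ℕ∞) a s) : IsTestFun fun x => ψ x * a x :=
  ⟨(contMDiff_of_tsupport fun _ hx => (hψ.contDiff.contDiffAt.mul
    (ha.contDiffAt (hs.mem_nhds (hψs (tsupport_mul_subset_left hx))))).contMDiffAt).contDiff,
    hψ.hasCompactSupport.mul_right⟩

lemma dirDeriv_eq_zero_of_eqOn_one (hs : IsOpen s) (h : EqOn ψ 1 s) {x : E} (hx : x ∈ s) (e : E) :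
    dirDeriv e ψ x = 0 := by
  have hψ : ψ =ᶠ[𝓝 x] fun _ => 1 := h.eventuallyEq_of_mem (hs.mem_nhds hx)
  simp only [dirDeriv, hψ.fderiv_eq, fderiv_fun_const, Pi.zero_apply, zero_apply]

/-- The coefficient is `1 + ζ (a - 1)` with a cut-off `ζ`, a convex combination of `1` and `a`. -/
lemma exists_isTestFun_one_add_eqOn [FiniteDimensional ℝ E] {K : Set E} (hK : IsCompact K)
    (hs : IsOpen s) (hKs : K ⊆ s) (ha : ContDiffOn ℝ (⊤ : ℕ∞) a s) (hpos : ∀ x ∈ s, 0 < a x) :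
    ∃ β, IsTestFun β ∧ (∀ x, 0 < 1 + β x) ∧ EqOn (fun x => 1 + β x) a K := by
  obtain ⟨ζ, hζ, hζs, hζK, hζ01⟩ := exists_isTestFun_eqOn_one hK hs hKs
  refine ⟨fun x => ζ x * (a x - 1), hζ.mul_of_contDiffOn hζs hs (ha.sub contDiffOn_const),
    fun x => ?_, fun x hx => by simp [hζK hx]⟩
  by_cases hx : x ∈ s
  · rcases (hζ01 x).1.eq_or_lt with hζx | hζx
    · simp [← hζx]
    · linarith [mul_pos hζx (hpos x hx), (hζ01 x).2, mul_sub_one (ζ x) (a x)]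
  · simp [image_eq_zero_of_notMem_tsupport fun h => hx (hζs h)]

lemma IsTestFun.exists_forall_le_one_add {β : E → ℝ} (hβ : IsTestFun β) (hpos : ∀ x, 0 < 1 + β x) :
    ∃ c, 0 < c ∧ ∀ x, c ≤ 1 + β x := by
  obtain ⟨x₀, hx₀⟩ :=
    hβ.contDiff.continuous.exists_forall_le_of_hasCompactSupport hβ.hasCompactSupport
  exact ⟨1 + β x₀, hpos x₀, fun x => by linarith [hx₀ x]⟩

lemma exists_isUniformlyElliptic_eqOn [FiniteDimensional ℝ E] [Finite ι] {K : Set E}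
    (hK : IsCompact K) (hs : IsOpen s) (hKs : K ⊆ s) {a : ι → E → ℝ}
    (ha : ∀ i, ContDiffOn ℝ (⊤ : ℕ∞) (a i) s) (hpos : ∀ i, ∀ x ∈ s, 0 < a i x) :
    ∃ c M A, ∃ L : ℝ≥0, IsUniformlyElliptic c M A ∧ (∀ i, LipschitzWith L (A i)) ∧
      ∀ i, EqOn (A i) (a i) K := by
  choose β hβ hβpos hβK using fun i => exists_isTestFun_one_add_eqOn hK hs hKs (ha i) (hpos i)
  choose c hc hcβ using fun i => (hβ i).exists_forall_le_one_add (hβpos i)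
  choose M hM using fun i => (hβ i).exists_bound
  choose L hL using fun i => (hβ i).exists_lipschitzWith
  obtain ⟨c₀, hc₀, hc₀c⟩ : ∃ c₀, 0 < c₀ ∧ ∀ i, c₀ ≤ c i := by
    rcases isEmpty_or_nonempty ι with _ | _
    · exact ⟨1, one_pos, isEmptyElim⟩
    · obtain ⟨i₀, hi₀⟩ := Finite.exists_min c
      exact ⟨c i₀, hc i₀, hi₀⟩
  obtain ⟨M₀, hM₀⟩ := Finite.exists_le M
  obtain ⟨L₀, hL₀⟩ := Finite.exists_le L
  refine ⟨c₀, 1 + M₀, fun i x => 1 + β i x, L₀,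
    ⟨hc₀, fun i x => (hc₀c i).trans (hcβ i x), fun i x => ?_,
      fun i => continuous_const.add (hβ i).contDiff.continuous⟩,
    fun i => ((LipschitzWith.const 1).add (hL i)).weaken (by simpa using hL₀ i), hβK⟩
  calc |1 + β i x| ≤ |1| + |β i x| := abs_add_le _ _
    _ ≤ 1 + M₀ := by rw [abs_one]; gcongr; exact (hM i x).trans (hM₀ i)

end CutOff

section LocalSolutions

variable {E ι : Type*} [NormedAddCommGroup E] [NormedSpace ℝ E] {s : Set E} {e : E}
  {u g a ω χ φ ψ : E → ℝ}

/-- The term `2 a ∂_eχ ∂_eu + ∂_e(a ∂_eχ) u` of the commutator of `∂_e (a ∂_e ·)` with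
multiplication by `χ`, applied to `u`, where `g` stands for `∂_e u`. -/
def commutatorTerm (e : E) (χ a u g : E → ℝ) (x : E) : ℝ :=
  2 * (dirDeriv e χ x * a x * g x) + dirDeriv e (fun y => dirDeriv e χ y * a y) x * u x

lemma commutatorTerm_eq_zero_of_notMem_tsupport {x : E} (hx : x ∉ tsupport χ) (e : E) :
    commutatorTerm e χ a u g x = 0 := by
  have hdχ : x ∉ tsupport (dirDeriv e χ) := fun h => hx (tsupport_dirDeriv_subset e h)
  have hb : x ∉ tsupport (dirDeriv e fun y => dirDeriv e χ y * a y) := fun h =>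
    hdχ (tsupport_mul_subset_left (tsupport_dirDeriv_subset e h))
  simp only [commutatorTerm, image_eq_zero_of_notMem_tsupport hdχ,
    image_eq_zero_of_notMem_tsupport hb, zero_mul, mul_zero, add_zero]

/-- If `-∑ i, ∂ᵢ(aᵢ ∂ᵢu) = f` with `g i = ∂ᵢu`, this is the right-hand side of the equation for
`χ u`, for a cut-off `χ`. -/
def cutOffSource [Fintype ι] (e : ι → E) (χ : E → ℝ) (a g : ι → E → ℝ) (u f : E → ℝ) (x : E) : ℝ :=
  χ x * f x - ∑ i, commutatorTerm (e i) χ (a i) u (g i) x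

lemma hasCompactSupport_cutOffSource [Fintype ι] (hχ : HasCompactSupport χ) (e : ι → E)
    (a g : ι → E → ℝ) (u f : E → ℝ) : HasCompactSupport (cutOffSource e χ a g u f) :=
  HasCompactSupport.intro hχ fun x hx => by
    simp only [cutOffSource, image_eq_zero_of_notMem_tsupport hx,
      commutatorTerm_eq_zero_of_notMem_tsupport hx, zero_mul, Finset.sum_const_zero, sub_zero]

variable [MeasurableSpace E] {μ : Measure E}

/-- Membership in `L²_loc(s)`, tested by multiplication with smooth cut-offs. -/
def MemL2Loc (μ : Measure E) (s : Set E) (u : E → ℝ) : Prop :=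
  ∀ ψ, IsTestFun ψ → tsupport ψ ⊆ s → MemLp (fun x => ψ x * u x) 2 μ

/-- `u ∈ L²_loc(s)` has the distributional derivative `∂_e u = g ∈ L²_loc(s)` on `s`. -/
structure HasL2LocDirDeriv (μ : Measure E) (s : Set E) (e : E) (u g : E → ℝ) : Prop where
  memL2Loc : MemL2Loc μ s u
  memL2Loc_deriv : MemL2Loc μ s g
  integral_mul_dirDeriv : ∀ φ, IsTestFun φ → tsupport φ ⊆ s →
    ∫ x, u x * dirDeriv e φ x ∂μ = -∫ x, g x * φ x ∂μ

lemma HasL2LocDirDeriv.memLp_commutatorTerm (h : HasL2LocDirDeriv μ s e u g) (hχ : IsTestFun χ)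
    (hχs : tsupport χ ⊆ s) (hs : IsOpen s) (ha : ContDiffOn ℝ (⊤ : ℕ∞) a s) :
    MemLp (commutatorTerm e χ a u g) 2 μ := by
  have hdχs := (tsupport_dirDeriv_subset (φ := χ) e).trans hχs
  have hb : IsTestFun fun y => dirDeriv e χ y * a y :=
    (hχ.dirDeriv e).mul_of_contDiffOn hdχs hs ha
  have hbs : tsupport (fun y => dirDeriv e χ y * a y) ⊆ s := tsupport_mul_subset_left.trans hdχs
  exact ((h.memL2Loc_deriv _ hb hbs).const_mul 2).add
    (h.memL2Loc _ (hb.dirDeriv e) ((tsupport_dirDeriv_subset e).trans hbs))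

/-- The equation `-div q = F` in the sense of distributions on `s`, the vector field `q` having
the component `q i` along `e i`. -/
def SolvesDivEqOn [Fintype ι] (μ : Measure E) (s : Set E) (e : ι → E) (q : ι → E → ℝ)
    (F : E → ℝ) : Prop :=
  ∀ φ, IsTestFun φ → tsupport φ ⊆ s →
    ∑ i, ∫ x, q i x * dirDeriv (e i) φ x ∂μ = ∫ x, F x * φ x ∂μ

variable [BorelSpace E]

lemma IsTestFun.memLp_mul (hψ : IsTestFun ψ) (hg : MemLp g 2 μ) :
    MemLp (fun x => ψ x * g x) 2 μ := by
  obtain ⟨C, hC⟩ := hψ.exists_bound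
  refine hg.of_le_mul (c := C) (hψ.contDiff.continuous.aestronglyMeasurable.mul hg.1)
    (ae_of_all _ fun x => ?_)
  rw [norm_mul]
  exact mul_le_mul_of_nonneg_right (hC x) (norm_nonneg _)

lemma memL2Loc_of_memLp_mul (hs : IsOpen s) (hω : ContDiffOn ℝ (⊤ : ℕ∞) ω s)
    (hω0 : ∀ x ∈ s, ω x ≠ 0) (h : MemLp (fun x => ω x * g x) 2 (μ.restrict s)) :
    MemL2Loc μ s g := fun ψ hψ hψs => by
  have hψω := (hψ.mul_of_contDiffOn hψs hs (hω.inv hω0)).memLp_mul h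
  rw [← memLp_indicator_iff_restrict hs.measurableSet] at hψω
  refine hψω.ae_eq (ae_of_all _ fun x => ?_)
  by_cases hx : x ∈ s
  · simp only [indicator_of_mem hx, Pi.inv_apply, mul_assoc, inv_mul_cancel_left₀ (hω0 x hx)]
  · simp only [indicator_of_notMem hx, image_eq_zero_of_notMem_tsupport fun h => hx (hψs h),
      zero_mul]

lemma memL2Loc_of_memLp (hs : IsOpen s) (h : MemLp g 2 (μ.restrict s)) : MemL2Loc μ s g :=
  memL2Loc_of_memLp_mul (ω := fun _ => 1) hs contDiffOn_const (fun _ _ => one_ne_zero)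
    (by simpa only [one_mul] using h)

variable [IsFiniteMeasureOnCompacts μ]

lemma integral_mul_dirDeriv_mul (hχ : ContDiff ℝ (⊤ : ℕ∞) χ) (hχu : MemLp (fun x => χ x * u x) 2 μ)
    (hdχu : MemLp (fun x => dirDeriv e χ x * u x) 2 μ) (hφ : IsTestFun φ) :
    ∫ x, u x * dirDeriv e (fun y => χ y * φ y) x ∂μ =
      ∫ x, χ x * u x * dirDeriv e φ x ∂μ + ∫ x, dirDeriv e χ x * u x * φ x ∂μ := by
  refine Eq.trans (integral_congr_ae (ae_of_all _ fun x => ?_)) (integral_add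
    (hχu.integrable_mul ((hφ.dirDeriv e).memLp 2)) (hdχu.integrable_mul (hφ.memLp 2)))
  simp only [dirDeriv_mul hχ hφ.contDiff]
  ring

lemma HasL2LocDirDeriv.mul_isTestFun (h : HasL2LocDirDeriv μ s e u g) (hχ : IsTestFun χ)
    (hχs : tsupport χ ⊆ s) :
    HasL2DirDeriv μ e (fun x => χ x * u x) fun x => χ x * g x + dirDeriv e χ x * u x := by
  have hdχu : MemLp (fun x => dirDeriv e χ x * u x) 2 μ :=
    h.memL2Loc _ (hχ.dirDeriv e) ((tsupport_dirDeriv_subset e).trans hχs)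
  have hχu := h.memL2Loc χ hχ hχs
  have hχg := h.memL2Loc_deriv χ hχ hχs
  refine ⟨hχu, hχg.add hdχu, fun φ hφ => ?_⟩
  have hφ2 : MemLp φ 2 μ := hφ.memLp 2
  have hleibniz := h.integral_mul_dirDeriv _ (hχ.mul_right hφ.contDiff)
    (tsupport_mul_subset_left.trans hχs)
  rw [integral_mul_dirDeriv_mul hχ.contDiff hχu hdχu hφ] at hleibniz
  rw [integral_add_mul hχg hdχu hφ2]
  simp only [mul_left_comm (g _), ← mul_assoc] at hleibniz
  linarith

/-- The term `b u` with `b = a ∂_eχ`, produced by the cut-off, is integrated by parts once more. -/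
lemma HasL2LocDirDeriv.integral_mul_isTestFun (h : HasL2LocDirDeriv μ s e u g) (hχ : IsTestFun χ)
    (hχs : tsupport χ ⊆ s) (hs : IsOpen s) (ha : ContDiffOn ℝ (⊤ : ℕ∞) a s) (hφ : IsTestFun φ) :
    ∫ x, a x * (χ x * g x + dirDeriv e χ x * u x) * dirDeriv e φ x ∂μ =
      ∫ x, a x * g x * dirDeriv e (fun y => χ y * φ y) x ∂μ -
        ∫ x, commutatorTerm e χ a u g x * φ x ∂μ := by
  set b := fun y => dirDeriv e χ y * a y with hbdef
  have hdχs := (tsupport_dirDeriv_subset (φ := χ) e).trans hχs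
  have hb : IsTestFun b := (hχ.dirDeriv e).mul_of_contDiffOn hdχs hs ha
  have hbs : tsupport b ⊆ s := tsupport_mul_subset_left.trans hdχs
  have hbu := h.mul_isTestFun hb hbs
  have hχag : MemLp (fun x => χ x * (a x * g x)) 2 μ := by
    simpa only [mul_assoc] using h.memL2Loc_deriv _ (hχ.mul_of_contDiffOn hχs hs ha)
      (tsupport_mul_subset_left.trans hχs)
  have hbg : MemLp (fun x => dirDeriv e χ x * (a x * g x)) 2 μ := by
    simpa only [hbdef, mul_assoc] using h.memL2Loc_deriv b hb hbs
  have hφ2 : MemLp φ 2 μ := hφ.memLp 2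
  calc ∫ x, a x * (χ x * g x + dirDeriv e χ x * u x) * dirDeriv e φ x ∂μ
      = ∫ x, (χ x * (a x * g x) + b x * u x) * dirDeriv e φ x ∂μ := by
        congr 1 with x
        simp only [hbdef]
        ring
    _ = ∫ x, χ x * (a x * g x) * dirDeriv e φ x ∂μ
          - ∫ x, (b x * g x + dirDeriv e b x * u x) * φ x ∂μ := by
        rw [integral_add_mul hχag hbu.memLp ((hφ.dirDeriv e).memLp 2),
          hbu.integral_mul_dirDeriv φ hφ, sub_eq_add_neg]
    _ = ∫ x, χ x * (a x * g x) * dirDeriv e φ x ∂μ + ∫ x, dirDeriv e χ x * (a x * g x) * φ x ∂μ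
          - ∫ x, (dirDeriv e χ x * (a x * g x) + (b x * g x + dirDeriv e b x * u x)) * φ x ∂μ := by
        rw [integral_add_mul hbg hbu.memLp_deriv hφ2]
        ring
    _ = _ := by
        rw [← integral_mul_dirDeriv_mul hχ.contDiff hχag hbg hφ]
        congr 2 with x
        simp only [commutatorTerm, hbdef]
        ring

lemma SolvesDivEqOn.mul_isTestFun [Fintype ι] {e : ι → E} {a g : ι → E → ℝ} {F : E → ℝ}
    (hsol : SolvesDivEqOn μ s e (fun i x => a i x * g i x) F)
    (hu : ∀ i, HasL2LocDirDeriv μ s (e i) u (g i)) (hs : IsOpen s)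
    (ha : ∀ i, ContDiffOn ℝ (⊤ : ℕ∞) (a i) s) (hχ : IsTestFun χ) (hχs : tsupport χ ⊆ s)
    (hF : Integrable (fun x => χ x * F x) μ) :
    SolvesDivEq μ e (fun i x => a i x * (χ x * g i x + dirDeriv (e i) χ x * u x))
      (cutOffSource e χ a g u F) := by
  intro φ hφ
  have hχφ := hsol _ (hχ.mul_right hφ.contDiff) (tsupport_mul_subset_left.trans hχs)
  have hcomm : ∀ i, MemLp (commutatorTerm (e i) χ (a i) u (g i)) 2 μ := fun i =>
    (hu i).memLp_commutatorTerm hχ hχs hs (ha i)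
  have hcommφ : ∀ i, Integrable (fun x => commutatorTerm (e i) χ (a i) u (g i) x * φ x) μ :=
    fun i => (hcomm i).integrable_mul (hφ.memLp 2)
  calc ∑ i, ∫ x, a i x * (χ x * g i x + dirDeriv (e i) χ x * u x) * dirDeriv (e i) φ x ∂μ
      = ∫ x, F x * (χ x * φ x) ∂μ - ∑ i, ∫ x, commutatorTerm (e i) χ (a i) u (g i) x * φ x ∂μ := by
        simp only [(hu _).integral_mul_isTestFun hχ hχs hs (ha _) hφ, Finset.sum_sub_distrib, hχφ]
    _ = ∫ x, cutOffSource e χ a g u F x * φ x ∂μ := by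
        obtain ⟨C, hC⟩ := hφ.exists_bound
        have hFφ : Integrable (fun x => F x * (χ x * φ x)) μ := by
          simpa only [mul_assoc, mul_left_comm (F _)] using
            hF.mul_bdd (c := C) hφ.contDiff.continuous.aestronglyMeasurable (ae_of_all _ hC)
        rw [← integral_finsetSum _ fun i _ => hcommφ i,
          ← integral_sub hFφ (integrable_finsetSum _ fun i _ => hcommφ i)]
        congr 1 with x
        rw [cutOffSource, sub_mul, Finset.sum_mul]
        ring

end LocalSolutions

section LocalRegularity

variable {E ι : Type*} [NormedAddCommGroup E] [MeasurableSpace E] {μ : Measure E} {s : Set E}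

lemma integrable_of_hasCompactSupport_of_memLp [LocallyCompactSpace E]
    [OpensMeasurableSpace E] [IsFiniteMeasureOnCompacts μ] {G : E → ℝ} (hGc : HasCompactSupport G)
    (hG : MemLp G 2 μ) : Integrable G μ :=
  (integrableOn_iff_integrable_of_support_subset (subset_tsupport G)).1
    ((hG.locallyIntegrable one_le_two).integrableOn_isCompact hGc)

variable [NormedSpace ℝ E] [FiniteDimensional ℝ E] [BorelSpace E]

lemma exists_memLp_potential_eqOn {V : E → ℝ} {K : Set E} (hK : IsCompact K) (hs : IsOpen s)
    (hKs : K ⊆ s) (hV : MemL2Loc μ s V) (hVpos : ∀ᵐ x ∂μ.restrict s, 0 ≤ V x) :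
    ∃ U, MemLp U 2 μ ∧ (∀ᵐ x ∂μ, 0 ≤ U x) ∧ EqOn U V K := by
  obtain ⟨ζ, hζ, hζs, hζK, hζ01⟩ := exists_isTestFun_eqOn_one hK hs hKs
  refine ⟨fun x => ζ x * V x, hV ζ hζ hζs, ?_, fun x hx => by simp [hζK hx]⟩
  filter_upwards [(ae_restrict_iff' hs.measurableSet).1 hVpos] with x hx
  by_cases hxs : x ∈ s
  · exact mul_nonneg (hζ01 x).1 (hx hxs)
  · rw [image_eq_zero_of_notMem_tsupport fun h => hxs (hζs h), zero_mul]

variable [Fintype ι] [μ.IsAddHaarMeasure]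
  {b : Module.Basis ι ℝ E} {a : ι → E → ℝ}

lemma SolvesDivEq.exists_hasL2DirDeriv_deriv_of_potential {c M : ℝ} {L : ℝ≥0} {w U G : E → ℝ}
    {dw : ι → E → ℝ} (hsol : SolvesDivEq μ b (fun i x => a i x * dw i x) fun x => G x - U x * w x)
    (hE : Module.finrank ℝ E = 2) (ha : IsUniformlyElliptic c M a)
    (haL : ∀ i, LipschitzWith L (a i)) (hwc : HasCompactSupport w) (hw : MemLp w 2 μ)
    (hdw : ∀ i, HasL2DirDeriv μ (b i) w (dw i)) (hGc : HasCompactSupport G) (hG : MemLp G 2 μ)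
    (hU : MemLp U 2 μ) (hU0 : ∀ᵐ x ∂μ, 0 ≤ U x) (i j : ι) :
    ∃ h, HasL2DirDeriv μ (b j) (dw i) h := by
  obtain ⟨C, hC⟩ := exists_ae_abs_le_of_solvesDivEq hE ha hwc hw hdw hG
    (integrable_of_hasCompactSupport_of_memLp hGc hG) hU0 (hU.integrable_mul hw) hsol
  have hUw : MemLp (fun x => U x * w x) 2 μ := by
    refine hU.of_le_mul (c := C) (hU.1.mul hw.1) (hC.mono fun x hx => ?_)
    rw [norm_mul, mul_comm]
    exact mul_le_mul_of_nonneg_right hx (norm_nonneg _)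
  exact SolvesDivEq.exists_hasL2DirDeriv_deriv ha haL hwc hdw (hG.sub hUw) hsol i j

theorem SolvesDivEqOn.exists_hasL2DirDeriv_mul_isTestFun {g : ι → E → ℝ} {u V f χ : E → ℝ}
    (hsol : SolvesDivEqOn μ s b (fun i x => a i x * g i x) fun x => f x - V x * u x)
    (hE : Module.finrank ℝ E = 2) (hs : IsOpen s) (ha : ∀ i, ContDiffOn ℝ (⊤ : ℕ∞) (a i) s)
    (hpos : ∀ i, ∀ x ∈ s, 0 < a i x) (hu : ∀ i, HasL2LocDirDeriv μ s (b i) u (g i))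
    (hf : MemL2Loc μ s f) (hV : MemL2Loc μ s V) (hVpos : ∀ᵐ x ∂μ.restrict s, 0 ≤ V x)
    (hχ : IsTestFun χ) (hχs : tsupport χ ⊆ s) (i j : ι) :
    ∃ h, HasL2DirDeriv μ (b j) (fun x => χ x * g i x + dirDeriv (b i) χ x * u x) h := by
  have hK : IsCompact (tsupport χ) := hχ.hasCompactSupport
  obtain ⟨c, M, A, L, hA, hAL, hAa⟩ := exists_isUniformlyElliptic_eqOn hK hs hχs ha hpos
  obtain ⟨U, hU, hU0, hUV⟩ := exists_memLp_potential_eqOn hK hs hχs hV hVpos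
  have hχu : MemLp (fun x => χ x * u x) 2 μ := (hu i).memL2Loc χ hχ hχs
  have hχf : MemLp (fun x => χ x * f x) 2 μ := hf χ hχ hχs
  have hχV : ∀ x, χ x * (V x * u x) = U x * (χ x * u x) := fun x => by
    by_cases hx : x ∈ tsupport χ
    · rw [hUV hx, mul_left_comm]
    · simp only [image_eq_zero_of_notMem_tsupport hx, zero_mul, mul_zero]
  have hχa : ∀ k x, a k x * (χ x * g k x + dirDeriv (b k) χ x * u x) =
      A k x * (χ x * g k x + dirDeriv (b k) χ x * u x) := fun k x => by
    by_cases hx : x ∈ tsupport χ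
    · rw [hAa k hx]
    · simp only [image_eq_zero_of_notMem_tsupport hx, zero_mul, mul_zero, zero_add,
        image_eq_zero_of_notMem_tsupport fun h => hx (tsupport_dirDeriv_subset (b k) h)]
  have hsource : ∀ x, cutOffSource b χ a g u (fun x => f x - V x * u x) x =
      cutOffSource b χ a g u f x - U x * (χ x * u x) := fun x => by
    rw [cutOffSource, cutOffSource, mul_sub, hχV, sub_right_comm]
  have hχF : Integrable (fun x => χ x * (f x - V x * u x)) μ := by
    simp only [mul_sub, hχV]
    exact (integrable_of_hasCompactSupport_of_memLp hχ.hasCompactSupport.mul_right hχf).sub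
      (hU.integrable_mul hχu)
  have hcut := hsol.mul_isTestFun hu hs ha hχ hχs hχF
  simp only [hχa, funext hsource] at hcut
  exact hcut.exists_hasL2DirDeriv_deriv_of_potential hE hA hAL hχ.hasCompactSupport.mul_right hχu
    (fun k => (hu k).mul_isTestFun hχ hχs) (hasCompactSupport_cutOffSource hχ.hasCompactSupport ..)
    (hχf.sub (memLp_finsetSum _ fun k _ => (hu k).memLp_commutatorTerm hχ hχs hs (ha k))) hU hU0
    i j

end LocalRegularity

section Restriction

lemma eqOn_mul_add_dirDeriv_mul {E : Type*} [NormedAddCommGroup E] [NormedSpace ℝ E] {s : Set E}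
    {u g χ : E → ℝ} (hs : IsOpen s) (hχ : EqOn χ 1 s) (e : E) :
    EqOn (fun x => χ x * g x + dirDeriv e χ x * u x) g s := fun x hx => by
  simp only [dirDeriv_eq_zero_of_eqOn_one hs hχ hx, hχ hx, Pi.one_apply, one_mul, zero_mul,
    add_zero]

lemma memLp_restrict_of_eqOn {α : Type*} [MeasurableSpace α] {μ : Measure α} {s : Set α}
    {w g : α → ℝ} (hw : MemLp w 2 μ) (hs : MeasurableSet s) (hwg : EqOn w g s) :
    MemLp g 2 (μ.restrict s) :=
  (hw.restrict s).ae_eq (ae_restrict_of_forall_mem hs hwg)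

variable {E : Type*} [NormedAddCommGroup E] [MeasurableSpace E] {μ : Measure E} {s : Set E} {e : E}
  {g w h a b φ ω : E → ℝ}

lemma locallyIntegrableOn_of_memLp_restrict [OpensMeasurableSpace E] [IsLocallyFiniteMeasure μ]
    (hg : MemLp g 2 (μ.restrict s)) : LocallyIntegrableOn g s μ :=
  locallyIntegrableOn_of_locallyIntegrable_restrict (hg.locallyIntegrable one_le_two)

lemma setIntegral_mul_eq_integral_of_tsupport_subset (hφs : tsupport φ ⊆ s) :
    ∫ x in s, g x * φ x ∂μ = ∫ x, g x * φ x ∂μ :=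
  setIntegral_eq_integral_of_forall_compl_eq_zero fun _ hx => by
    rw [image_eq_zero_of_notMem_tsupport fun h => hx (hφs h), mul_zero]

variable [NormedSpace ℝ E]

lemma setIntegral_mul_dirDeriv_eq_integral (hφs : tsupport φ ⊆ s) (e : E) :
    ∫ x in s, g x * dirDeriv e φ x ∂μ = ∫ x, g x * dirDeriv e φ x ∂μ :=
  setIntegral_mul_eq_integral_of_tsupport_subset ((tsupport_dirDeriv_subset e).trans hφs)

lemma HasL2DirDeriv.setIntegral_mul_dirDeriv_of_eqOn (hw : HasL2DirDeriv μ e w h)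
    (hs : MeasurableSet s) (hwg : EqOn w g s) (hφ : IsTestFun φ) (hφs : tsupport φ ⊆ s) :
    ∫ x in s, g x * dirDeriv e φ x ∂μ = -∫ x in s, h x * φ x ∂μ := by
  have hgw : ∫ x in s, g x * dirDeriv e φ x ∂μ = ∫ x in s, w x * dirDeriv e φ x ∂μ :=
    setIntegral_congr_fun hs fun x hx => by simp only [hwg hx]
  rw [hgw, setIntegral_mul_dirDeriv_eq_integral hφs,
    setIntegral_mul_eq_integral_of_tsupport_subset hφs, hw.integral_mul_dirDeriv φ hφ]

variable [BorelSpace E]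

lemma IsTestFun.integrable_mul_mul (hφ : IsTestFun φ) (ha : MemLp a 2 μ) (hb : MemLp b 2 μ) :
    Integrable (fun x => a x * b x * φ x) μ := by
  obtain ⟨C, hC⟩ := hφ.exists_bound
  exact (ha.integrable_mul hb).mul_bdd (c := C) hφ.contDiff.continuous.aestronglyMeasurable
    (ae_of_all _ hC)

lemma IsTestFun.memLp_mul_dirDeriv [IsFiniteMeasureOnCompacts μ] (hφ : IsTestFun φ)
    (hφs : tsupport φ ⊆ s) (hs : IsOpen s) (hω : ContDiffOn ℝ (⊤ : ℕ∞) ω s) (e : E) :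
    MemLp (fun x => ω x * _root_.dirDeriv e φ x) 2 (μ.restrict s) := by
  simpa only [mul_comm] using (((hφ.dirDeriv e).mul_of_contDiffOn
    ((tsupport_dirDeriv_subset e).trans hφs) hs hω).memLp 2).restrict s

end Restriction

section UnitSquare

variable {α₁ α₂ : ℝ} {V f u gx gy : ℝ × ℝ → ℝ} {φ χ g w h : ℝ × ℝ → ℝ} {s : Set (ℝ × ℝ)}

lemma IsTestOn.isTestFun (hφ : IsTestOn s φ) : IsTestFun φ := ⟨hφ.1, hφ.2.1⟩

lemma IsTestFun.isTestOn (hφ : IsTestFun φ) (hφs : tsupport φ ⊆ s) : IsTestOn s φ :=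
  ⟨hφ.contDiff, hφ.hasCompactSupport, hφs⟩

lemma HasWeakDerivXOn.hasL2LocDirDeriv (hu : HasWeakDerivXOn s u g)
    (hus : MemL2Loc volume s u) (hgs : MemL2Loc volume s g) :
    HasL2LocDirDeriv volume s (1, 0) u g where
  memL2Loc := hus
  memL2Loc_deriv := hgs
  integral_mul_dirDeriv φ hφ hφs := by
    rw [← setIntegral_mul_dirDeriv_eq_integral hφs,
      ← setIntegral_mul_eq_integral_of_tsupport_subset hφs]
    exact hu.2.2 φ (hφ.isTestOn hφs)

lemma HasWeakDerivYOn.hasL2LocDirDeriv (hu : HasWeakDerivYOn s u g)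
    (hus : MemL2Loc volume s u) (hgs : MemL2Loc volume s g) :
    HasL2LocDirDeriv volume s (0, 1) u g where
  memL2Loc := hus
  memL2Loc_deriv := hgs
  integral_mul_dirDeriv φ hφ hφs := by
    rw [← setIntegral_mul_dirDeriv_eq_integral hφs,
      ← setIntegral_mul_eq_integral_of_tsupport_subset hφs]
    exact hu.2.2 φ (hφ.isTestOn hφs)

lemma HasL2DirDeriv.hasWeakDerivXOn_of_eqOn (hw : HasL2DirDeriv volume (1, 0) w h)
    (hs : MeasurableSet s) (hwg : EqOn w g s) : HasWeakDerivXOn s g h :=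
  ⟨locallyIntegrableOn_of_memLp_restrict (memLp_restrict_of_eqOn hw.memLp hs hwg),
    locallyIntegrableOn_of_memLp_restrict (hw.memLp_deriv.restrict s),
    fun _ hφ => hw.setIntegral_mul_dirDeriv_of_eqOn hs hwg hφ.isTestFun hφ.2.2⟩

lemma HasL2DirDeriv.hasWeakDerivYOn_of_eqOn (hw : HasL2DirDeriv volume (0, 1) w h)
    (hs : MeasurableSet s) (hwg : EqOn w g s) : HasWeakDerivYOn s g h :=
  ⟨locallyIntegrableOn_of_memLp_restrict (memLp_restrict_of_eqOn hw.memLp hs hwg),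
    locallyIntegrableOn_of_memLp_restrict (hw.memLp_deriv.restrict s),
    fun _ hφ => hw.setIntegral_mul_dirDeriv_of_eqOn hs hwg hφ.isTestFun hφ.2.2⟩

lemma contDiffOn_snd_rpow (α : ℝ) :
    ContDiffOn ℝ (⊤ : ℕ∞) (fun p : ℝ × ℝ => p.2 ^ α) Omega :=
  contDiffOn_snd.rpow_const_of_ne fun _ hp => hp.2.1.ne'

lemma contDiffOn_fst_rpow (α : ℝ) :
    ContDiffOn ℝ (⊤ : ℕ∞) (fun p : ℝ × ℝ => p.1 ^ α) Omega :=
  contDiffOn_fst.rpow_const_of_ne fun _ hp => hp.1.1.ne'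

/-- The coefficients `y^{2α₁}` and `x^{2α₂}` of the degenerate operator. -/
def degenerateCoeff (α₁ α₂ : ℝ) : Fin 2 → ℝ × ℝ → ℝ :=
  ![fun p => (p.2 ^ α₁) ^ 2, fun p => (p.1 ^ α₂) ^ 2]

lemma contDiffOn_degenerateCoeff (α₁ α₂ : ℝ) (i : Fin 2) :
    ContDiffOn ℝ (⊤ : ℕ∞) (degenerateCoeff α₁ α₂ i) Omega := by
  fin_cases i
  · exact (contDiffOn_snd_rpow α₁).pow 2
  · exact (contDiffOn_fst_rpow α₂).pow 2

lemma degenerateCoeff_pos (α₁ α₂ : ℝ) (i : Fin 2) : ∀ p ∈ Omega, 0 < degenerateCoeff α₁ α₂ i p := by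
  intro p hp
  fin_cases i
  · exact pow_pos (Real.rpow_pos_of_pos hp.2.1 α₁) 2
  · exact pow_pos (Real.rpow_pos_of_pos hp.1.1 α₂) 2

lemma MemH1.hasL2LocDirDeriv (hu : MemH1 α₁ α₂ u gx gy) (i : Fin 2) :
    HasL2LocDirDeriv volume Omega (Module.Basis.finTwoProd ℝ i) u (![gx, gy] i) := by
  have hu2 : MemL2Loc volume Omega u := memL2Loc_of_memLp isOpen_Omega hu.memL2
  fin_cases i
  · simpa using hu.weakX.hasL2LocDirDeriv hu2 (memL2Loc_of_memLp_mul isOpen_Omega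
      (contDiffOn_snd_rpow α₁) (fun p hp => (Real.rpow_pos_of_pos hp.2.1 α₁).ne') hu.wgx)
  · simpa using hu.weakY.hasL2LocDirDeriv hu2 (memL2Loc_of_memLp_mul isOpen_Omega
      (contDiffOn_fst_rpow α₂) (fun p hp => (Real.rpow_pos_of_pos hp.1.1 α₂).ne') hu.wgy)

lemma MemH1.aForm_isTest (hu : MemH1 α₁ α₂ u gx gy) (hV : MemLp V 2 (volume.restrict Omega))
    (hφ : IsTest φ) :
    aForm α₁ α₂ V u gx gy φ (pdx φ) (pdy φ) =
      (∫ p in Omega, (p.2 ^ α₁) ^ 2 * gx p * dirDeriv (1, 0) φ p) +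
        (∫ p in Omega, (p.1 ^ α₂) ^ 2 * gy p * dirDeriv (0, 1) φ p) +
          ∫ p in Omega, V p * u p * φ p := by
  have hx : Integrable (fun p => p.2 ^ α₁ * gx p * (p.2 ^ α₁ * dirDeriv (1, 0) φ p))
      (volume.restrict Omega) :=
    hu.wgx.integrable_mul
      (hφ.isTestFun.memLp_mul_dirDeriv hφ.2.2 isOpen_Omega (contDiffOn_snd_rpow α₁) (1, 0))
  have hy : Integrable (fun p => p.1 ^ α₂ * gy p * (p.1 ^ α₂ * dirDeriv (0, 1) φ p))
      (volume.restrict Omega) :=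
    hu.wgy.integrable_mul
      (hφ.isTestFun.memLp_mul_dirDeriv hφ.2.2 isOpen_Omega (contDiffOn_fst_rpow α₂) (0, 1))
  refine (integral_add (hx.add hy) (hφ.isTestFun.integrable_mul_mul hV hu.memL2)).trans ?_
  rw [integral_add' hx hy]
  congr 3 <;> ext p <;> ring

lemma MemH1.solvesDivEqOn (hu : MemH1 α₁ α₂ u gx gy) (hV : MemLp V 2 (volume.restrict Omega))
    (hf : MemLp f 2 (volume.restrict Omega))
    (hsol : ∀ φ, IsTest φ →
      aForm α₁ α₂ V u gx gy φ (pdx φ) (pdy φ) = ∫ p in Omega, f p * φ p) :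
    SolvesDivEqOn volume Omega (Module.Basis.finTwoProd ℝ)
      (fun i p => degenerateCoeff α₁ α₂ i p * ![gx, gy] i p) fun p => f p - V p * u p := by
  intro φ hφ hφΩ
  have hφT : IsTest φ := hφ.isTestOn hφΩ
  have hfφ : Integrable (fun p => f p * φ p) (volume.restrict Omega) :=
    hf.integrable_mul ((hφ.memLp 2).restrict Omega)
  have heq := hsol φ hφT
  rw [hu.aForm_isTest hV hφT, ← eq_sub_iff_add_eq,
    ← integral_sub hfφ (hφ.integrable_mul_mul hV hu.memL2)] at heq
  simp only [← sub_mul] at heq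
  simpa [Fin.sum_univ_two, degenerateCoeff, setIntegral_mul_dirDeriv_eq_integral hφΩ,
    setIntegral_mul_eq_integral_of_tsupport_subset hφΩ] using heq

lemma isCompact_closure_of_subset_Omega (hs : closure s ⊆ Omega) : IsCompact (closure s) :=
  (isCompact_Icc.prod isCompact_Icc).of_isClosed_subset isClosed_closure
    (hs.trans (prod_mono Ioo_subset_Icc_self Ioo_subset_Icc_self))

lemma MemH1.exists_hasL2DirDeriv_mul_isTestFun (hV : MemLp V 2 (volume.restrict Omega))
    (hVpos : ∀ᵐ p ∂(volume.restrict Omega), 0 ≤ V p) (hf : MemLp f 2 (volume.restrict Omega))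
    (hu : MemH1 α₁ α₂ u gx gy)
    (hsol : ∀ φ, IsTest φ →
      aForm α₁ α₂ V u gx gy φ (pdx φ) (pdy φ) = ∫ p in Omega, f p * φ p)
    (hχ : IsTestFun χ) (hχs : tsupport χ ⊆ Omega) (i j : Fin 2) :
    ∃ h, HasL2DirDeriv volume (Module.Basis.finTwoProd ℝ j)
      (fun p => χ p * ![gx, gy] i p + dirDeriv (Module.Basis.finTwoProd ℝ i) χ p * u p) h :=
  (hu.solvesDivEqOn hV hf hsol).exists_hasL2DirDeriv_mul_isTestFun
    (by simp) isOpen_Omega (contDiffOn_degenerateCoeff α₁ α₂) (degenerateCoeff_pos α₁ α₂)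
    hu.hasL2LocDirDeriv (memL2Loc_of_memLp isOpen_Omega hf) (memL2Loc_of_memLp isOpen_Omega hV)
    hVpos hχ hχs i j

theorem interior_regularity_general (hV : MemLp V 2 (volume.restrict Omega))
    (hVpos : ∀ᵐ p ∂(volume.restrict Omega), 0 ≤ V p) (hf : MemLp f 2 (volume.restrict Omega))
    (hu : MemH1 α₁ α₂ u gx gy)
    (hsol : ∀ φ, IsTest φ →
      aForm α₁ α₂ V u gx gy φ (pdx φ) (pdy φ) = ∫ p in Omega, f p * φ p)
    {Ω' : Set (ℝ × ℝ)} (hΩ' : IsOpen Ω') (hΩ'Ω : closure Ω' ⊆ Omega) :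
    (∃ g₁₁ g₁₂ g₂₁ g₂₂ : ℝ × ℝ → ℝ,
      HasWeakDerivXOn Ω' gx g₁₁ ∧ HasWeakDerivYOn Ω' gx g₁₂ ∧
      HasWeakDerivXOn Ω' gy g₂₁ ∧ HasWeakDerivYOn Ω' gy g₂₂ ∧
      MemLp u 2 (volume.restrict Ω') ∧
      MemLp gx 2 (volume.restrict Ω') ∧ MemLp gy 2 (volume.restrict Ω') ∧
      MemLp g₁₁ 2 (volume.restrict Ω') ∧ MemLp g₁₂ 2 (volume.restrict Ω') ∧
      MemLp g₂₁ 2 (volume.restrict Ω') ∧ MemLp g₂₂ 2 (volume.restrict Ω')) ∧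
    ∃ γ : ℝ≥0, 0 < γ ∧ (γ : ℝ) < 1 ∧ ∃ (C : ℝ≥0) (w : ℝ × ℝ → ℝ),
      (∀ᵐ p ∂(volume.restrict Ω'), w p = u p) ∧ HolderOnWith C γ w (closure Ω') := by
  obtain ⟨χ, hχ, hχΩ, hχ1, -⟩ :=
    exists_isTestFun_eqOn_one (isCompact_closure_of_subset_Omega hΩ'Ω) isOpen_Omega hΩ'Ω
  have hχΩ' : EqOn χ 1 Ω' := hχ1.mono subset_closure
  have hm : MeasurableSet Ω' := hΩ'.measurableSet
  have hχu : HasL2DirDeriv volume (0, 1) (fun p => χ p * u p)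
      fun p => χ p * gy p + dirDeriv (0, 1) χ p * u p := by
    simpa using (hu.hasL2LocDirDeriv 1).mul_isTestFun hχ hχΩ
  choose h hh using hu.exists_hasL2DirDeriv_mul_isTestFun hV hVpos hf hsol hχ hχΩ
  simp only [Fin.forall_fin_two, Module.Basis.finTwoProd_zero, Module.Basis.finTwoProd_one,
    Matrix.cons_val_zero, Matrix.cons_val_one] at hh
  obtain ⟨⟨hxx, hxy⟩, hyx, hyy⟩ := hh
  have hgx := eqOn_mul_add_dirDeriv_mul (g := gx) (u := u) hΩ' hχΩ' (1, 0)
  have hgy := eqOn_mul_add_dirDeriv_mul (g := gy) (u := u) hΩ' hχΩ' (0, 1)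
  refine ⟨⟨h 0 0, h 0 1, h 1 0, h 1 1, hxx.hasWeakDerivXOn_of_eqOn hm hgx,
    hxy.hasWeakDerivYOn_of_eqOn hm hgx, hyx.hasWeakDerivXOn_of_eqOn hm hgy,
    hyy.hasWeakDerivYOn_of_eqOn hm hgy,
    hu.memL2.mono_measure (Measure.restrict_mono_set _ (subset_closure.trans hΩ'Ω)),
    memLp_restrict_of_eqOn hxx.memLp hm hgx, memLp_restrict_of_eqOn hyy.memLp hm hgy,
    hxx.memLp_deriv.restrict _, hxy.memLp_deriv.restrict _, hyx.memLp_deriv.restrict _,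
    hyy.memLp_deriv.restrict _⟩, 1 / 2, by norm_num, by norm_num, ?_⟩
  obtain ⟨C, w, hC, hw⟩ := exists_holderWith_half_of_hasL2DirDeriv
    hχ.hasCompactSupport.mul_right (tsupport_mul_subset_left.trans hχΩ) hχu hyx
  refine ⟨C, w, ?_, hC.holderOnWith _⟩
  filter_upwards [ae_restrict_of_ae hw, ae_restrict_mem hm] with p hp hpΩ'
  rw [hp, Pi.mul_apply, hχΩ' hpΩ', Pi.one_apply, one_mul]

lemma IsTest.memH1 (hφ : IsTest φ) : MemH1 α₁ α₂ φ (pdx φ) (pdy φ) where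
  memL2 := (hφ.isTestFun.memLp 2).restrict Omega
  weakX := hφ.isTestFun.hasL2DirDeriv.hasWeakDerivXOn_of_eqOn isOpen_Omega.measurableSet
    fun _ _ => rfl
  weakY := hφ.isTestFun.hasL2DirDeriv.hasWeakDerivYOn_of_eqOn isOpen_Omega.measurableSet
    fun _ _ => rfl
  wgx := hφ.isTestFun.memLp_mul_dirDeriv hφ.2.2 isOpen_Omega (contDiffOn_snd_rpow α₁) (1, 0)
  wgy := hφ.isTestFun.memLp_mul_dirDeriv hφ.2.2 isOpen_Omega (contDiffOn_fst_rpow α₂) (0, 1)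

lemma IsTest.memH10 (hφ : IsTest φ) : MemH10 α₁ α₂ φ (pdx φ) (pdy φ) :=
  ⟨hφ.memH1, fun ε hε => ⟨φ, hφ, by simpa [H1Norm] using hε⟩⟩

lemma IsTest.memH0 (hV : MemLp V 2 (volume.restrict Omega)) (hφ : IsTest φ) :
    MemH0 α₁ α₂ V φ (pdx φ) (pdy φ) := by
  refine ⟨hφ.memH10, ?_⟩
  simpa only [IntegrableOn, mul_assoc, ← sq] using
    hφ.isTestFun.integrable_mul_mul hV ((hφ.isTestFun.memLp 2).restrict Omega)

instance isFiniteMeasure_restrict_Omega : IsFiniteMeasure (volume.restrict Omega) :=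
  ⟨by rw [Measure.restrict_apply_univ]
      exact ((Metric.isBounded_Ioo 0 1).prod (Metric.isBounded_Ioo 0 1)).measure_lt_top⟩

end UnitSquare

/-- Interior regularity: the weak solution of the Dirichlet problem
with `V ∈ L^p(Ω)`, `2 ≤ p < ∞`, `f ∈ L²(Ω)`, belongs to `H²(Ω')` for every open
`Ω'` with `closure Ω' ⊆ Ω`, and is Hölder continuous (for some exponent `α ∈ (0,1)`)
on `closure Ω'`. -/
theorem interior_regularity (α₁ α₂ ppow : ℝ)
    (hα₁ : α₁ ∈ Ioo (0:ℝ) (1/2)) (hα₂ : α₂ ∈ Ioo (0:ℝ) (1/2))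
    (hp : 2 ≤ ppow) (V : ℝ × ℝ → ℝ)
    (hV : MemLp V (ENNReal.ofReal ppow) (volume.restrict Omega))
    (hVpos : ∀ᵐ p ∂(volume.restrict Omega), 0 ≤ V p)
    (f : ℝ × ℝ → ℝ) (hf : MemLp f 2 (volume.restrict Omega))
    (u gx gy : ℝ × ℝ → ℝ) (hu : MemH0 α₁ α₂ V u gx gy)
    (hsol : ∀ v hx hy : ℝ × ℝ → ℝ, MemH0 α₁ α₂ V v hx hy →
      aForm α₁ α₂ V u gx gy v hx hy = ∫ p in Omega, f p * v p) :
    ∀ Ω' : Set (ℝ × ℝ), IsOpen Ω' → closure Ω' ⊆ Omega →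
      ((∃ g₁₁ g₁₂ g₂₁ g₂₂ : ℝ × ℝ → ℝ,
        HasWeakDerivXOn Ω' gx g₁₁ ∧ HasWeakDerivYOn Ω' gx g₁₂ ∧
        HasWeakDerivXOn Ω' gy g₂₁ ∧ HasWeakDerivYOn Ω' gy g₂₂ ∧
        MemLp u 2 (volume.restrict Ω') ∧
        MemLp gx 2 (volume.restrict Ω') ∧ MemLp gy 2 (volume.restrict Ω') ∧
        MemLp g₁₁ 2 (volume.restrict Ω') ∧ MemLp g₁₂ 2 (volume.restrict Ω') ∧
        MemLp g₂₁ 2 (volume.restrict Ω') ∧ MemLp g₂₂ 2 (volume.restrict Ω')) ∧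
      (∃ γ : NNReal, 0 < γ ∧ (γ : ℝ) < 1 ∧ ∃ (C : NNReal) (w : ℝ × ℝ → ℝ),
        (∀ᵐ p ∂(volume.restrict Ω'), w p = u p) ∧
        HolderOnWith C γ w (closure Ω'))) := by
  have hV2 : MemLp V 2 (volume.restrict Omega) :=
    hV.mono_exponent (by simpa using ENNReal.ofReal_le_ofReal hp)
  exact fun Ω' => interior_regularity_general hV2 hVpos hf hu.1.1
    (fun φ hφ => hsol φ (pdx φ) (pdy φ) (IsTest.memH0 hV2 hφ))
end
end

section
/- (Chain rule) Let F : ℝ → ℝ be continuously differentiable with F' bounded, and let u ∈ 𝓗₀¹(Ω). Then F∘u ∈ 𝓗¹(Ω), and its weak derivatives satisfy y^{α₁}∂ₓ(F∘u) = y^{α₁} F'(u) ∂ₓu and x^{α₂}∂_y(F∘u) = x^{α₂} F'(u) ∂_yu almost everywhere in Ω. -/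
open MeasureTheory Set Filter

noncomputable section

/-! Having a weak derivative is a local property. On a neighbourhood of the compact support of a
test function `ψ`, mollification provides smooth `wₙ → u` and `∂ᵥwₙ → g = ∂ᵥu`, both in `L¹`, the
first also almost everywhere. For `wₙ` the identity `∫ ∂ᵥψ F(wₙ) = -∫ ψ F'(wₙ) ∂ᵥwₙ` is the
classical chain rule and integration by parts. As `n → ∞`, the left side converges because `F` is
Lipschitz, the right side because `F'(wₙ) → F'(u)` boundedly almost everywhere. The weights
`y ^ α₁` and `x ^ α₂` enter only through the pointwise bound `|w F'(u) g| ≤ K |w g|`. -/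

open ContinuousLinearMap (lsmul lsmul_apply)
open scoped Topology ENNReal NNReal Convolution ContDiff

section LOneConvergence

variable {α ι : Type*} [MeasurableSpace α] {μ : Measure α} {l : Filter ι} [l.IsCountablyGenerated]

-- Scheffé's lemma: `|h - f| = 2 (f - h)⁺ + (h - f)`, where `(f - h)⁺` is dominated by `|f|`.
lemma tendsto_integral_norm_sub_of_tendsto_integral {h : ι → α → ℝ} {f : α → ℝ}
    (hh : ∀ i, Integrable (h i) μ) (hf : Integrable f μ) (h_nonneg : ∀ i x, 0 ≤ h i x)
    (h_lim : ∀ᵐ x ∂μ, Tendsto (h · x) l (𝓝 (f x)))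
    (h_integral : Tendsto (fun i => ∫ x, h i x ∂μ) l (𝓝 (∫ x, f x ∂μ))) :
    Tendsto (fun i => ∫ x, ‖h i x - f x‖ ∂μ) l (𝓝 0) := by
  have pos_int (i : ι) : Integrable (fun x => max (f x - h i x) 0) μ := (hf.sub (hh i)).pos_part
  have pos_lim : Tendsto (fun i => ∫ x, max (f x - h i x) 0 ∂μ) l (𝓝 (∫ _, (0 : ℝ) ∂μ)) := by
    refine tendsto_integral_filter_of_dominated_convergence (fun x => ‖f x‖)
      (.of_forall fun i => (pos_int i).1) (.of_forall fun i => ae_of_all _ fun x => ?_) hf.norm ?_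
    · rw [Real.norm_of_nonneg (le_max_right _ _), Real.norm_eq_abs]
      exact max_le (by linarith [h_nonneg i x, le_abs_self (f x)]) (abs_nonneg _)
    · filter_upwards [h_lim] with x hx
      simpa using (hx.const_sub (f x)).max (tendsto_const_nhds (x := (0 : ℝ)))
  have norm_eq (i : ι) : ∫ x, ‖h i x - f x‖ ∂μ =
      2 * ∫ x, max (f x - h i x) 0 ∂μ + (∫ x, h i x ∂μ - ∫ x, f x ∂μ) := by
    rw [← integral_const_mul, ← integral_sub (hh i) hf,
      ← integral_add (.const_mul (pos_int i) 2) (.sub' (hh i) hf)]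
    refine integral_congr_ae (ae_of_all _ fun x => ?_)
    rcases le_total (f x) (h i x) with hx | hx
    · simp [hx, abs_of_nonneg]
    · simp only [Real.norm_eq_abs, abs_of_nonpos (sub_nonpos.2 hx), max_eq_left (sub_nonneg.2 hx)]
      ring
  simpa only [norm_eq, integral_zero, mul_zero, sub_self, add_zero] using
    (pos_lim.const_mul 2).add (h_integral.sub_const (∫ x, f x ∂μ))

lemma tendsto_integral_mul_of_tendsto_integral_norm_sub {b : ι → α → ℝ} {b₀ : α → ℝ}
    {f : ι → α → ℝ} {f₀ : α → ℝ} {C : ℝ} (hb : ∀ i, AEStronglyMeasurable (b i) μ)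
    (hbC : ∀ i x, ‖b i x‖ ≤ C) (hb_lim : ∀ᵐ x ∂μ, Tendsto (b · x) l (𝓝 (b₀ x)))
    (hf : ∀ i, Integrable (f i) μ) (hf₀ : Integrable f₀ μ)
    (hf_lim : Tendsto (fun i => ∫ x, ‖f i x - f₀ x‖ ∂μ) l (𝓝 0)) :
    Tendsto (fun i => ∫ x, b i x * f i x ∂μ) l (𝓝 (∫ x, b₀ x * f₀ x ∂μ)) := by
  have norm_mul_le (i : ι) (x : α) (y : ℝ) : ‖b i x * y‖ ≤ C * ‖y‖ := by
    grw [norm_mul, hbC]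
  have coeff_lim : Tendsto (fun i => ∫ x, b i x * f₀ x ∂μ) l (𝓝 (∫ x, b₀ x * f₀ x ∂μ)) :=
    tendsto_integral_filter_of_dominated_convergence (fun x => C * ‖f₀ x‖)
      (.of_forall fun i => (hb i).mul hf₀.1)
      (.of_forall fun i => ae_of_all _ fun x => norm_mul_le i x _)
      (hf₀.norm.const_mul C) (hb_lim.mono fun x hx => hx.mul_const _)
  have diff_lim : Tendsto (fun i => ∫ x, b i x * (f i x - f₀ x) ∂μ) l (𝓝 0) := by
    refine squeeze_zero_norm (fun i => ?_) (mul_zero C ▸ hf_lim.const_mul C)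
    rw [← integral_const_mul]
    exact norm_integral_le_of_norm_le (.const_mul (.norm (.sub' (hf i) hf₀)) C)
      (ae_of_all _ fun x => norm_mul_le i x _)
  refine (zero_add (∫ x, b₀ x * f₀ x ∂μ) ▸ diff_lim.add coeff_lim).congr fun i => ?_
  rw [← integral_add (.bdd_mul (.sub' (hf i) hf₀) (hb i) (ae_of_all _ (hbC i)))
    (hf₀.bdd_mul (hb i) (ae_of_all _ (hbC i)))]
  simp only [mul_sub, sub_add_cancel]

end LOneConvergence

section Composition

variable {α : Type*} [MeasurableSpace α] {μ : Measure α} {F : ℝ → ℝ} {K : ℝ≥0}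

lemma memLp_lipschitz_comp [IsFiniteMeasure μ] {p : ℝ≥0∞} (hF : LipschitzWith K F) {u : α → ℝ}
    (hu : MemLp u p μ) : MemLp (fun x => F (u x)) p μ := by
  have centred : MemLp (fun x => F (u x) - F 0) p μ :=
    (LipschitzWith.of_dist_le_mul (K := K) (f := fun t => F t - F 0) fun s t => by
      simpa using hF.dist_le_mul s t).comp_memLp (sub_self _) hu
  simpa only [Pi.add_def, sub_add_cancel] using centred.add (memLp_const (F 0))

lemma locallyIntegrableOn_lipschitz_comp [TopologicalSpace α] [LocallyCompactSpace α]
    [IsFiniteMeasureOnCompacts μ] (hF : LipschitzWith K F) {s : Set α} (hs : IsLocallyClosed s)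
    {u : α → ℝ} (hu : LocallyIntegrableOn u s μ) :
    LocallyIntegrableOn (fun x => F (u x)) s μ := by
  rw [locallyIntegrableOn_iff hs] at hu ⊢
  intro k hks hk
  have : IsFiniteMeasure (μ.restrict k) := ⟨by simpa using hk.measure_lt_top⟩
  exact memLp_one_iff_integrable.1
    (memLp_lipschitz_comp hF (memLp_one_iff_integrable.2 (hu k hks hk)))

lemma locallyIntegrableOn_bdd_comp_mul [TopologicalSpace α] [LocallyCompactSpace α]
    {b : ℝ → ℝ} (hb : Continuous b) {C : ℝ} (hbC : ∀ t, ‖b t‖ ≤ C) {s : Set α}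
    (hs : IsLocallyClosed s) {u g : α → ℝ} (hu : LocallyIntegrableOn u s μ)
    (hg : LocallyIntegrableOn g s μ) : LocallyIntegrableOn (fun x => b (u x) * g x) s μ := by
  rw [locallyIntegrableOn_iff hs] at hu hg ⊢
  exact fun k hks hk => (hg k hks hk).bdd_mul (hb.comp_aestronglyMeasurable (hu k hks hk).1)
    (ae_of_all _ fun x => hbC _)

lemma memLp_mul_bdd_comp_mul {p : ℝ≥0∞} {b : ℝ → ℝ} (hb : Continuous b) {C : ℝ}
    (hbC : ∀ t, ‖b t‖ ≤ C) {u w g : α → ℝ} (hu : AEStronglyMeasurable u μ)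
    (hg : MemLp (fun x => w x * g x) p μ) :
    MemLp (fun x => w x * (b (u x) * g x)) p μ := by
  simp only [mul_left_comm (w _)]
  refine hg.of_le_mul (c := C) ((hb.comp_aestronglyMeasurable hu).mul hg.1)
    (ae_of_all _ fun x => ?_)
  grw [norm_mul, hbC]

lemma tendsto_integral_norm_lipschitz_comp_sub {ι : Type*} {l : Filter ι} (hF : LipschitzWith K F)
    {w : ι → α → ℝ} {u : α → ℝ} (hw : ∀ i, Integrable (fun x => w i x - u x) μ)
    (hw_lim : Tendsto (fun i => ∫ x, ‖w i x - u x‖ ∂μ) l (𝓝 0)) :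
    Tendsto (fun i => ∫ x, ‖F (w i x) - F (u x)‖ ∂μ) l (𝓝 0) := by
  refine squeeze_zero (fun i => integral_nonneg fun x => norm_nonneg _) (fun i => ?_)
    (mul_zero (K : ℝ) ▸ hw_lim.const_mul (K : ℝ))
  rw [← integral_const_mul]
  exact integral_mono_of_nonneg (ae_of_all _ fun x => norm_nonneg _) ((hw i).norm.const_mul K)
    (ae_of_all _ fun x => hF.norm_sub_le _ _)

end Composition

section Mollification

variable {E ι : Type*} [NormedAddCommGroup E] [NormedSpace ℝ E] [FiniteDimensional ℝ E]
  [MeasurableSpace E] [BorelSpace E] {μ : Measure E} [μ.IsAddHaarMeasure] {l : Filter ι}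
  [l.IsCountablyGenerated] {φ : ι → ContDiffBump (0 : E)} {C : ℝ}

lemma integrable_normed_convolution (φ : ContDiffBump (0 : E)) {f : E → ℝ} (hf : Integrable f μ) :
    Integrable (φ.normed μ ⋆[lsmul ℝ ℝ, μ] f) μ :=
  (φ.continuous_normed.integrable_of_hasCompactSupport
    φ.hasCompactSupport_normed).integrable_convolution _ hf

lemma tendsto_integral_norm_normed_convolution_sub_of_nonneg
    (hφ : Tendsto (fun i => (φ i).rOut) l (𝓝 0)) (hφC : ∀ i, (φ i).rOut ≤ C * (φ i).rIn)
    {f : E → ℝ} (hf : Integrable f μ) (hf_nonneg : ∀ x, 0 ≤ f x) :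
    Tendsto (fun i => ∫ x, ‖((φ i).normed μ ⋆[lsmul ℝ ℝ, μ] f) x - f x‖ ∂μ) l (𝓝 0) := by
  refine tendsto_integral_norm_sub_of_tendsto_integral
    (fun i => integrable_normed_convolution (φ i) hf) hf
    (fun i x => integral_nonneg fun t => mul_nonneg ((φ i).nonneg_normed t) (hf_nonneg _))
    (ContDiffBump.ae_convolution_tendsto_right_of_locallyIntegrable hφ (.of_forall hφC)
      hf.locallyIntegrable) (tendsto_const_nhds.congr fun i => ?_)
  rw [integral_convolution _ ((φ i).continuous_normed.integrable_of_hasCompactSupport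
    (φ i).hasCompactSupport_normed) hf, (φ i).integral_normed, lsmul_apply, one_smul]

lemma tendsto_integral_norm_normed_convolution_sub
    (hφ : Tendsto (fun i => (φ i).rOut) l (𝓝 0)) (hφC : ∀ i, (φ i).rOut ≤ C * (φ i).rIn)
    {f : E → ℝ} (hf : Integrable f μ) :
    Tendsto (fun i => ∫ x, ‖((φ i).normed μ ⋆[lsmul ℝ ℝ, μ] f) x - f x‖ ∂μ) l (𝓝 0) := by
  have abs_lim := tendsto_integral_norm_normed_convolution_sub_of_nonneg hφ hφC hf.norm
    fun x => norm_nonneg (f x)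
  have add_abs_lim := tendsto_integral_norm_normed_convolution_sub_of_nonneg hφ hφC
    (hf.add hf.norm) fun x => by
      simp only [Pi.add_apply, Real.norm_eq_abs]
      linarith [neg_abs_le (f x)]
  have conv_exists (i : ι) {h : E → ℝ} (hh : Integrable h μ) :
      ConvolutionExists ((φ i).normed μ) h (lsmul ℝ ℝ) μ :=
    (φ i).hasCompactSupport_normed.convolutionExists_left _ (φ i).continuous_normed
      hh.locallyIntegrable
  refine squeeze_zero (fun i => integral_nonneg fun x => norm_nonneg _) (fun i => ?_)
    (add_zero (0 : ℝ) ▸ add_abs_lim.add abs_lim)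
  have int_add_abs := (integrable_normed_convolution (φ i) (hf.add hf.norm)).sub' (hf.add hf.norm)
  have int_abs := (integrable_normed_convolution (φ i) hf.norm).sub' hf.norm
  rw [← integral_add int_add_abs.norm int_abs.norm]
  refine integral_mono ((integrable_normed_convolution (φ i) hf).sub hf).norm
    (int_add_abs.norm.add int_abs.norm) fun x => ?_
  calc ‖((φ i).normed μ ⋆[lsmul ℝ ℝ, μ] f) x - f x‖
    _ = ‖(((φ i).normed μ ⋆[lsmul ℝ ℝ, μ] (f + fun x => ‖f x‖)) x - (f x + ‖f x‖)) -
          (((φ i).normed μ ⋆[lsmul ℝ ℝ, μ] fun x => ‖f x‖) x - ‖f x‖)‖ := by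
      rw [(conv_exists i hf x).distrib_add (conv_exists i hf.norm x)]
      congr 1
      ring
    _ ≤ _ := norm_sub_le _ _

lemma tendsto_setIntegral_norm_normed_convolution_indicator_sub
    (hφ : Tendsto (fun i => (φ i).rOut) l (𝓝 0)) (hφC : ∀ i, (φ i).rOut ≤ C * (φ i).rIn)
    {k t : Set E} (hk : MeasurableSet k) (ht : MeasurableSet t) (hkt : k ⊆ t) {f : E → ℝ}
    (hf : IntegrableOn f t μ) :
    Tendsto (fun i => ∫ x in k, ‖((φ i).normed μ ⋆[lsmul ℝ ℝ, μ] t.indicator f) x - f x‖ ∂μ) l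
      (𝓝 0) := by
  have hft : Integrable (t.indicator f) μ := hf.integrable_indicator ht
  refine squeeze_zero (fun i => integral_nonneg fun x => norm_nonneg _) (fun i => ?_)
    (tendsto_integral_norm_normed_convolution_sub hφ hφC hft)
  rw [setIntegral_congr_fun (g := fun x =>
    ‖((φ i).normed μ ⋆[lsmul ℝ ℝ, μ] t.indicator f) x - t.indicator f x‖) hk
    fun x hx => by simp only [indicator_of_mem (hkt hx)]]
  exact setIntegral_le_integral ((integrable_normed_convolution (φ i) hft).sub hft).norm
    (ae_of_all _ fun x => norm_nonneg _)

end Mollification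

lemma exists_contDiffBump_seq_rOut_tendsto_zero {E : Type*} [NormedAddCommGroup E] {r : ℝ}
    (hr : 0 < r) : ∃ φ : ℕ → ContDiffBump (0 : E), (∀ n, (φ n).rOut ≤ r) ∧
      Tendsto (fun n => (φ n).rOut) atTop (𝓝 0) ∧ ∀ n, (φ n).rOut ≤ 2 * (φ n).rIn := by
  refine ⟨fun n => ⟨r / (n + 1) / 2, r / (n + 1), by positivity, half_lt_self (by positivity)⟩,
    fun n => div_le_self hr.le (by simp), ?_, fun n => (mul_div_cancel₀ _ two_ne_zero).ge⟩
  simpa [div_eq_mul_inv] using (tendsto_one_div_add_atTop_nhds_zero_nat (𝕜 := ℝ)).const_mul r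

section TSupport

variable {X : Type*} [TopologicalSpace X] [MeasurableSpace X] {μ : Measure X} {s t : Set X}
  {f ψ : X → ℝ}

lemma setIntegral_mul_of_tsupport_subset (hψ : tsupport ψ ⊆ s) :
    ∫ x in s, ψ x * f x ∂μ = ∫ x, ψ x * f x ∂μ :=
  setIntegral_eq_integral_of_forall_compl_eq_zero fun x hx => by
    rw [image_eq_zero_of_notMem_tsupport fun h => hx (hψ h), zero_mul]

lemma integral_mul_indicator_of_tsupport_subset (hψ : tsupport ψ ⊆ t) (hts : t ⊆ s) :
    ∫ x, ψ x * t.indicator f x ∂μ = ∫ x in s, ψ x * f x ∂μ := by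
  rw [setIntegral_mul_of_tsupport_subset (hψ.trans hts)]
  congr with x
  by_cases hx : x ∈ t
  · rw [indicator_of_mem hx]
  · rw [image_eq_zero_of_notMem_tsupport fun h => hx (hψ h), zero_mul, zero_mul]

end TSupport

section WeakLineDeriv

variable {E : Type*} [NormedAddCommGroup E] [NormedSpace ℝ E] [MeasurableSpace E] {μ : Measure E}
  {v : E} {s : Set E} {u g : E → ℝ}

variable (μ v s) in
/-- `g` is the weak derivative of `u` in the direction `v` on `s`. The weak partial derivatives
`HasWeakDerivXOn` and `HasWeakDerivYOn` are, by definition, the directions `(1, 0)` and `(0, 1)`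
of `ℝ × ℝ` with `μ = volume`. -/
def HasWeakLineDerivOn (u g : E → ℝ) : Prop :=
  LocallyIntegrableOn u s μ ∧ LocallyIntegrableOn g s μ ∧
  ∀ ψ : E → ℝ, ContDiff ℝ ∞ ψ ∧ HasCompactSupport ψ ∧ tsupport ψ ⊆ s →
    ∫ x in s, u x * fderiv ℝ ψ x v ∂μ = -∫ x in s, g x * ψ x ∂μ

variable [FiniteDimensional ℝ E] [BorelSpace E] [μ.IsAddHaarMeasure]

lemma fderiv_convolution_left_apply {ρ f : E → ℝ} (hρ : ContDiff ℝ 1 ρ)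
    (hρc : HasCompactSupport ρ) (hf : LocallyIntegrable f μ) (x : E) :
    fderiv ℝ (ρ ⋆[lsmul ℝ ℝ, μ] f) x v = ∫ y, fderiv ℝ ρ (x - y) v * f y ∂μ := by
  have conv_exists := (hρc.fderiv (𝕜 := ℝ)).convolutionExists_left ((lsmul ℝ ℝ).precompL E)
    (hρ.continuous_fderiv one_ne_zero) hf x
  rw [(hρc.hasFDerivAt_convolution_left (lsmul ℝ ℝ) hρ hf x).fderiv, convolution_eq_swap,
    ContinuousLinearMap.integral_apply conv_exists.integrable_swap]
  simp

lemma HasWeakLineDerivOn.fderiv_convolution_indicator (h : HasWeakLineDerivOn μ v s u g)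
    {t : Set E} (ht : IsCompact t) (hts : t ⊆ s) {ρ : E → ℝ} (hρ : ContDiff ℝ ∞ ρ)
    (hρc : HasCompactSupport ρ) {x : E} (hx : ∀ y, x - y ∈ tsupport ρ → y ∈ t) :
    fderiv ℝ (ρ ⋆[lsmul ℝ ℝ, μ] t.indicator u) x v = (ρ ⋆[lsmul ℝ ℝ, μ] t.indicator g) x := by
  set ψ : E → ℝ := fun y => ρ (x - y)
  have hψ : ContDiff ℝ ∞ ψ := hρ.comp (contDiff_const.sub contDiff_id)
  have hψt : tsupport ψ ⊆ t :=
    (tsupport_comp_subset_preimage ρ (continuous_sub_left x)).trans fun y => hx y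
  have hψc : HasCompactSupport ψ := ht.of_isClosed_subset (isClosed_tsupport ψ) hψt
  have fderiv_ψ (y : E) : fderiv ℝ ρ (x - y) v = -fderiv ℝ ψ y v := by
    have := ((hρ.differentiable (by simp) (x - y)).hasFDerivAt.comp y
      ((hasFDerivAt_id y).const_sub x)).fderiv
    simpa [Function.comp_def] using congr(-($this v)).symm
  have hu : Integrable (t.indicator u) μ :=
    (h.1.integrableOn_compact_subset hts ht).integrable_indicator ht.measurableSet
  calc fderiv ℝ (ρ ⋆[lsmul ℝ ℝ, μ] t.indicator u) x v
    _ = ∫ y, fderiv ℝ ρ (x - y) v * t.indicator u y ∂μ :=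
      fderiv_convolution_left_apply (hρ.of_le (by simp)) hρc hu.locallyIntegrable x
    _ = -∫ y in s, fderiv ℝ ψ y v * u y ∂μ := by
      simp only [fderiv_ψ, neg_mul, integral_neg]
      rw [integral_mul_indicator_of_tsupport_subset
        ((tsupport_fderiv_apply_subset ℝ v).trans hψt) hts]
    _ = ∫ y in s, ψ y * g y ∂μ := by
      simp only [mul_comm _ (u _), mul_comm _ (g _), neg_neg,
        h.2.2 ψ ⟨hψ, hψc, hψt.trans hts⟩]
    _ = (ρ ⋆[lsmul ℝ ℝ, μ] t.indicator g) x := by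
      rw [← integral_mul_indicator_of_tsupport_subset hψt hts, convolution_eq_swap]
      simp only [lsmul_apply, smul_eq_mul, ψ]

lemma HasWeakLineDerivOn.exists_seq_contDiff_tendsto (h : HasWeakLineDerivOn μ v s u g)
    (hs : IsOpen s) {k : Set E} (hk : IsCompact k) (hks : k ⊆ s) :
    ∃ w : ℕ → E → ℝ, (∀ n, ContDiff ℝ ∞ (w n)) ∧
      (∀ᵐ x ∂μ.restrict k, Tendsto (w · x) atTop (𝓝 (u x))) ∧
      Tendsto (fun n => ∫ x in k, ‖w n x - u x‖ ∂μ) atTop (𝓝 0) ∧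
      Tendsto (fun n => ∫ x in k, ‖fderiv ℝ (w n) x v - g x‖ ∂μ) atTop (𝓝 0) := by
  obtain ⟨r, hr, hrs⟩ := hk.exists_cthickening_subset_open hs hks
  set t := Metric.cthickening r k
  have ht : IsCompact t := hk.cthickening
  have hkt : k ⊆ t := Metric.self_subset_cthickening k
  have hut : IntegrableOn u t μ := h.1.integrableOn_compact_subset hrs ht
  have hgt : IntegrableOn g t μ := h.2.1.integrableOn_compact_subset hrs ht
  have hu_loc := (hut.integrable_indicator ht.measurableSet).locallyIntegrable
  obtain ⟨φ, hφr, hφ, hφ_ratio⟩ := exists_contDiffBump_seq_rOut_tendsto_zero (E := E) hr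
  refine ⟨fun n => (φ n).normed μ ⋆[lsmul ℝ ℝ, μ] t.indicator u, fun n =>
    (φ n).hasCompactSupport_normed.contDiff_convolution_left _ (φ n).contDiff_normed hu_loc, ?_,
    tendsto_setIntegral_norm_normed_convolution_indicator_sub hφ hφ_ratio hk.measurableSet
      ht.measurableSet hkt hut, ?_⟩
  · have ae_lim := ContDiffBump.ae_convolution_tendsto_right_of_locallyIntegrable hφ
      (.of_forall hφ_ratio) hu_loc
    filter_upwards [ae_restrict_mem hk.measurableSet, ae_restrict_of_ae ae_lim] with x hx hlim
    rwa [indicator_of_mem (hkt hx)] at hlim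
  · refine (tendsto_setIntegral_norm_normed_convolution_indicator_sub hφ hφ_ratio hk.measurableSet
      ht.measurableSet hkt hgt).congr fun n => setIntegral_congr_fun hk.measurableSet fun x hx => ?_
    beta_reduce
    rw [h.fderiv_convolution_indicator ht hrs (φ n).contDiff_normed (φ n).hasCompactSupport_normed]
    intro y hy
    rw [(φ n).tsupport_normed_eq, mem_closedBall_zero_iff, ← dist_eq_norm] at hy
    exact Metric.mem_cthickening_of_dist_le y x r k hx (by rw [dist_comm]; exact hy.trans (hφr n))

lemma integral_fderiv_mul_comp_eq_neg {F : ℝ → ℝ} (hF : ContDiff ℝ 1 F) {w ψ : E → ℝ}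
    (hw : ContDiff ℝ 1 w) (hψ : ContDiff ℝ 1 ψ) (hψc : HasCompactSupport ψ) :
    ∫ x, fderiv ℝ ψ x v * F (w x) ∂μ = -∫ x, ψ x * (deriv F (w x) * fderiv ℝ w x v) ∂μ := by
  have chain (x : E) : fderiv ℝ (fun x => F (w x)) x v = deriv F (w x) * fderiv ℝ w x v := by
    have := ((hF.differentiable one_ne_zero _).hasDerivAt.comp_hasFDerivAt x
      (hw.differentiable one_ne_zero x).hasFDerivAt).fderiv
    simpa [Function.comp_def] using congr($this v)
  have hFw : ContDiff ℝ 1 (fun x => F (w x)) := hF.comp hw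
  have hψ' : Continuous (fderiv ℝ ψ · v) :=
    (hψ.continuous_fderiv one_ne_zero).clm_apply continuous_const
  have hFw' : Continuous (fderiv ℝ (fun x => F (w x)) · v) :=
    (hFw.continuous_fderiv one_ne_zero).clm_apply continuous_const
  have hψ'c : HasCompactSupport (fderiv ℝ ψ · v) := hψc.fderiv_apply ℝ v
  have := integral_mul_fderiv_eq_neg_fderiv_mul_of_integrable (μ := μ) (v := v)
    ((hψ'.mul hFw.continuous).integrable_of_hasCompactSupport hψ'c.mul_right)
    ((hψ.continuous.mul hFw').integrable_of_hasCompactSupport hψc.mul_right)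
    ((hψ.continuous.mul hFw.continuous).integrable_of_hasCompactSupport hψc.mul_right)
    (fun x _ => hψ.differentiable one_ne_zero x) (fun x _ => hFw.differentiable one_ne_zero x)
  simpa only [chain, neg_neg] using congr(-$this).symm

lemma integral_fderiv_mul_comp_eq_neg_of_tendsto {F : ℝ → ℝ} (hF : ContDiff ℝ 1 F) {K : ℝ≥0}
    (hK : ∀ t, ‖deriv F t‖₊ ≤ K) {ψ : E → ℝ} (hψ : ContDiff ℝ 1 ψ) (hψc : HasCompactSupport ψ)
    (hu : IntegrableOn u (tsupport ψ) μ) (hg : IntegrableOn g (tsupport ψ) μ) {w : ℕ → E → ℝ}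
    (hw : ∀ n, ContDiff ℝ 1 (w n))
    (hw_ae : ∀ᵐ x ∂μ.restrict (tsupport ψ), Tendsto (w · x) atTop (𝓝 (u x)))
    (hw_lim : Tendsto (fun n => ∫ x in tsupport ψ, ‖w n x - u x‖ ∂μ) atTop (𝓝 0))
    (hw'_lim : Tendsto (fun n => ∫ x in tsupport ψ, ‖fderiv ℝ (w n) x v - g x‖ ∂μ) atTop (𝓝 0)) :
    ∫ x, fderiv ℝ ψ x v * F (u x) ∂μ = -∫ x, ψ x * (deriv F (u x) * g x) ∂μ := by
  have hF_lip : LipschitzWith K F :=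
    lipschitzWith_of_nnnorm_deriv_le (hF.differentiable one_ne_zero) hK
  have hF' : Continuous (deriv F) := hF.continuous_deriv le_rfl
  have hψ' : Continuous (fderiv ℝ ψ · v) :=
    (hψ.continuous_fderiv one_ne_zero).clm_apply continuous_const
  have hw' (n : ℕ) : Continuous (fderiv ℝ (w n) · v) :=
    ((hw n).continuous_fderiv one_ne_zero).clm_apply continuous_const
  have integrableOn {f : E → ℝ} (hf : Continuous f) : IntegrableOn f (tsupport ψ) μ :=
    hf.continuousOn.integrableOn_compact hψc
  have : IsFiniteMeasure (μ.restrict (tsupport ψ)) := ⟨by simpa using hψc.measure_lt_top⟩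
  obtain ⟨C, hC⟩ := hψ.continuous.bounded_above_of_compact_support hψc
  obtain ⟨C', hC'⟩ := hψ'.bounded_above_of_compact_support (hψc.fderiv_apply ℝ v)
  have lhs_lim : Tendsto (fun n => ∫ x in tsupport ψ, fderiv ℝ ψ x v * F (w n x) ∂μ) atTop
      (𝓝 (∫ x in tsupport ψ, fderiv ℝ ψ x v * F (u x) ∂μ)) :=
    tendsto_integral_mul_of_tendsto_integral_norm_sub (fun _ => hψ'.aestronglyMeasurable)
      (fun _ => hC') (ae_of_all _ fun _ => tendsto_const_nhds)
      (fun n => integrableOn (hF.continuous.comp (hw n).continuous))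
      (memLp_one_iff_integrable.1 (memLp_lipschitz_comp hF_lip (memLp_one_iff_integrable.2 hu)))
      (tendsto_integral_norm_lipschitz_comp_sub hF_lip
        (fun n => (integrableOn (hw n).continuous).sub' hu) hw_lim)
  have rhs_lim : Tendsto
      (fun n => ∫ x in tsupport ψ, ψ x * deriv F (w n x) * fderiv ℝ (w n) x v ∂μ) atTop
      (𝓝 (∫ x in tsupport ψ, ψ x * deriv F (u x) * g x ∂μ)) := by
    refine tendsto_integral_mul_of_tendsto_integral_norm_sub (C := C * K)
      (fun n => (hψ.continuous.mul (hF'.comp (hw n).continuous)).aestronglyMeasurable)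
      (fun n x => ?_) (hw_ae.mono fun x hx => ((hF'.tendsto _).comp hx).const_mul _)
      (fun n => integrableOn (hw' n)) hg hw'_lim
    exact norm_mul_le_of_le (hC x) (hK _)
  simp only [mul_assoc, setIntegral_mul_of_tsupport_subset subset_rfl,
    setIntegral_mul_of_tsupport_subset (tsupport_fderiv_apply_subset ℝ v),
    integral_fderiv_mul_comp_eq_neg hF (hw _) hψ hψc] at lhs_lim rhs_lim
  exact tendsto_nhds_unique lhs_lim rhs_lim.neg

theorem HasWeakLineDerivOn.contDiff_comp (h : HasWeakLineDerivOn μ v s u g) (hs : IsOpen s)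
    {F : ℝ → ℝ} (hF : ContDiff ℝ 1 F) {K : ℝ≥0} (hK : ∀ t, ‖deriv F t‖₊ ≤ K) :
    HasWeakLineDerivOn μ v s (fun x => F (u x)) (fun x => deriv F (u x) * g x) := by
  refine ⟨locallyIntegrableOn_lipschitz_comp
      (lipschitzWith_of_nnnorm_deriv_le (hF.differentiable one_ne_zero) hK) hs.isLocallyClosed h.1,
    locallyIntegrableOn_bdd_comp_mul (hF.continuous_deriv le_rfl) hK hs.isLocallyClosed h.1 h.2.1,
    fun ψ ⟨hψ, hψc, hψs⟩ => ?_⟩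
  obtain ⟨w, hw, hw_ae, hw_lim, hw'_lim⟩ := h.exists_seq_contDiff_tendsto hs hψc hψs
  simp only [mul_comm _ (fderiv ℝ ψ _ v), mul_comm _ (ψ _)]
  rw [setIntegral_mul_of_tsupport_subset ((tsupport_fderiv_apply_subset ℝ v).trans hψs),
    setIntegral_mul_of_tsupport_subset hψs]
  exact integral_fderiv_mul_comp_eq_neg_of_tendsto hF hK (hψ.of_le (by simp)) hψc
    (h.1.integrableOn_compact_subset hψs hψc) (h.2.1.integrableOn_compact_subset hψs hψc)
    (fun n => (hw n).of_le (by simp)) hw_ae hw_lim hw'_lim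

end WeakLineDeriv

lemma isFiniteMeasure_restrict_Omega_s11 :
    IsFiniteMeasure ((volume : Measure (ℝ × ℝ)).restrict Omega) :=
  ⟨by simp [Omega, Measure.volume_eq_prod]⟩

theorem chain_rule_H1_general (α₁ α₂ : ℝ) (F : ℝ → ℝ) (hF : ContDiff ℝ 1 F)
    (hF' : ∃ K : ℝ, ∀ t : ℝ, |deriv F t| ≤ K) (u gx gy : ℝ × ℝ → ℝ) (hu : MemH1 α₁ α₂ u gx gy) :
    MemH1 α₁ α₂ (fun p => F (u p)) (fun p => deriv F (u p) * gx p)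
      (fun p => deriv F (u p) * gy p) := by
  obtain ⟨K, hK⟩ := hF'
  have hK' (t : ℝ) : ‖deriv F t‖₊ ≤ K.toNNReal := NNReal.le_toNNReal_of_coe_le (hK t)
  have hF_lip : LipschitzWith K.toNNReal F :=
    lipschitzWith_of_nnnorm_deriv_le (hF.differentiable one_ne_zero) hK'
  have hF'_cont : Continuous (deriv F) := hF.continuous_deriv le_rfl
  have hΩ : IsOpen Omega := isOpen_Ioo.prod isOpen_Ioo
  have := isFiniteMeasure_restrict_Omega_s11
  have weakX : HasWeakLineDerivOn volume (1, 0) Omega u gx := hu.weakX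
  have weakY : HasWeakLineDerivOn volume (0, 1) Omega u gy := hu.weakY
  exact
    { memL2 := memLp_lipschitz_comp hF_lip hu.memL2
      weakX := weakX.contDiff_comp hΩ hF hK'
      weakY := weakY.contDiff_comp hΩ hF hK'
      wgx := memLp_mul_bdd_comp_mul hF'_cont hK hu.memL2.1 hu.wgx
      wgy := memLp_mul_bdd_comp_mul hF'_cont hK hu.memL2.1 hu.wgy }

/-- Chain rule: if `F : ℝ → ℝ` is `C¹` with bounded derivative and
`u ∈ 𝓗₀¹(Ω)` with weak derivatives `gx, gy`, then `F ∘ u ∈ 𝓗¹(Ω)` with weak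
derivatives `F'(u) gx` and `F'(u) gy` (so that
`y^{α₁}∂ₓ(F∘u) = y^{α₁}F'(u)∂ₓu` and `x^{α₂}∂_y(F∘u) = x^{α₂}F'(u)∂_yu` a.e.). -/
theorem chain_rule_H1 (α₁ α₂ : ℝ)
    (hα₁ : α₁ ∈ Ioo (0:ℝ) (1/2)) (hα₂ : α₂ ∈ Ioo (0:ℝ) (1/2))
    (F : ℝ → ℝ) (hF : ContDiff ℝ 1 F) (hF' : ∃ K : ℝ, ∀ t : ℝ, |deriv F t| ≤ K)
    (u gx gy : ℝ × ℝ → ℝ) (hu : MemH10 α₁ α₂ u gx gy) :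
    MemH1 α₁ α₂ (fun p => F (u p)) (fun p => deriv F (u p) * gx p)
      (fun p => deriv F (u p) * gy p) :=
  chain_rule_H1_general α₁ α₂ F hF hF' u gx gy hu.1
end
end
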